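/- Let 0 < p < q < ∞ with q ≥ 1 and α > 1. Let f be holomorphic on the unit disk 𝔻 with ∫_𝔻 |f(z)|^p dA_α(z) < ∞, and suppose f = g² for some holomorphic function g on 𝔻 (equivalently, every zero of f in 𝔻 has even multiplicity, e.g. multiplicity 2). Then with r = √(p/q) one has (∫_𝔻 |f(rz)|^q dA_α(z))^{1/q} ≤ (∫_𝔻 |f(z)|^p dA_α(z))^{1/p}. -/

import Mathlib

open MeasureTheory Metric

/-- The weighted Bergman measure `dA_α` on the unit disk:
density `((α-1)/π)(1-|z|²)^(α-2)` with respect to Lebesgue area measure. -/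
noncomputable def bergmanMeasure (α : ℝ) : Measure ℂ :=
  (volume.restrict (ball (0 : ℂ) 1)).withDensity
    (fun z => ENNReal.ofReal ((α - 1) / Real.pi * (1 - ‖z‖ ^ 2) ^ (α - 2)))

namespace HC



lemma layer_real {X : Type*} [MeasurableSpace X] (μ : Measure X) (w : X → ℝ)
    (hw : Measurable w) (hw0 : ∀ x, 0 ≤ w x)
    (hfin : ∀ t, 0 < t → μ {x | t < w x} ≠ ⊤) (γ : ℝ) (hγ : 0 < γ)
    (hI : Integrable (fun x => w x ^ γ) μ) :
    IntegrableOn (fun t => μ.real {x | t < w x} * t ^ (γ - 1)) (Set.Ioi 0) ∧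
    ∫ x, w x ^ γ ∂μ = γ * ∫ t in Set.Ioi (0:ℝ), μ.real {x | t < w x} * t ^ (γ - 1) := by
  have key := lintegral_rpow_eq_lintegral_meas_lt_mul μ (f := w)
    (Filter.Eventually.of_forall hw0) hw.aemeasurable hγ
  have hmeas : Measurable (fun t : ℝ => μ {x | t < w x}) := by
    apply Antitone.measurable
    intro a b hab
    exact measure_mono (fun x hx => lt_of_le_of_lt hab hx)
  have hm2 : Measurable (fun t : ℝ => μ.real {x | t < w x} * t ^ (γ - 1)) :=
    (hmeas.ennreal_toReal).mul (measurable_id.pow_const _)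
  have e1 : ∫⁻ t in Set.Ioi (0:ℝ), μ {a | t < w a} * ENNReal.ofReal (t ^ (γ - 1)) =
      ∫⁻ t in Set.Ioi (0:ℝ), ENNReal.ofReal (μ.real {x | t < w x} * t ^ (γ - 1)) := by
    apply setLIntegral_congr_fun measurableSet_Ioi
    intro t ht
    simp only
    rw [ENNReal.ofReal_mul measureReal_nonneg, Measure.real, ENNReal.ofReal_toReal (hfin t ht)]
  rw [e1] at key
  have hlt : ∫⁻ x, ENNReal.ofReal (w x ^ γ) ∂μ < ⊤ := by
    have := hI.lintegral_lt_top
    exact this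
  have h0 : 0 ≤ᵐ[volume.restrict (Set.Ioi (0:ℝ))]
      (fun t : ℝ => μ.real {x | t < w x} * t ^ (γ - 1)) := by
    filter_upwards [ae_restrict_mem measurableSet_Ioi] with t ht
    exact mul_nonneg measureReal_nonneg (Real.rpow_nonneg (le_of_lt ht) _)
  have hne : ∫⁻ t in Set.Ioi (0:ℝ), ENNReal.ofReal (μ.real {x | t < w x} * t ^ (γ - 1)) ≠ ⊤ := by
    intro h
    rw [h, ENNReal.mul_top (by simpa using hγ)] at key
    exact absurd key hlt.ne
  refine ⟨(lintegral_ofReal_ne_top_iff_integrable hm2.aestronglyMeasurable h0).1 hne, ?_⟩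
  rw [integral_eq_lintegral_of_nonneg_ae
      (Filter.Eventually.of_forall fun x => Real.rpow_nonneg (hw0 x) _) hI.aestronglyMeasurable,
    key, integral_eq_lintegral_of_nonneg_ae h0 hm2.aestronglyMeasurable,
    ENNReal.toReal_mul, ENNReal.toReal_ofReal hγ.le]

lemma model_int (c γ : ℝ) (hc : 0 < c) (hγ : 1 < γ) :
    IntegrableOn (fun t => max (c / t - 1) 0 * t ^ (γ - 1)) (Set.Ioi 0) ∧
    γ * ∫ t in Set.Ioi (0:ℝ), max (c / t - 1) 0 * t ^ (γ - 1) = c ^ γ / (γ - 1) := by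
  have i1 : IntervalIntegrable (fun t : ℝ => t ^ (γ - 2)) volume 0 c :=
    intervalIntegral.intervalIntegrable_rpow' (by linarith)
  have i2 : IntervalIntegrable (fun t : ℝ => t ^ (γ - 1)) volume 0 c :=
    intervalIntegral.intervalIntegrable_rpow' (by linarith)
  have i3 : IntervalIntegrable (fun t : ℝ => c * t ^ (γ - 2) - t ^ (γ - 1)) volume 0 c :=
    (i1.const_mul c).sub i2
  have hsplit : Set.Ioi (0:ℝ) = Set.Ioc 0 c ∪ Set.Ioi c := (Set.Ioc_union_Ioi_eq_Ioi hc.le).symm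
  have eq1 : Set.EqOn (fun t : ℝ => c * t ^ (γ - 2) - t ^ (γ - 1))
      (fun t => max (c / t - 1) 0 * t ^ (γ - 1)) (Set.Ioc 0 c) := by
    intro t ht
    have ht0 := ht.1
    have : 0 ≤ c / t - 1 := by
      rw [sub_nonneg, le_div_iff₀ ht0]; linarith [ht.2]
    simp only
    rw [max_eq_left this, show γ - 1 = (γ - 2) + 1 by ring, Real.rpow_add_one ht0.ne']
    field_simp
  have eq2 : Set.EqOn (fun t : ℝ => max (c / t - 1) 0 * t ^ (γ - 1)) (fun _ => 0) (Set.Ioi c) := by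
    intro t ht
    have ht0 : 0 < t := hc.trans ht
    have : c / t - 1 ≤ 0 := by
      rw [sub_nonpos, div_le_one ht0]; exact le_of_lt ht
    simp only
    rw [max_eq_right this, zero_mul]
  have j1 : IntegrableOn (fun t => max (c / t - 1) 0 * t ^ (γ - 1)) (Set.Ioc 0 c) := by
    have := (intervalIntegrable_iff_integrableOn_Ioc_of_le hc.le).1 i3
    exact this.congr_fun eq1 measurableSet_Ioc
  have j2 : IntegrableOn (fun t => max (c / t - 1) 0 * t ^ (γ - 1)) (Set.Ioi c) := by
    exact (integrableOn_zero).congr_fun eq2.symm measurableSet_Ioi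
  refine ⟨by rw [hsplit]; exact j1.union j2, ?_⟩
  rw [hsplit, setIntegral_union (Set.Ioc_disjoint_Ioi le_rfl) measurableSet_Ioi j1 j2,
    setIntegral_congr_fun measurableSet_Ioi eq2, ← setIntegral_congr_fun measurableSet_Ioc eq1,
    ← intervalIntegral.integral_of_le hc.le, intervalIntegral.integral_sub (i1.const_mul c) i2,
    intervalIntegral.integral_const_mul, integral_rpow (Or.inl (by linarith)),
    integral_rpow (Or.inl (by linarith))]
  simp only [integral_zero, add_zero]
  have : c ^ γ = c * c ^ (γ - 1) := by
    rw [← Real.rpow_one_add' hc.le (by linarith)]; congr 1; ring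
  rw [Real.zero_rpow (by linarith), Real.zero_rpow (by linarith),
    show γ - 2 + 1 = γ - 1 by ring, show γ - 1 + 1 = γ by ring, this]
  have : γ - 1 ≠ 0 := by linarith
  have : γ ≠ 0 := by linarith
  field_simp
  ring

lemma dist_compare {X : Type*} [MeasurableSpace X] (μ : Measure X) (w : X → ℝ)
    (hw : Measurable w) (hw0 : ∀ x, 0 ≤ w x) (B : ℝ) (hB : ∀ x, w x ≤ B)
    (hfin : ∀ t, 0 < t → μ {x | t < w x} ≠ ⊤) (α β : ℝ) (hα : 1 < α) (hβ : α < β)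
    (hIα : Integrable (fun x => w x ^ α) μ) (hIβ : Integrable (fun x => w x ^ β) μ)
    (hmono : ∀ s t, 0 < s → s < t → 0 < μ.real {x | t < w x} →
      t * (1 + μ.real {x | t < w x}) ≤ s * (1 + μ.real {x | s < w x})) :
    (β - 1) * ∫ x, w x ^ β ∂μ ≤ ((α - 1) * ∫ x, w x ^ α ∂μ) ^ (β / α) := by
  obtain ⟨a1, a2⟩ := layer_real μ w hw hw0 hfin α (by linarith) hIα
  obtain ⟨b1, b2⟩ := layer_real μ w hw hw0 hfin β (by linarith) hIβ
  set m : ℝ → ℝ := fun t => μ.real {x | t < w x} with hm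
  have hmnn : ∀ t, 0 ≤ m t := fun t => measureReal_nonneg
  have hIα0 : 0 ≤ ∫ x, w x ^ α ∂μ := integral_nonneg fun x => Real.rpow_nonneg (hw0 x) _
  rcases hIα0.eq_or_lt with h0 | hpos
  · have hz : (fun x => w x ^ α) =ᵐ[μ] 0 :=
      (integral_eq_zero_iff_of_nonneg (fun x => Real.rpow_nonneg (hw0 x) _) hIα).1 h0.symm
    have hz2 : ∫ x, w x ^ β ∂μ = 0 := by
      apply integral_eq_zero_of_ae
      filter_upwards [hz] with x hx
      have : w x = 0 := by
        have hx' : w x ^ α = 0 := hx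
        exact ((Real.rpow_eq_zero_iff_of_nonneg (hw0 x)).1 hx').1
      simp [this, Real.zero_rpow (show β ≠ 0 by linarith)]
    rw [hz2, ← h0, mul_zero, mul_zero]
    exact Real.rpow_nonneg le_rfl _
  set I := (α - 1) * ∫ x, w x ^ α ∂μ with hI
  have hIpos : 0 < I := mul_pos (by linarith) hpos
  set c := I ^ (1 / α) with hc
  have hcpos : 0 < c := Real.rpow_pos_of_pos hIpos _
  have hcα : c ^ α = I := by
    rw [hc, ← Real.rpow_mul hIpos.le, one_div, inv_mul_cancel₀ (by linarith), Real.rpow_one]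
  have hcβ : c ^ β = I ^ (β / α) := by
    rw [hc, ← Real.rpow_mul hIpos.le]; congr 1; ring
  obtain ⟨p1, p2⟩ := model_int c α hcpos hα
  obtain ⟨q1, q2⟩ := model_int c β hcpos (by linarith)
  set m0 : ℝ → ℝ := fun t => max (c / t - 1) 0 with hm0
  -- equality for alpha
  have eqα : ∫ t in Set.Ioi (0:ℝ), m t * t ^ (α - 1) = ∫ t in Set.Ioi (0:ℝ), m0 t * t ^ (α - 1) := by
    have h1 : α * ∫ t in Set.Ioi (0:ℝ), m0 t * t ^ (α - 1) = ∫ x, w x ^ α ∂μ := by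
      rw [p2, hcα, hI, mul_div_cancel_left₀ _ (by linarith)]
    rw [a2] at h1
    exact (mul_left_cancel₀ (by linarith) h1).symm
  set S : Set ℝ := {t | 0 < t ∧ m0 t < m t} with hS
  have hSB : ∀ t ∈ S, t ≤ B := by
    intro t ht
    by_contra hcon
    push Not at hcon
    have : {x | t < w x} = ∅ := by
      ext x; simp only [Set.mem_ofPred_eq, Set.mem_empty_iff_false, iff_false, not_lt]
      exact (hB x).trans hcon.le
    have h2 : m t = 0 := by simp [hm, this]
    have h3 : 0 ≤ m0 t := le_max_right _ _
    linarith [ht.2]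
  have hbdd : BddAbove S := ⟨B, hSB⟩
  have hcross : ∀ t ∈ S, ∀ s, 0 < s → s < t → m0 s ≤ m s := by
    intro t ht s hs hst
    have h3 : 0 ≤ m0 t := le_max_right _ _
    have h4 : c / t - 1 ≤ m0 t := le_max_left _ _
    have h5 := hmono s t hs hst (lt_of_le_of_lt h3 ht.2)
    have h6 : c < t * (1 + m t) := by
      have : c / t < 1 + m t := by linarith [ht.2]
      rwa [div_lt_iff₀' ht.1] at this
    apply max_le _ (hmnn s)
    have : c / s ≤ 1 + m s := by
      rw [div_le_iff₀' hs]; exact (h6.le.trans h5)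
    linarith
  have main : ∫ t in Set.Ioi (0:ℝ), (m t * t ^ (β - 1) - m0 t * t ^ (β - 1)) ≤ 0 := by
    by_cases hne : S.Nonempty
    · set t0 := sSup S with ht0
      have ht0pos : 0 < t0 := by
        obtain ⟨t, ht⟩ := hne
        exact lt_of_lt_of_le ht.1 (le_csSup hbdd ht)
      have hle : ∫ t in Set.Ioi (0:ℝ), (m t * t ^ (β - 1) - m0 t * t ^ (β - 1)) ≤
          ∫ t in Set.Ioi (0:ℝ), t0 ^ (β - α) * (m t * t ^ (α - 1) - m0 t * t ^ (α - 1)) := by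
        apply setIntegral_mono_on (b1.sub q1) ((a1.sub p1).const_mul _) measurableSet_Ioi
        intro t ht
        have ht' : (0:ℝ) < t := ht
        have e : t ^ (β - 1) = t ^ (β - α) * t ^ (α - 1) := by
          rw [← Real.rpow_add ht']; congr 1; ring
        have hpos1 : 0 < t ^ (α - 1) := Real.rpow_pos_of_pos ht' _
        show m t * t ^ (β - 1) - m0 t * t ^ (β - 1) ≤
          t0 ^ (β - α) * (m t * t ^ (α - 1) - m0 t * t ^ (α - 1))
        rw [e]
        have : (m t - m0 t) * (t ^ (β - α) - t0 ^ (β - α)) ≤ 0 := by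
          rcases lt_trichotomy t t0 with h | h | h
          · obtain ⟨t1, ht1, ht2⟩ := exists_lt_of_lt_csSup hne h
            have h1 := hcross t1 ht1 t ht' ht2
            have h2 : t ^ (β - α) ≤ t0 ^ (β - α) :=
              Real.rpow_le_rpow ht'.le h.le (by linarith)
            exact mul_nonpos_of_nonneg_of_nonpos (by linarith) (by linarith)
          · rw [h]; simp
          · have h1 : ¬ (t ∈ S) := fun hc => absurd (le_csSup hbdd hc) (not_le.2 h)
            have h1' : m t ≤ m0 t := by
              by_contra hcon
              exact h1 ⟨ht', not_le.1 hcon⟩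
            have h2 : t0 ^ (β - α) ≤ t ^ (β - α) :=
              Real.rpow_le_rpow ht0pos.le h.le (by linarith)
            exact mul_nonpos_of_nonpos_of_nonneg (by linarith) (by linarith)
        nlinarith
      rw [integral_const_mul, integral_sub a1 p1, eqα, sub_self, mul_zero] at hle
      exact hle
    · apply setIntegral_nonpos measurableSet_Ioi
      intro t ht
      have h1' : m t ≤ m0 t := by
        by_contra hcon
        exact hne ⟨t, ht, not_le.1 hcon⟩
      have := Real.rpow_nonneg (le_of_lt ht) (β - 1)
      nlinarith
  rw [integral_sub b1 q1] at main
  rw [b2, ← hcβ]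
  have hβ0 : 0 < β := by linarith
  have h7 : β * ∫ t in Set.Ioi (0:ℝ), m t * t ^ (β - 1) ≤ c ^ β / (β - 1) := by
    rw [← q2]
    exact mul_le_mul_of_nonneg_left (by linarith) hβ0.le
  rw [le_div_iff₀ (by linarith)] at h7
  linarith




lemma layering_step (K c C η : ℝ) (hK : 0 < K) (hc : 0 < c) (hcC : c ≤ C) (hη : 0 < η) (hη1 : η < 1) :
    ∃ d > 0, ∀ x y δ : ℝ, c ≤ y → y ≤ x → x ≤ C → 0 < δ → δ ≤ d →
      (x - y ≤ Real.sqrt (y ^ 2 + K * y) →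
        (Real.sqrt (y ^ 2 + K * y) - (x - y)) ^ 2 * δ ≤ x * (x - y)) →
      (K + y) * Real.exp ((1 - η) * δ) ≤ K + x := by
  set θ := c * K * η / (6 * (C + K)) with hθ
  have hCK : 0 < C + K := by linarith
  have hθ0 : 0 < θ := by positivity
  have hθe : θ * (6 * (C + K)) = c * K * η := by
    rw [hθ]; field_simp
  have hθc : θ ≤ c := by
    have : θ * (6 * (C + K)) ≤ c * (6 * (C + K)) := by
      rw [hθe]
      have h1 : K * η ≤ 6 * (C + K) := by nlinarith
      nlinarith
    exact le_of_mul_le_mul_right this (by positivity)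
  refine ⟨min (η / 2) (θ / (C + K)), by positivity, ?_⟩
  intro x y δ hy hyx hxC hδ hδd h
  have hδ1 : δ ≤ η / 2 := hδd.trans (min_le_left _ _)
  have hδ2 : δ * (C + K) ≤ θ := by
    have := hδd.trans (min_le_right _ _)
    rwa [le_div_iff₀ hCK] at this
  have hy0 : 0 < y := lt_of_lt_of_le hc hy
  have main : δ * ((1 - η / 2) * (K + y)) ≤ x - y := by
    rcases le_or_gt (x - y) θ with h1 | h1
    · set R := Real.sqrt (y ^ 2 + K * y) with hR
      have hR2 : R ^ 2 = y ^ 2 + K * y := Real.sq_sqrt (by positivity)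
      have hR0 : 0 ≤ R := Real.sqrt_nonneg _
      have hyR : y ≤ R := by
        apply Real.le_sqrt_of_sq_le; nlinarith
      have hRC : R ≤ C + K := by
        rw [hR]
        apply Real.sqrt_le_iff.2 ⟨hCK.le, ?_⟩
        nlinarith
      have h2 := h (by linarith)
      have hx0 : 0 < x := by linarith
      have h3 : (1 - η / 2) * (K + y) * x ≤ (R - (x - y)) ^ 2 := by
        have e1 : R ^ 2 - 2 * R * θ ≤ (R - (x - y)) ^ 2 := by
          nlinarith [mul_nonneg hR0 (sub_nonneg.2 h1), sq_nonneg (x - y)]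
        have e2 : 2 * R * θ ≤ 2 * (C + K) * θ := by nlinarith
        have e3 : (1 - η / 2) * (K + y) * x ≤ (1 - η / 2) * (K + y) * (y + θ) := by
          apply mul_le_mul_of_nonneg_left (by linarith)
          apply mul_nonneg <;> linarith
        have e4 : (1 - η / 2) * (K + y) * θ ≤ (C + K) * θ := by
          apply mul_le_mul_of_nonneg_right _ hθ0.le
          nlinarith
        have e5 : c * K * η ≤ y * (K + y) * η := by
          apply mul_le_mul_of_nonneg_right _ hη.le
          nlinarith
        nlinarith
      have h4 : δ * ((1 - η / 2) * (K + y)) * x ≤ (x - y) * x := by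
        nlinarith
      exact le_of_mul_le_mul_right h4 hx0
    · have : (1 - η / 2) * (K + y) ≤ C + K := by nlinarith
      nlinarith
  have hexp : Real.exp ((1 - η) * δ) ≤ 1 + (1 - η / 2) * δ := by
    have hu0 : 0 ≤ (1 - η) * δ := by apply mul_nonneg <;> linarith
    have hu1 : (1 - η) * δ ≤ δ := by nlinarith
    have := Real.abs_exp_sub_one_sub_id_le (x := (1 - η) * δ) (by rw [abs_of_nonneg hu0]; linarith)
    have h2 := (abs_le.1 this).2
    nlinarith
  calc (K + y) * Real.exp ((1 - η) * δ) ≤ (K + y) * (1 + (1 - η / 2) * δ) :=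
        mul_le_mul_of_nonneg_left hexp (by linarith)
    _ ≤ K + x := by nlinarith

lemma layering (K : ℝ) (hK : 0 < K) (a : ℝ → ℝ) (t0 t1 : ℝ) (ht : t0 < t1)
    (hanti : ∀ s t, t0 ≤ s → s ≤ t → t ≤ t1 → a t ≤ a s) (hpos : 0 < a t1)
    (h : ∀ s t, t0 ≤ s → s < t → t ≤ t1 → a s - a t ≤ Real.sqrt (a t ^ 2 + K * a t) →
      (Real.sqrt (a t ^ 2 + K * a t) - (a s - a t)) ^ 2 * (t - s) ≤ a s * (a s - a t)) :
    (K + a t1) * Real.exp (t1 - t0) ≤ K + a t0 := by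
  have key : ∀ η : ℝ, 0 < η → η < 1 →
      (K + a t1) * Real.exp ((1 - η) * (t1 - t0)) ≤ K + a t0 := by
    intro η hη hη1
    obtain ⟨d, hd, H⟩ := layering_step K (a t1) (a t0) η hK hpos (hanti t0 t1 le_rfl ht.le le_rfl) hη hη1
    obtain ⟨n, hn⟩ := exists_nat_gt ((t1 - t0) / d)
    have hn0 : (0:ℝ) < n := lt_of_le_of_lt (div_nonneg (by linarith) hd.le) hn
    set δ := (t1 - t0) / n with hδ
    have hδ0 : 0 < δ := div_pos (by linarith) hn0
    have hδd : δ ≤ d := by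
      rw [hδ, div_le_iff₀ hn0]
      rw [div_lt_iff₀ hd] at hn
      linarith
    have hnδ : n * δ = t1 - t0 := by rw [hδ]; field_simp
    have ind : ∀ i : ℕ, i ≤ n → (K + a (t0 + i * δ)) * Real.exp ((1 - η) * (i * δ)) ≤ K + a t0 := by
      intro i
      induction i with
      | zero => intro _; simp
      | succ i ih =>
        intro hi
        have hi' : (i:ℝ) + 1 ≤ n := by exact_mod_cast hi
        have ih' := ih (by omega)
        have hle : t0 + ((i:ℝ) + 1) * δ ≤ t1 := by nlinarith
        have hge : t0 ≤ t0 + (i:ℝ) * δ := by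
          have : (0:ℝ) ≤ i * δ := by positivity
          linarith
        have st := H (a (t0 + i * δ)) (a (t0 + ((i:ℝ) + 1) * δ)) δ
          (hanti _ _ (by nlinarith) hle le_rfl) (hanti _ _ hge (by nlinarith) hle)
          (hanti _ _ le_rfl hge (by nlinarith)) hδ0 hδd (by
            have := h (t0 + i * δ) (t0 + ((i:ℝ) + 1) * δ) hge (by nlinarith) hle
            have e : t0 + ((i:ℝ) + 1) * δ - (t0 + i * δ) = δ := by ring
            rwa [e] at this)
        push_cast
        calc (K + a (t0 + ((i:ℝ) + 1) * δ)) * Real.exp ((1 - η) * (((i:ℝ) + 1) * δ))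
            = (K + a (t0 + ((i:ℝ) + 1) * δ)) * Real.exp ((1 - η) * δ) * Real.exp ((1 - η) * (i * δ)) := by
              rw [mul_assoc, ← Real.exp_add]; congr 2; ring
          _ ≤ (K + a (t0 + i * δ)) * Real.exp ((1 - η) * (i * δ)) :=
              mul_le_mul_of_nonneg_right st (Real.exp_pos _).le
          _ ≤ _ := ih'
    have := ind n le_rfl
    rw [hnδ] at this
    simpa using this
  have lim : Filter.Tendsto (fun η : ℝ => (K + a t1) * Real.exp ((1 - η) * (t1 - t0)))
      (nhdsWithin 0 (Set.Ioi 0)) (nhds ((K + a t1) * Real.exp ((1 - 0) * (t1 - t0)))) := by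
    apply Filter.Tendsto.mono_left _ nhdsWithin_le_nhds
    apply Continuous.tendsto
    fun_prop
  have := le_of_tendsto lim (b := K + a t0) (by
    filter_upwards [Ioo_mem_nhdsGT (show (0:ℝ) < 1 by norm_num)] with η hη
    exact key η hη.1 hη.2)
  simpa using this




lemma box_int (F : ℝ × ℝ → ℝ) (a b c d : ℝ)
    (hF : ContinuousOn F (Set.Icc a b ×ˢ Set.Icc c d)) :
    IntegrableOn F (Set.Icc a b ×ˢ Set.Icc c d) :=
  hF.integrableOn_compact (isCompact_Icc.prod isCompact_Icc)

lemma box_xy (F : ℝ × ℝ → ℝ) (a b c d : ℝ) (hab : a ≤ b) (hcd : c ≤ d)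
    (hF : IntegrableOn F (Set.Icc a b ×ˢ Set.Icc c d)) :
    ∫ p in Set.Icc a b ×ˢ Set.Icc c d, F p = ∫ x in a..b, ∫ y in c..d, F (x, y) := by
  rw [Measure.volume_eq_prod] at hF ⊢
  rw [setIntegral_prod _ hF, intervalIntegral.integral_of_le hab, integral_Icc_eq_integral_Ioc]
  congr 1
  ext x
  rw [intervalIntegral.integral_of_le hcd, integral_Icc_eq_integral_Ioc]

lemma box_yx (F : ℝ × ℝ → ℝ) (a b c d : ℝ) (hab : a ≤ b) (hcd : c ≤ d)
    (hF : IntegrableOn F (Set.Icc a b ×ˢ Set.Icc c d)) :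
    ∫ p in Set.Icc a b ×ˢ Set.Icc c d, F p = ∫ y in c..d, ∫ x in a..b, F (x, y) := by
  rw [Measure.volume_eq_prod] at hF ⊢
  rw [← setIntegral_prod_swap]
  have h := setIntegral_prod (fun z : ℝ × ℝ => F z.swap) hF.swap
  refine h.trans ?_
  rw [intervalIntegral.integral_of_le hcd, integral_Icc_eq_integral_Ioc]
  congr 1
  ext x
  rw [intervalIntegral.integral_of_le hab, integral_Icc_eq_integral_Ioc]
  rfl

/-- the explicit integral -/
lemma iso_const (k S : ℝ) (hk : 1 < k) (hS : 0 < S) (hkS : Real.exp S = (k + 1) / (k - 1)) :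
    ∫ T in (0:ℝ)..S, 2 * Real.sqrt (1 - ((k - 1) * Real.exp T - k) ^ 2) =
      2 * Real.pi * (k - Real.sqrt (k ^ 2 - 1)) := by
  set φ : ℝ → ℝ := fun T => (k - 1) * Real.exp T - k with hφ
  have hφ0 : φ 0 = -1 := by simp [hφ]
  have hφS : φ S = 1 := by
    simp only [hφ]; rw [hkS, mul_div_cancel₀ _ (by linarith)]; ring
  have hφc : Continuous φ := by fun_prop
  have hφd : ∀ T, HasDerivAt φ (k + φ T) T := by
    intro T
    have := ((Real.hasDerivAt_exp T).const_mul (k - 1)).sub_const k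
    refine this.congr_deriv ?_
    show _ = k + ((k - 1) * Real.exp T - k)
    ring
  have hφm : StrictMono φ := by
    intro a b hab
    have := Real.exp_lt_exp.2 hab
    simp only [hφ]
    nlinarith
  have hkφ : ∀ T, 0 ≤ T → 0 < k + φ T := by
    intro T hT
    have : φ 0 ≤ φ T := hφm.monotone hT
    linarith
  set R := Real.sqrt (k ^ 2 - 1) with hR
  have hR2 : R ^ 2 = k ^ 2 - 1 := Real.sq_sqrt (by nlinarith)
  have hRpos : 0 < R := Real.sqrt_pos.2 (by nlinarith)
  set H : ℝ → ℝ := fun T => 2 * (Real.sqrt (1 - φ T ^ 2) + k * Real.arcsin (φ T)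
    - R * Real.arcsin ((1 + k * φ T) / (k + φ T))) with hH
  have hcont : ContinuousOn H (Set.Icc 0 S) := by
    have h1 : ContinuousOn (fun T => (1 + k * φ T) / (k + φ T)) (Set.Icc 0 S) := by
      apply ContinuousOn.div
      · fun_prop
      · fun_prop
      · intro T hT; exact (hkφ T hT.1).ne'
    have h2 : ContinuousOn (fun T => Real.arcsin ((1 + k * φ T) / (k + φ T))) (Set.Icc 0 S) :=
      Real.continuous_arcsin.comp_continuousOn h1
    have h3 : Continuous (fun T => Real.sqrt (1 - φ T ^ 2) + k * Real.arcsin (φ T)) := by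
      have := Real.continuous_arcsin.comp hφc
      have h5 : Continuous (fun T => Real.arcsin (φ T)) := this
      fun_prop
    exact (h3.continuousOn.sub (h2.const_smul R)).const_smul (2:ℝ)
  have hder : ∀ T ∈ Set.Ioo 0 S, HasDerivAt H (2 * Real.sqrt (1 - φ T ^ 2)) T := by
    intro T hT
    have a1 : -1 < φ T := by rw [← hφ0]; exact hφm hT.1
    have a2 : φ T < 1 := by rw [← hφS]; exact hφm hT.2
    have a3 : 0 < k + φ T := by linarith
    have a4 : 0 < 1 - φ T ^ 2 := by nlinarith
    set y := (1 + k * φ T) / (k + φ T) with hy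
    have e1 : 1 - y ^ 2 = (k ^ 2 - 1) * (1 - φ T ^ 2) / (k + φ T) ^ 2 := by
      rw [hy]; field_simp; ring
    have e2 : 0 < 1 - y ^ 2 := by
      rw [e1]; apply div_pos (mul_pos (by nlinarith) a4); positivity
    have e3 : Real.sqrt (1 - y ^ 2) = R * Real.sqrt (1 - φ T ^ 2) / (k + φ T) := by
      rw [e1, Real.sqrt_div (by apply mul_nonneg (by nlinarith) a4.le), Real.sqrt_sq a3.le,
        Real.sqrt_mul (by nlinarith)]
    have y1 : y ≠ -1 := by intro h; rw [h] at e2; norm_num at e2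
    have y2 : y ≠ 1 := by intro h; rw [h] at e2; norm_num at e2
    have d1 : HasDerivAt (fun T => Real.sqrt (1 - φ T ^ 2)) _ T :=
      (((hφd T).pow 2).const_sub 1).sqrt a4.ne'
    have d2 : HasDerivAt (fun T => Real.arcsin (φ T)) _ T :=
      (Real.hasDerivAt_arcsin a1.ne' a2.ne).comp T (hφd T)
    have d3 : HasDerivAt (fun T => (1 + k * φ T) / (k + φ T)) _ T :=
      (((hφd T).const_mul k).const_add 1).div ((hφd T).const_add k) a3.ne'
    have d4 : HasDerivAt (fun T => Real.arcsin ((1 + k * φ T) / (k + φ T))) _ T :=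
      HasDerivAt.comp (h₂ := Real.arcsin) T (Real.hasDerivAt_arcsin (x := (1 + k * φ T) / (k + φ T)) y1 y2) d3
    simp only [Pi.pow_apply] at d1
    have d5 := ((d1.add (d2.const_mul k)).sub (d4.const_mul R)).const_mul 2
    refine d5.congr_deriv ?_
    rw [e3]
    set Q := Real.sqrt (1 - φ T ^ 2) with hQ
    have hQ2 : Q ^ 2 = 1 - φ T ^ 2 := Real.sq_sqrt a4.le
    have hQpos : 0 < Q := Real.sqrt_pos.2 a4
    field_simp
    ring_nf
    have hQ2' : Q ^ 2 = 1 - φ T ^ 2 := hQ2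
    rw [hQ2']
    ring
  have hint : IntervalIntegrable (fun T => 2 * Real.sqrt (1 - φ T ^ 2)) volume 0 S := by
    apply Continuous.intervalIntegrable; fun_prop
  have := intervalIntegral.integral_eq_sub_of_hasDerivAt_of_le hS.le hcont hder hint
  rw [this]
  simp only [hH, hφ0, hφS]
  have e1 : (1 + k * 1) / (k + 1) = 1 := by
    rw [div_eq_one_iff_eq (by linarith)]; ring
  have e2 : (1 + k * -1) / (k + -1) = -1 := by
    rw [div_eq_iff (by linarith)]; ring
  rw [e1, e2, Real.arcsin_one, Real.arcsin_neg_one]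
  norm_num
  ring

lemma iso_opt (k A : ℝ) (hk : 1 < k) (hA : 0 ≤ A) :
    Real.sqrt (A ^ 2 + 4 * Real.pi * A) ≤ k * A + 2 * Real.pi * (k - Real.sqrt (k ^ 2 - 1)) := by
  have hpi := Real.pi_pos
  set R := Real.sqrt (k ^ 2 - 1) with hR
  have hR2 : R ^ 2 = k ^ 2 - 1 := Real.sq_sqrt (by nlinarith)
  have hRpos : 0 < R := Real.sqrt_pos.2 (by nlinarith)
  have hRk : R ≤ k := by nlinarith
  apply Real.sqrt_le_iff.2 ⟨?_, ?_⟩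
  · have : 0 ≤ k * A := by positivity
    have : 0 ≤ 2 * Real.pi * (k - R) := by apply mul_nonneg <;> linarith
    linarith
  · nlinarith [sq_nonneg ((A + 2 * Real.pi) * R - 2 * Real.pi * k)]


lemma iso_m (X : ℝ) (hX : 0 < X) (U Ux : ℝ → ℝ → ℝ)
    (hUc : Continuous (fun p : ℝ × ℝ => U p.1 p.2))
    (hUxc : Continuous (fun p : ℝ × ℝ => Ux p.1 p.2))
    (hx : ∀ x y, HasDerivAt (fun x => U x y) (Ux x y) x)
    (h0 : ∀ x y, 0 ≤ U x y)
    (hleft : ∀ x y, x ≤ -X → U x y = 0) (hright : ∀ x y, X ≤ x → U x y = 0) :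
    ∃ m : ℝ → ℝ, Continuous m ∧ (∀ x y, U x y ≤ m y) ∧ (∀ y, ∃ x, U x y = m y) ∧
      ∀ y, 2 * m y ≤ ∫ x in (-X)..X, |Ux x y| := by
  refine ⟨fun y => sSup ((fun x => U x y) '' Set.Icc (-X) X), ?_, ?_, ?_, ?_⟩
  · refine IsCompact.continuous_sSup (f := fun y x => U x y) isCompact_Icc ?_
    exact hUc.comp continuous_swap
  · intro x y
    have hne : ∀ x ∈ Set.Icc (-X) X, U x y ≤ sSup ((fun x => U x y) '' Set.Icc (-X) X) := by
      intro x hxm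
      apply le_csSup
      · apply (isCompact_Icc.image _).bddAbove
        exact hUc.comp (by fun_prop : Continuous fun x : ℝ => (x, y))
      · exact ⟨x, hxm, rfl⟩
    by_cases h : x ∈ Set.Icc (-X) X
    · exact hne x h
    · have : U x y = 0 := by
        by_contra hc
        apply h
        constructor
        · by_contra h2; exact hc (hleft x y (by linarith))
        · by_contra h2; exact hc (hright x y (by linarith))
      rw [this]
      exact (h0 0 y).trans (hne 0 ⟨by linarith, by linarith⟩)
  · intro y
    obtain ⟨x, -, h⟩ := isCompact_Icc.exists_sSup_image_eq (s := Set.Icc (-X) X) (f := fun x => U x y)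
      ⟨0, by linarith, by linarith⟩ (hUc.comp (by fun_prop : Continuous fun x : ℝ => (x, y))).continuousOn
    exact ⟨x, h.symm⟩
  · intro y
    obtain ⟨x, hxm, h⟩ := isCompact_Icc.exists_sSup_image_eq (s := Set.Icc (-X) X) (f := fun x => U x y)
      ⟨0, by linarith, by linarith⟩ (hUc.comp (by fun_prop : Continuous fun x : ℝ => (x, y))).continuousOn
    simp only at h ⊢
    rw [h]
    have hc : Continuous (fun x => Ux x y) := hUxc.comp (by fun_prop : Continuous fun x : ℝ => (x, y))
    have hi : ∀ a b, IntervalIntegrable (fun x => Ux x y) volume a b :=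
      fun a b => hc.intervalIntegrable a b
    have hi' : ∀ a b, IntervalIntegrable (fun x => |Ux x y|) volume a b :=
      fun a b => hc.abs.intervalIntegrable a b
    have e1 := intervalIntegral.integral_eq_sub_of_hasDerivAt (fun z _ => hx z y) (hi (-X) x)
    have e2 := intervalIntegral.integral_eq_sub_of_hasDerivAt (fun z _ => hx z y) (hi x X)
    simp only [hleft (-X) y le_rfl, hright X y le_rfl] at e1 e2
    have i1 := intervalIntegral.abs_integral_le_integral_abs (f := fun x => Ux x y) (μ := volume) hxm.1
    have i2 := intervalIntegral.abs_integral_le_integral_abs (f := fun x => Ux x y) (μ := volume) hxm.2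
    rw [e1] at i1
    rw [e2] at i2
    rw [← intervalIntegral.integral_add_adjacent_intervals (hi' (-X) x) (hi' x X)]
    have := abs_le.1 i1
    have := abs_le.1 i2
    linarith [le_abs_self (U x y - 0), neg_abs_le (0 - U x y)]

lemma cs_point (u v t : ℝ) (ht : t ^ 2 ≤ 1) :
    Real.sqrt (1 - t ^ 2) * |u| - t * v ≤ Real.sqrt (u ^ 2 + v ^ 2) := by
  apply Real.le_sqrt_of_sq_le
  set s := Real.sqrt (1 - t ^ 2)
  have hs : s ^ 2 = 1 - t ^ 2 := Real.sq_sqrt (by linarith)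
  have hu : |u| ^ 2 = u ^ 2 := sq_abs u
  have : (s * |u| - t * v) ^ 2 + (s * v + t * |u|) ^ 2 = u ^ 2 + v ^ 2 := by
    rw [← hu]
    have : (s * |u| - t * v) ^ 2 + (s * v + t * |u|) ^ 2 = (s ^ 2 + t ^ 2) * (|u| ^ 2 + v ^ 2) := by ring
    rw [this, hs]; ring
  nlinarith [sq_nonneg (s * v + t * |u|)]

lemma iso (X y0 y1 : ℝ) (hX : 0 < X) (hy0 : 0 < y0) (hy01 : y0 < y1) (U Ux Uy : ℝ → ℝ → ℝ)
    (hUc : Continuous (fun p : ℝ × ℝ => U p.1 p.2))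
    (hUxc : Continuous (fun p : ℝ × ℝ => Ux p.1 p.2))
    (hUyc : Continuous (fun p : ℝ × ℝ => Uy p.1 p.2))
    (hx : ∀ x y, HasDerivAt (fun x => U x y) (Ux x y) x)
    (hy : ∀ x y, HasDerivAt (fun y => U x y) (Uy x y) y)
    (h0 : ∀ x y, 0 ≤ U x y) (h1 : ∀ x y, U x y ≤ 1)
    (hleft : ∀ x y, x ≤ -X → U x y = 0) (hright : ∀ x y, X ≤ x → U x y = 0)
    (hbot : ∀ x, U x y0 = 0) (htop : ∀ x, U x y1 = 0)
    (S S' : Set (ℝ × ℝ)) (hSm : MeasurableSet S) (hSm' : MeasurableSet S')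
    (hSS : S' ⊆ S) (hSb : S ⊆ Set.Icc (-X) X ×ˢ Set.Icc y0 y1)
    (hU1 : ∀ p ∈ S', U p.1 p.2 = 1) (hU0 : ∀ p, p ∉ S → U p.1 p.2 = 0)
    (ha' : 0 < ∫ p in S', 1 / p.2 ^ 2) :
    Real.sqrt ((∫ p in S', 1 / p.2 ^ 2) ^ 2 + 4 * Real.pi * ∫ p in S', 1 / p.2 ^ 2)
      - ((∫ p in S, 1 / p.2 ^ 2) - ∫ p in S', 1 / p.2 ^ 2) ≤
      ∫ p in Set.Icc (-X) X ×ˢ Set.Icc y0 y1,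
        Real.sqrt (Ux p.1 p.2 ^ 2 + Uy p.1 p.2 ^ 2) / p.2 := by
  obtain ⟨m, hmc, hUm, hmx, hm2⟩ := iso_m X hX U Ux hUc hUxc hx h0 hleft hright
  have hm0 : ∀ y, 0 ≤ m y := fun y => (h0 0 y).trans (hUm 0 y)
  have hm1 : ∀ y, m y ≤ 1 := by
    intro y; obtain ⟨x, h⟩ := hmx y; rw [← h]; exact h1 x y
  set d : ℝ → ℝ := fun y => max y y0 with hd
  have hdc : Continuous d := by fun_prop
  have hdpos : ∀ y, 0 < d y := fun y => lt_of_lt_of_le hy0 (le_max_right _ _)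
  have hdne : ∀ y, d y ≠ 0 := fun y => (hdpos y).ne'
  have hdy : ∀ y, y0 ≤ y → d y = y := fun y h => max_eq_left h
  have hqc : Continuous (fun s => m s / d s) := hmc.div hdc hdne
  set T : ℝ → ℝ := fun y => ∫ s in y0..y, m s / d s with hT
  have hTd : ∀ y, HasDerivAt T (m y / d y) y := fun y => by
    exact intervalIntegral.integral_hasDerivAt_right (hqc.intervalIntegrable _ _)
      (hqc.stronglyMeasurableAtFilter _ _) hqc.continuousAt
  have hTc : Continuous T := continuous_iff_continuousAt.2 fun y => (hTd y).continuousAt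
  have hTm : Monotone T := monotone_of_hasDerivAt_nonneg hTd
    (fun y => div_nonneg (hm0 y) (hdpos y).le)
  have hT0 : T y0 = 0 := by simp [hT]
  have hTpos : 0 < T y1 := by
    obtain ⟨p, hp⟩ : S'.Nonempty := by
      by_contra hc
      rw [Set.not_nonempty_iff_eq_empty] at hc
      simp [hc] at ha'
    have hb := hSb (hSS hp)
    refine intervalIntegral.integral_pos hy01 hqc.continuousOn
      (fun y _ => div_nonneg (hm0 y) (hdpos y).le) ⟨p.2, hb.2, div_pos ?_ (hdpos _)⟩
    have := hUm p.1 p.2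
    rw [hU1 p hp] at this
    linarith
  set E := Real.exp (T y1) with hE
  have hE1 : 1 < E := by rw [hE]; exact Real.one_lt_exp_iff.2 hTpos
  set k := (E + 1) / (E - 1) with hk
  have hk1 : 1 < k := by rw [hk, lt_div_iff₀ (by linarith)]; linarith
  have hkE : E = (k + 1) / (k - 1) := by
    rw [eq_div_iff (by linarith), hk]
    have : E - 1 ≠ 0 := by linarith
    field_simp; ring
  set τ : ℝ → ℝ := fun y => (k - 1) * Real.exp (T y) - k with hτ
  have hτc : Continuous τ := by fun_prop
  have hτd : ∀ y, HasDerivAt τ ((k + τ y) * (m y / d y)) y := by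
    intro y
    have := (((hTd y).exp).const_mul (k - 1)).sub_const k
    refine this.congr_deriv ?_
    show _ = (k + ((k - 1) * Real.exp (T y) - k)) * (m y / d y)
    ring
  have hτl : ∀ y, y0 ≤ y → -1 ≤ τ y := by
    intro y h
    have : 1 ≤ Real.exp (T y) := by
      apply Real.one_le_exp; rw [← hT0]; exact hTm h
    simp only [hτ]; nlinarith
  have hτu : ∀ y, y ≤ y1 → τ y ≤ 1 := by
    intro y h
    have h2 : Real.exp (T y) ≤ E := Real.exp_le_exp.2 (hTm h)
    have h3 : (k - 1) * E = k + 1 := by rw [hkE, mul_div_cancel₀ _ (by linarith)]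
    simp only [hτ]; nlinarith
  have hτ2 : ∀ y, y0 ≤ y → y ≤ y1 → τ y ^ 2 ≤ 1 := by
    intro y h h'
    nlinarith [hτl y h, hτu y h']
  set box : Set (ℝ × ℝ) := Set.Icc (-X) X ×ˢ Set.Icc y0 y1 with hbox
  have hboxm : MeasurableSet box := measurableSet_Icc.prod measurableSet_Icc
  -- functions
  set FA : ℝ × ℝ → ℝ := fun p => Real.sqrt (1 - τ p.2 ^ 2) * |Ux p.1 p.2| / d p.2 with hFA
  set FB : ℝ × ℝ → ℝ := fun p => - (τ p.2 / d p.2) * Uy p.1 p.2 with hFB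
  set FC : ℝ × ℝ → ℝ := fun p => U p.1 p.2 * ((k + τ p.2) * m p.2 - τ p.2) / d p.2 ^ 2 with hFC
  have hFAc : Continuous FA := by
    apply Continuous.div _ (by fun_prop) (fun p => hdne _)
    fun_prop
  have hFBc : Continuous FB := by
    have : Continuous (fun p : ℝ × ℝ => τ p.2 / d p.2) :=
      Continuous.div (by fun_prop) (by fun_prop) (fun p => hdne _)
    fun_prop
  have hFCc : Continuous FC := by
    apply Continuous.div _ (by fun_prop) (fun p => pow_ne_zero _ (hdne _))
    fun_prop
  have iA := box_int FA (-X) X y0 y1 hFAc.continuousOn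
  have iB := box_int FB (-X) X y0 y1 hFBc.continuousOn
  have iC := box_int FC (-X) X y0 y1 hFCc.continuousOn
  -- lower bound
  have step1 : (∫ p in box, FA p) + ∫ p in box, FB p ≤
      ∫ p in box, Real.sqrt (Ux p.1 p.2 ^ 2 + Uy p.1 p.2 ^ 2) / p.2 := by
    rw [← integral_add iA iB]
    refine setIntegral_mono_on (iA.add iB) ?_ hboxm ?_
    · have hcD : Continuous (fun p : ℝ × ℝ => Real.sqrt (Ux p.1 p.2 ^ 2 + Uy p.1 p.2 ^ 2) / d p.2) :=
        Continuous.div (by fun_prop) (by fun_prop) (fun p => hdne _)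
      refine (box_int _ (-X) X y0 y1 hcD.continuousOn).congr_fun ?_ hboxm
      intro p hp
      simp only [hdy p.2 hp.2.1]
    · intro p hp
      have hpos : 0 < p.2 := lt_of_lt_of_le hy0 hp.2.1
      have := cs_point (Ux p.1 p.2) (Uy p.1 p.2) (τ p.2) (hτ2 _ hp.2.1 hp.2.2)
      simp only [hFA, hFB, hdy p.2 hp.2.1]
      rw [le_div_iff₀ hpos]
      have e : (√(1 - τ p.2 ^ 2) * |Ux p.1 p.2| / p.2 + -(τ p.2 / p.2) * Uy p.1 p.2) * p.2 =
        √(1 - τ p.2 ^ 2) * |Ux p.1 p.2| - τ p.2 * Uy p.1 p.2 := by field_simp; ring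
      rw [e]; exact this
  have step2 : 2 * Real.pi * (k - Real.sqrt (k ^ 2 - 1)) ≤ ∫ p in box, FA p := by
    have e1 : ∫ p in box, FA p = ∫ y in y0..y1, ∫ x in (-X)..X, FA (x, y) :=
      box_yx FA (-X) X y0 y1 (by linarith) hy01.le iA
    have e2 : ∀ y, ∫ x in (-X)..X, FA (x, y) =
        (Real.sqrt (1 - τ y ^ 2) / d y) * ∫ x in (-X)..X, |Ux x y| := by
      intro y
      rw [← intervalIntegral.integral_const_mul]
      congr 1; ext x; simp only [hFA]; ring
    have e3 : ∫ y in y0..y1, (2 * Real.sqrt (1 - τ y ^ 2)) * (m y / d y) =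
        2 * Real.pi * (k - Real.sqrt (k ^ 2 - 1)) := by
      rw [← iso_const k (T y1) hk1 hTpos hkE, ← hT0]
      exact intervalIntegral.integral_comp_mul_deriv
        (g := fun s => 2 * Real.sqrt (1 - ((k - 1) * Real.exp s - k) ^ 2))
        (fun y _ => hTd y) hqc.continuousOn (by fun_prop)
    rw [← e3, e1]
    simp_rw [e2]
    have cI : Continuous (fun y => ∫ x in (-X)..X, |Ux x y|) := by
      refine intervalIntegral.continuous_parametric_intervalIntegral_of_continuous' ?_ _ _
      exact (hUxc.comp continuous_swap).abs
    have cS : Continuous (fun y => Real.sqrt (1 - τ y ^ 2)) := by fun_prop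
    apply intervalIntegral.integral_mono_on hy01.le
    · exact ((cS.const_smul (2:ℝ)).mul hqc).intervalIntegrable _ _
    · exact ((cS.div hdc hdne).mul cI).intervalIntegrable _ _
    · intro y hyy
      have := hm2 y
      have h3 : 0 ≤ Real.sqrt (1 - τ y ^ 2) / d y := div_nonneg (Real.sqrt_nonneg _) (hdpos y).le
      calc _ = (Real.sqrt (1 - τ y ^ 2) / d y) * (2 * m y) := by ring
        _ ≤ _ := mul_le_mul_of_nonneg_left this h3
  have step3 : ∫ p in box, FB p = ∫ p in box, FC p := by
    have e1 : ∫ p in box, FB p = _ := box_xy FB (-X) X y0 y1 (by linarith) hy01.le iB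
    have e2 : ∫ p in box, FC p = _ := box_xy FC (-X) X y0 y1 (by linarith) hy01.le iC
    rw [e1, e2]
    congr 1; ext x
    have c1 : Continuous (fun y => FB (x, y)) := by fun_prop
    have c2 : Continuous (fun y => FC (x, y)) := by fun_prop
    rw [← sub_eq_zero, ← intervalIntegral.integral_sub (c1.intervalIntegrable _ _)
      (c2.intervalIntegrable _ _)]
    have hcU : Continuous (fun y => U x y) :=
      hUc.comp (by fun_prop : Continuous fun y : ℝ => (x, y))
    have := intervalIntegral.integral_eq_sub_of_hasDerivAt_of_le (a := y0) (b := y1)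
      (f := fun y => -(τ y / d y) * U x y) (f' := fun y => FB (x, y) - FC (x, y)) hy01.le
      (((hτc.div hdc hdne).neg.mul hcU).continuousOn) ?_
      ((c1.sub c2).intervalIntegrable _ _)
    · rw [this, hbot, htop]; ring
    · intro y hyy
      have hdd : HasDerivAt d 1 y := by
        refine (hasDerivAt_id y).congr_of_eventuallyEq ?_
        filter_upwards [Ioi_mem_nhds hyy.1] with z hz
        exact hdy z (le_of_lt hz)
      have := (((hτd y).div hdd (hdne y)).neg).mul (hy x y)
      refine this.congr_deriv ?_
      have := hdne y
      simp only [hFB, hFC, Pi.neg_apply, Pi.div_apply]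
      field_simp
      ring
  have hSI : ∀ A : Set (ℝ × ℝ), MeasurableSet A → A ⊆ box →
      IntegrableOn (fun p : ℝ × ℝ => 1 / p.2 ^ 2) A := by
    intro A _ hA
    refine IntegrableOn.mono_set ?_ hA
    apply box_int
    apply ContinuousOn.div continuousOn_const (by fun_prop)
    intro p hp
    have : 0 < p.2 := lt_of_lt_of_le hy0 hp.2.1
    positivity
  have step4 : k * (∫ p in S', 1 / p.2 ^ 2) - ((∫ p in S, 1 / p.2 ^ 2) - ∫ p in S', 1 / p.2 ^ 2)
      ≤ ∫ p in box, FC p := by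
    have hfC : ∫ p in box, FC p = ∫ p in S, FC p := by
      symm
      refine Eq.symm (setIntegral_eq_of_subset_of_forall_sdiff_eq_zero hboxm hSb ?_)
      intro p hp
      simp only [hFC, hU0 p hp.2]; simp
    have hd1 : ∫ p in S, FC p = (∫ p in S', FC p) + ∫ p in S \ S', FC p := by
      rw [← setIntegral_union Set.disjoint_sdiff_right (hSm.diff hSm')
        (iC.mono_set (hSS.trans hSb)) (iC.mono_set (Set.sdiff_subset.trans hSb)),
        Set.union_sdiff_cancel hSS]
    have hd2 : (∫ p in S, 1 / p.2 ^ 2) = (∫ p in S', 1 / p.2 ^ 2) + ∫ p in S \ S', 1 / p.2 ^ 2 := by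
      rw [← setIntegral_union Set.disjoint_sdiff_right (hSm.diff hSm')
        (hSI _ hSm' (hSS.trans hSb)) (hSI _ (hSm.diff hSm') (Set.sdiff_subset.trans hSb)),
        Set.union_sdiff_cancel hSS]
    have b1 : k * (∫ p in S', 1 / p.2 ^ 2) ≤ ∫ p in S', FC p := by
      rw [← integral_const_mul]
      refine setIntegral_mono_on ((hSI _ hSm' (hSS.trans hSb)).const_mul k)
        (iC.mono_set (hSS.trans hSb)) hSm' ?_
      intro p hp
      have hb := hSb (hSS hp)
      have hmm : m p.2 = 1 := le_antisymm (hm1 _) (by rw [← hU1 p hp]; exact hUm _ _)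
      simp only [hFC, hU1 p hp, hmm, hdy p.2 hb.2.1]
      apply le_of_eq; ring
    have b2 : - (∫ p in S \ S', 1 / p.2 ^ 2) ≤ ∫ p in S \ S', FC p := by
      rw [← integral_neg]
      refine setIntegral_mono_on ((hSI _ (hSm.diff hSm') (Set.sdiff_subset.trans hSb)).neg)
        (iC.mono_set (Set.sdiff_subset.trans hSb)) (hSm.diff hSm') ?_
      intro p hp
      have hb := hSb hp.1
      simp only [hFC, hdy p.2 hb.2.1, ← neg_div]
      have hpos : 0 < p.2 := lt_of_lt_of_le hy0 hb.2.1
      refine div_le_div_of_nonneg_right ?_ (by positivity)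
      have u0 := h0 p.1 p.2
      have u1 := h1 p.1 p.2
      have m0 := hm0 p.2
      have m1 := hm1 p.2
      have t0 := hτl _ hb.2.1
      have t1 := hτu _ hb.2.2
      have : -1 ≤ (k + τ p.2) * m p.2 - τ p.2 := by
        nlinarith [mul_nonneg (by linarith : (0:ℝ) ≤ k + τ p.2) m0]
      nlinarith
    rw [hfC, hd1, hd2]
    linarith
  have := iso_opt k _ hk1 ha'.le
  linarith



lemma trap (δ ε : ℝ) (hδ : 0 < δ) (hε : 0 < ε) :
    ∃ g Ψ : ℝ → ℝ, Continuous g ∧ (∀ t, 0 ≤ g t) ∧ (∀ t, g t ≤ (1 + ε) / δ) ∧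
      (∀ t, t ≤ 0 → g t = 0) ∧ (∀ t, δ ≤ t → g t = 0) ∧ (∀ t, HasDerivAt Ψ (g t) t) ∧
      (∀ t, t ≤ 0 → Ψ t = 0) ∧ (∀ t, δ ≤ t → Ψ t = 1) ∧ (∀ t, 0 ≤ Ψ t) ∧ ∀ t, Ψ t ≤ 1 := by
  set κ : ℝ := δ * ε / (2 * (1 + ε)) with hκ
  have hκ0 : 0 < κ := by positivity
  have hκ1 : δ - 2 * κ = δ / (1 + ε) := by rw [hκ]; field_simp; ring
  set g0 : ℝ → ℝ := fun t => max 0 (min 1 (min t (δ - t) / κ)) with hg0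
  have hc : Continuous g0 := by fun_prop
  have g00 : ∀ t, 0 ≤ g0 t := fun t => le_max_left _ _
  have g01 : ∀ t, g0 t ≤ 1 := fun t => max_le zero_le_one (min_le_left _ _)
  have gl : ∀ t, t ≤ 0 → g0 t = 0 := by
    intro t ht
    apply max_eq_left
    refine (min_le_right _ _).trans ?_
    apply div_nonpos_of_nonpos_of_nonneg ((min_le_left _ _).trans ht) hκ0.le
  have gr : ∀ t, δ ≤ t → g0 t = 0 := by
    intro t ht
    apply max_eq_left
    refine (min_le_right _ _).trans ?_
    apply div_nonpos_of_nonpos_of_nonneg ((min_le_right _ _).trans (by linarith)) hκ0.le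
  have gm : ∀ t, κ ≤ t → t ≤ δ - κ → g0 t = 1 := by
    intro t h1 h2
    have : 1 ≤ min t (δ - t) / κ := by
      rw [le_div_iff₀ hκ0, one_mul]; exact le_min h1 (by linarith)
    simp only [hg0]
    rw [min_eq_left this]; simp
  set I := ∫ t in (0:ℝ)..δ, g0 t with hI
  have hii : ∀ a b, IntervalIntegrable g0 volume a b := fun a b => hc.intervalIntegrable a b
  have hIlow : δ / (1 + ε) ≤ I := by
    have hlt : 0 < δ / (1 + ε) := by positivity
    have e1 : I = (∫ t in (0:ℝ)..κ, g0 t) + (∫ t in κ..(δ - κ), g0 t) + ∫ t in (δ - κ)..δ, g0 t := by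
      rw [intervalIntegral.integral_add_adjacent_intervals (hii _ _) (hii _ _),
        intervalIntegral.integral_add_adjacent_intervals (hii _ _) (hii _ _)]
    have e2 : ∫ t in κ..(δ - κ), g0 t = δ / (1 + ε) := by
      rw [intervalIntegral.integral_congr (g := fun _ => (1:ℝ))]
      · simp; linarith
      · intro t ht
        rw [Set.uIcc_of_le (by linarith)] at ht
        exact gm t ht.1 ht.2
    have e3 : 0 ≤ ∫ t in (0:ℝ)..κ, g0 t :=
      intervalIntegral.integral_nonneg hκ0.le (fun t _ => g00 t)
    have e4 : 0 ≤ ∫ t in (δ - κ)..δ, g0 t :=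
      intervalIntegral.integral_nonneg (by linarith) (fun t _ => g00 t)
    linarith
  have hIpos : 0 < I := lt_of_lt_of_le (by positivity) hIlow
  have hd : ∀ t, HasDerivAt (fun s => (∫ u in (0:ℝ)..s, g0 u) / I) (g0 t / I) t := fun t =>
    (intervalIntegral.integral_hasDerivAt_right (hii _ _)
      (hc.stronglyMeasurableAtFilter _ _) hc.continuousAt).div_const I
  have hmono : Monotone (fun s => (∫ u in (0:ℝ)..s, g0 u) / I) :=
    monotone_of_hasDerivAt_nonneg hd (fun t => div_nonneg (g00 t) hIpos.le)
  have hΨl : ∀ t, t ≤ 0 → (∫ u in (0:ℝ)..t, g0 u) / I = 0 := by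
    intro t ht
    rw [intervalIntegral.integral_congr (g := fun _ => (0:ℝ))]
    · simp
    · intro u hu
      rw [Set.uIcc_of_ge ht] at hu
      exact gl u hu.2
  have hΨr : ∀ t, δ ≤ t → (∫ u in (0:ℝ)..t, g0 u) / I = 1 := by
    intro t ht
    rw [← intervalIntegral.integral_add_adjacent_intervals (hii 0 δ) (hii δ t),
      intervalIntegral.integral_congr (a := δ) (g := fun _ => (0:ℝ))]
    · simp [← hI, hIpos.ne']
    · intro u hu
      rw [Set.uIcc_of_le ht] at hu
      exact gr u hu.1
  refine ⟨fun t => g0 t / I, fun s => (∫ u in (0:ℝ)..s, g0 u) / I, hc.div_const I,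
    fun t => div_nonneg (g00 t) hIpos.le, ?_, ?_, ?_, hd, hΨl, hΨr, ?_, ?_⟩
  · intro t
    have : g0 t / I ≤ 1 / (δ / (1 + ε)) :=
      div_le_div₀ zero_le_one (g01 t) (by positivity) hIlow
    simpa using this
  · intro t ht; simp [gl t ht]
  · intro t ht; simp [gr t ht]
  · intro t
    rcases le_total t 0 with h | h
    · exact (hΨl t h).ge
    · have := hmono h
      simp only [hΨl 0 le_rfl] at this
      exact this
  · intro t
    rcases le_total t δ with h | h
    · have := hmono h
      simp only [hΨr δ le_rfl] at this
      exact this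
    · exact (hΨr t h).le

open Classical in
lemma ext_cont (N L : Set (ℝ × ℝ)) (hN : IsOpen N) (hL : IsOpen L) (hNL : ∀ p, p ∈ N ∨ p ∈ L)
    (V : ℝ × ℝ → ℝ) (hV : ContinuousOn V N) (c : ℝ) (hLc : ∀ p ∈ N, p ∈ L → V p ≤ c)
    (h : ℝ → ℝ) (hh : Continuous h) (h0 : ∀ t, t ≤ 0 → h t = 0)
    (Z : ℝ × ℝ → ℝ) (hZ : ContinuousOn Z N) :
    Continuous (fun p => if p ∈ N then h (V p - c) * Z p else 0) := by
  rw [continuous_iff_continuousAt]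
  intro p
  rcases hNL p with hp | hp
  · have : ContinuousAt (fun p => h (V p - c) * Z p) p := by
      have h1 := hV.continuousAt (hN.mem_nhds hp)
      have h2 := hZ.continuousAt (hN.mem_nhds hp)
      exact (hh.continuousAt.comp (h1.sub continuousAt_const)).mul h2
    refine this.congr ?_
    filter_upwards [hN.mem_nhds hp] with q hq
    simp [hq]
  · refine (continuousAt_const (y := (0:ℝ))).congr ?_
    filter_upwards [hL.mem_nhds hp] with q hq
    by_cases hqN : q ∈ N
    · simp [hqN, h0 (V q - c) (by linarith [hLc q hqN hq])]
    · simp [hqN]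

open Classical in
/-- derivative along a curve -/
lemma ext_deriv (N L : Set (ℝ × ℝ)) (hN : IsOpen N) (hL : IsOpen L) (hNL : ∀ p, p ∈ N ∨ p ∈ L)
    (V : ℝ × ℝ → ℝ) (c : ℝ) (hLc : ∀ p ∈ N, p ∈ L → V p ≤ c)
    (h h' : ℝ → ℝ) (hh : ∀ t, HasDerivAt h (h' t) t) (h0 : ∀ t, t ≤ 0 → h t = 0)
    (h0' : ∀ t, t ≤ 0 → h' t = 0)
    (Z : ℝ × ℝ → ℝ) (ℓ : ℝ → ℝ × ℝ) (hℓ : Continuous ℓ) (Vs Zs : ℝ × ℝ → ℝ) (s : ℝ)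
    (hVs : ℓ s ∈ N → HasDerivAt (fun s => V (ℓ s)) (Vs (ℓ s)) s)
    (hZs : ℓ s ∈ N → HasDerivAt (fun s => Z (ℓ s)) (Zs (ℓ s)) s) :
    HasDerivAt (fun s => if ℓ s ∈ N then h (V (ℓ s) - c) * Z (ℓ s) else 0)
      ((if ℓ s ∈ N then h' (V (ℓ s) - c) * (Vs (ℓ s) * Z (ℓ s)) else 0) +
        (if ℓ s ∈ N then h (V (ℓ s) - c) * Zs (ℓ s) else 0)) s := by
  rcases hNL (ℓ s) with hp | hp
  · have h1 := ((hh (V (ℓ s) - c)).comp s ((hVs hp).sub_const c)).mul (hZs hp)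
    simp only [hp, if_true]
    refine (h1.congr_deriv ?_).congr_of_eventuallyEq ?_
    · simp only [Function.comp]; ring
    · filter_upwards [hℓ.continuousAt.preimage_mem_nhds (hN.mem_nhds hp)] with q hq
      have : ℓ q ∈ N := hq
      simp [this]
  · have e : ((if ℓ s ∈ N then h' (V (ℓ s) - c) * (Vs (ℓ s) * Z (ℓ s)) else 0) +
        (if ℓ s ∈ N then h (V (ℓ s) - c) * Zs (ℓ s) else 0)) = 0 := by
      by_cases hqN : ℓ s ∈ N
      · have := hLc _ hqN hp
        simp [h0 (V (ℓ s) - c) (by linarith), h0' (V (ℓ s) - c) (by linarith)]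
      · simp [hqN]
    rw [e]
    refine (hasDerivAt_const s (0:ℝ)).congr_of_eventuallyEq ?_
    filter_upwards [hℓ.continuousAt.preimage_mem_nhds (hL.mem_nhds hp)] with q hq
    have hq' : ℓ q ∈ L := hq
    by_cases hqN : ℓ q ∈ N
    · simp [hqN, h0 (V (ℓ q) - c) (by linarith [hLc _ hqN hq'])]
    · simp [hqN]



open Classical in
lemma energy (X y0 y1 : ℝ) (hX : 0 < X) (hy0 : 0 < y0) (hy01 : y0 < y1)
    (N L : Set (ℝ × ℝ)) (hN : IsOpen N) (hL : IsOpen L) (hNL : ∀ p, p ∈ N ∨ p ∈ L)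
    (V Vx Vy Vxx Vyy : ℝ × ℝ → ℝ) (hV : ContinuousOn V N)
    (hVx : ContinuousOn Vx N) (hVy : ContinuousOn Vy N)
    (hVxx : ContinuousOn Vxx N) (hVyy : ContinuousOn Vyy N)
    (dx : ∀ x y, (x, y) ∈ N → HasDerivAt (fun s => V (s, y)) (Vx (x, y)) x)
    (dy : ∀ x y, (x, y) ∈ N → HasDerivAt (fun s => V (x, s)) (Vy (x, y)) y)
    (dxx : ∀ x y, (x, y) ∈ N → HasDerivAt (fun s => Vx (s, y)) (Vxx (x, y)) x)
    (dyy : ∀ x y, (x, y) ∈ N → HasDerivAt (fun s => Vy (x, s)) (Vyy (x, y)) y)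
    (hlap : ∀ p ∈ N, Vxx p + Vyy p = - (1 / p.2 ^ 2))
    (c c' : ℝ) (hcc : c < c') (hLc : ∀ p ∈ N, p ∈ L → V p ≤ c)
    (hbox : ∀ p ∈ N, c < V p → p.1 ∈ Set.Ioo (-X) X ∧ p.2 ∈ Set.Ioo y0 y1)
    (a a' : ℝ) (ha : a = ∫ p in {p | p ∈ N ∧ c < V p}, 1 / p.2 ^ 2)
    (ha' : a' = ∫ p in {p | p ∈ N ∧ c' < V p}, 1 / p.2 ^ 2) (hpos : 0 < a')
    (hle : a - a' ≤ Real.sqrt (a' ^ 2 + 4 * Real.pi * a')) :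
    (Real.sqrt (a' ^ 2 + 4 * Real.pi * a') - (a - a')) ^ 2 * (c' - c) ≤ a * (a - a') := by
  set A : Set (ℝ × ℝ) := {p | p ∈ N ∧ c < V p} with hA
  set A' : Set (ℝ × ℝ) := {p | p ∈ N ∧ c' < V p} with hA'
  set B : Set (ℝ × ℝ) := Set.Icc (-X) X ×ˢ Set.Icc y0 y1 with hB
  have hBm : MeasurableSet B := measurableSet_Icc.prod measurableSet_Icc
  have hAm : MeasurableSet A := (hV.isOpen_inter_preimage hN (isOpen_Ioi (a := c))).measurableSet
  have hAm' : MeasurableSet A' := (hV.isOpen_inter_preimage hN (isOpen_Ioi (a := c'))).measurableSet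
  have hAA : A' ⊆ A := fun p hp => ⟨hp.1, hcc.trans hp.2⟩
  have hAB : A ⊆ B := fun p hp => by
    have := hbox p hp.1 hp.2
    exact ⟨⟨this.1.1.le, this.1.2.le⟩, ⟨this.2.1.le, this.2.2.le⟩⟩
  have hyint : IntegrableOn (fun p : ℝ × ℝ => 1 / p.2 ^ 2) B := by
    apply box_int
    apply ContinuousOn.div continuousOn_const (by fun_prop)
    intro p hp
    have : 0 < p.2 := lt_of_lt_of_le hy0 hp.2.1
    positivity
  have hdiff : a - a' = ∫ p in A \ A', 1 / p.2 ^ 2 := by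
    rw [ha, ha']
    have : (∫ p in A, 1 / p.2 ^ 2) = (∫ p in A', 1 / p.2 ^ 2) + ∫ p in A \ A', 1 / p.2 ^ 2 := by
      rw [← setIntegral_union Set.disjoint_sdiff_right (hAm.diff hAm')
        (hyint.mono_set (hAA.trans hAB)) (hyint.mono_set (Set.sdiff_subset.trans hAB)),
        Set.union_sdiff_cancel hAA]
    linarith
  have hdnn : 0 ≤ a - a' := by
    rw [hdiff]
    exact setIntegral_nonneg (hAm.diff hAm') (fun p _ => by positivity)
  have hδ : 0 < c' - c := by linarith
  -- key
  have key : ∀ ε : ℝ, 0 < ε → (Real.sqrt (a' ^ 2 + 4 * Real.pi * a') - (a - a')) ^ 2 ≤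
      a * ((1 + ε) / (c' - c) * (a - a')) := by
    intro ε hε
    obtain ⟨g, Ψ, gc, g0, gu, gl, gr, Ψd, Ψl, Ψr, Ψ0, Ψ1⟩ := trap (c' - c) ε hδ hε
    have Ψc : Continuous Ψ := continuous_iff_continuousAt.2 fun t => (Ψd t).continuousAt
    have EC := fun (h : ℝ → ℝ) (hh : Continuous h) (h0 : ∀ t, t ≤ 0 → h t = 0)
      (Z : ℝ × ℝ → ℝ) (hZ : ContinuousOn Z N) => ext_cont N L hN hL hNL V hV c hLc h hh h0 Z hZ
    -- vanishing
    have van : ∀ (h : ℝ → ℝ) (h0 : ∀ t, t ≤ 0 → h t = 0) (Z : ℝ × ℝ → ℝ) (p : ℝ × ℝ), p ∉ A →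
        (if p ∈ N then h (V p - c) * Z p else 0) = 0 := by
      intro h h0 Z p hp
      by_cases hpN : p ∈ N
      · have : V p ≤ c := by
          by_contra hc
          exact hp ⟨hpN, lt_of_not_ge hc⟩
        simp [h0 (V p - c) (by linarith)]
      · simp [hpN]
    have outx : ∀ x y, (x ≤ -X ∨ X ≤ x) → (x, y) ∉ A := by
      intro x y h hp
      have := (hbox _ hp.1 hp.2).1
      simp only [Set.mem_Ioo] at this
      rcases h with h | h <;> linarith
    have outy : ∀ x y, (y ≤ y0 ∨ y1 ≤ y) → (x, y) ∉ A := by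
      intro x y h hp
      have := (hbox _ hp.1 hp.2).2
      simp only [Set.mem_Ioo] at this
      rcases h with h | h <;> linarith
    have one_c : ContinuousOn (fun _ : ℝ × ℝ => (1:ℝ)) N := continuousOn_const
    set U : ℝ × ℝ → ℝ := fun p => if p ∈ N then Ψ (V p - c) * 1 else 0 with hU
    set Ux : ℝ × ℝ → ℝ := fun p => if p ∈ N then g (V p - c) * Vx p else 0 with hUx
    set Uy : ℝ × ℝ → ℝ := fun p => if p ∈ N then g (V p - c) * Vy p else 0 with hUy
    have Uc : Continuous U := EC Ψ Ψc Ψl _ one_c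
    have Uxc : Continuous Ux := EC g gc gl _ hVx
    have Uyc : Continuous Uy := EC g gc gl _ hVy
    have Udx : ∀ x y, HasDerivAt (fun x => U (x, y)) (Ux (x, y)) x := by
      intro x y
      have := ext_deriv N L hN hL hNL V c hLc Ψ g Ψd Ψl gl (fun _ => 1) (fun s => (s, y))
        (by fun_prop) Vx (fun _ => 0) x (dx x y) (fun _ => hasDerivAt_const _ _)
      refine this.congr_deriv ?_
      simp [hUx]
    have Udy : ∀ x y, HasDerivAt (fun y => U (x, y)) (Uy (x, y)) y := by
      intro x y
      have := ext_deriv N L hN hL hNL V c hLc Ψ g Ψd Ψl gl (fun _ => 1) (fun s => (x, s))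
        (by fun_prop) Vy (fun _ => 0) y (dy x y) (fun _ => hasDerivAt_const _ _)
      refine this.congr_deriv ?_
      simp [hUy]
    have U1' : ∀ p ∈ A', U p = 1 := by
      intro p hp
      simp only [hU, hp.1, if_true]
      rw [Ψr _ (by linarith [hp.2])]; norm_num
    have Unn : ∀ p, 0 ≤ U p := by
      intro p; simp only [hU]; split_ifs
      · simpa using Ψ0 _
      · exact le_rfl
    have Ule : ∀ p, U p ≤ 1 := by
      intro p; simp only [hU]; split_ifs
      · simpa using Ψ1 _
      · exact zero_le_one
    have ISO := iso X y0 y1 hX hy0 hy01 (fun x y => U (x, y)) (fun x y => Ux (x, y))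
      (fun x y => Uy (x, y)) Uc Uxc Uyc Udx Udy (fun x y => Unn _) (fun x y => Ule _)
      (fun x y h => van Ψ Ψl (fun _ => 1) _ (outx x y (Or.inl h)))
      (fun x y h => van Ψ Ψl (fun _ => 1) _ (outx x y (Or.inr h)))
      (fun x => van Ψ Ψl (fun _ => 1) _ (outy x _ (Or.inl le_rfl)))
      (fun x => van Ψ Ψl (fun _ => 1) _ (outy x _ (Or.inr le_rfl))) A A' hAm hAm' hAA hAB
      U1' (fun p hp => van Ψ Ψl (fun _ => 1) p hp) (by rw [← ha']; exact hpos)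
    rw [← ha, ← ha'] at ISO
    -- energy identity
    set Px1 : ℝ × ℝ → ℝ := fun p => if p ∈ N then g (V p - c) * (Vx p * Vx p) else 0 with hPx1
    set Px2 : ℝ × ℝ → ℝ := fun p => if p ∈ N then Ψ (V p - c) * Vxx p else 0 with hPx2
    set Py1 : ℝ × ℝ → ℝ := fun p => if p ∈ N then g (V p - c) * (Vy p * Vy p) else 0 with hPy1
    set Py2 : ℝ × ℝ → ℝ := fun p => if p ∈ N then Ψ (V p - c) * Vyy p else 0 with hPy2
    have cx1 : Continuous Px1 := EC g gc gl _ (hVx.mul hVx)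
    have cx2 : Continuous Px2 := EC Ψ Ψc Ψl _ hVxx
    have cy1 : Continuous Py1 := EC g gc gl _ (hVy.mul hVy)
    have cy2 : Continuous Py2 := EC Ψ Ψc Ψl _ hVyy
    have bi : ∀ F : ℝ × ℝ → ℝ, Continuous F → IntegrableOn F B := fun F hF =>
      box_int F _ _ _ _ hF.continuousOn
    have ex : ∫ p in B, (Px1 p + Px2 p) = 0 := by
      have := box_yx (fun p => Px1 p + Px2 p) (-X) X y0 y1 (by linarith) hy01.le
        (bi _ (cx1.add cx2))
      refine this.trans ?_
      rw [intervalIntegral.integral_congr (g := fun _ => (0:ℝ))]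
      · simp
      intro y _
      simp only
      rw [intervalIntegral.integral_eq_sub_of_hasDerivAt
        (f := fun x => if (x, y) ∈ N then Ψ (V (x, y) - c) * Vx (x, y) else 0)]
      · rw [van Ψ Ψl _ _ (outx X y (Or.inr le_rfl)), van Ψ Ψl _ _ (outx (-X) y (Or.inl le_rfl))]
        simp
      · intro x _
        exact ext_deriv N L hN hL hNL V c hLc Ψ g Ψd Ψl gl Vx (fun s => (s, y))
          (by fun_prop) Vx Vxx x (dx x y) (dxx x y)
      · exact ((cx1.add cx2).comp (by fun_prop : Continuous fun x : ℝ => (x, y))).intervalIntegrable _ _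
    have ey : ∫ p in B, (Py1 p + Py2 p) = 0 := by
      have := box_xy (fun p => Py1 p + Py2 p) (-X) X y0 y1 (by linarith) hy01.le
        (bi _ (cy1.add cy2))
      refine this.trans ?_
      rw [intervalIntegral.integral_congr (g := fun _ => (0:ℝ))]
      · simp
      intro x _
      simp only
      rw [intervalIntegral.integral_eq_sub_of_hasDerivAt
        (f := fun y => if (x, y) ∈ N then Ψ (V (x, y) - c) * Vy (x, y) else 0)]
      · rw [van Ψ Ψl _ _ (outy x y1 (Or.inr le_rfl)), van Ψ Ψl _ _ (outy x y0 (Or.inl le_rfl))]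
        simp
      · intro y _
        exact ext_deriv N L hN hL hNL V c hLc Ψ g Ψd Ψl gl Vy (fun s => (x, s))
          (by fun_prop) Vy Vyy y (dy x y) (dyy x y)
      · exact ((cy1.add cy2).comp (by fun_prop : Continuous fun y : ℝ => (x, y))).intervalIntegrable _ _
    have hEn : ∫ p in B, (Px1 p + Py1 p) ≤ a := by
      have e1 : ∫ p in B, (Px1 p + Py1 p) = ∫ p in B, -(Px2 p + Py2 p) := by
        rw [integral_add (bi _ cx1) (bi _ cx2)] at ex
        rw [integral_add (bi _ cy1) (bi _ cy2)] at ey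
        rw [integral_neg, integral_add (bi _ cx1) (bi _ cy1), integral_add (bi _ cx2) (bi _ cy2)]
        linarith
      have e2 : ∫ p in B, -(Px2 p + Py2 p) = ∫ p in A, -(Px2 p + Py2 p) := by
        refine setIntegral_eq_of_subset_of_forall_sdiff_eq_zero hBm hAB ?_
        intro p hp
        simp only [hPx2, hPy2]
        rw [van Ψ Ψl _ p hp.2, van Ψ Ψl _ p hp.2]; simp
      rw [e1, e2, ha]
      refine setIntegral_mono_on ((bi _ (cx2.add cy2).neg).mono_set hAB) (hyint.mono_set hAB) hAm ?_
      intro p hp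
      simp only [hPx2, hPy2, hp.1, if_true]
      have : -(Ψ (V p - c) * Vxx p + Ψ (V p - c) * Vyy p) = Ψ (V p - c) * (1 / p.2 ^ 2) := by
        rw [← mul_add, hlap p hp.1]; ring
      rw [this]
      exact mul_le_of_le_one_left (by positivity) (Ψ1 _)
    -- Cauchy-Schwarz
    set gd : ℝ × ℝ → ℝ := fun p => if p ∈ N then g (V p - c) * 1 else 0 with hgd
    have gdc : Continuous gd := EC g gc gl _ one_c
    have i2 : IntegrableOn (fun p => gd p * (1 / p.2 ^ 2)) B := by
      apply box_int
      apply gdc.continuousOn.mul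
      apply ContinuousOn.div continuousOn_const (by fun_prop)
      intro p hp
      have : 0 < p.2 := lt_of_lt_of_le hy0 hp.2.1
      positivity
    have i3 : IntegrableOn (fun p : ℝ × ℝ => Real.sqrt (Ux p ^ 2 + Uy p ^ 2) / p.2) B := by
      apply box_int
      apply ContinuousOn.div (by fun_prop) (by fun_prop)
      intro p hp
      have : 0 < p.2 := lt_of_lt_of_le hy0 hp.2.1
      exact this.ne'
    have hG2 : ∫ p in B, gd p * (1 / p.2 ^ 2) ≤ (1 + ε) / (c' - c) * (a - a') := by
      have e2 : ∫ p in B, gd p * (1 / p.2 ^ 2) = ∫ p in A \ A', gd p * (1 / p.2 ^ 2) := by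
        refine setIntegral_eq_of_subset_of_forall_sdiff_eq_zero hBm (Set.sdiff_subset.trans hAB) ?_
        intro p hp
        have : gd p = 0 := by
          by_cases hpA : p ∈ A
          · have hpA' : p ∈ A' := by
              by_contra hc; exact hp.2 ⟨hpA, hc⟩
            simp only [hgd, hpA.1, if_true]
            rw [gr _ (by linarith [hpA'.2])]; ring
          · exact van g gl (fun _ => 1) p hpA
        simp [this]
      rw [e2, hdiff, ← integral_const_mul]
      refine setIntegral_mono_on (i2.mono_set (Set.sdiff_subset.trans hAB))
        ((hyint.mono_set (Set.sdiff_subset.trans hAB)).const_mul _) (hAm.diff hAm') ?_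
      intro p hp
      simp only [hgd, hp.1.1, if_true, mul_one]
      exact mul_le_mul_of_nonneg_right (gu _) (by positivity)
    have hCS : (∫ p in B, Real.sqrt (Ux p ^ 2 + Uy p ^ 2) / p.2) ^ 2 ≤
        (∫ p in B, (Px1 p + Py1 p)) * ∫ p in B, gd p * (1 / p.2 ^ 2) := by
      set I1 := ∫ p in B, (Px1 p + Py1 p)
      set I2 := ∫ p in B, gd p * (1 / p.2 ^ 2)
      set I3 := ∫ p in B, Real.sqrt (Ux p ^ 2 + Uy p ^ 2) / p.2
      have hq : ∀ l : ℝ, 0 ≤ I1 * (l * l) + (-2 * I3) * l + I2 := by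
        intro l
        have : I1 * (l * l) + (-2 * I3) * l + I2 = ∫ p in B, ((l * l) * (Px1 p + Py1 p) +
            (-2 * l) * (Real.sqrt (Ux p ^ 2 + Uy p ^ 2) / p.2) + gd p * (1 / p.2 ^ 2)) := by
          have j1 : IntegrableOn (fun p => (l * l) * (Px1 p + Py1 p)) B :=
            (bi _ (cx1.add cy1)).const_mul _
          have j3 : IntegrableOn (fun p : ℝ × ℝ =>
            (-2 * l) * (Real.sqrt (Ux p ^ 2 + Uy p ^ 2) / p.2)) B := i3.const_mul _
          have j4 : IntegrableOn (fun p : ℝ × ℝ => (l * l) * (Px1 p + Py1 p) +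
            (-2 * l) * (Real.sqrt (Ux p ^ 2 + Uy p ^ 2) / p.2)) B := j1.add j3
          rw [integral_add j4 i2, integral_add j1 j3,
            integral_const_mul, integral_const_mul]
          ring
        rw [this]
        refine setIntegral_nonneg hBm ?_
        intro p hp
        by_cases hpN : p ∈ N
        · simp only [hPx1, hPy1, hUx, hUy, hgd, hpN, if_true]
          have e : (g (V p - c) * Vx p) ^ 2 + (g (V p - c) * Vy p) ^ 2 =
            (g (V p - c)) ^ 2 * (Vx p ^ 2 + Vy p ^ 2) := by ring
          rw [e, Real.sqrt_mul (by positivity), Real.sqrt_sq (g0 _)]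
          set Q := Real.sqrt (Vx p ^ 2 + Vy p ^ 2) with hQ
          have hQ2 : Q ^ 2 = Vx p ^ 2 + Vy p ^ 2 := Real.sq_sqrt (by positivity)
          have : l * l * (g (V p - c) * (Vx p * Vx p) + g (V p - c) * (Vy p * Vy p)) +
            -2 * l * (g (V p - c) * Q / p.2) + g (V p - c) * 1 * (1 / p.2 ^ 2) =
            g (V p - c) * (l * Q - 1 / p.2) ^ 2 := by
            have : l * l * (g (V p - c) * (Vx p * Vx p) + g (V p - c) * (Vy p * Vy p)) =
              l * l * g (V p - c) * Q ^ 2 := by rw [hQ2]; ring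
            rw [this]; ring
          rw [this]
          exact mul_nonneg (g0 _) (sq_nonneg _)
        · simp [hPx1, hPy1, hUx, hUy, hgd, hpN]
      have := discrim_le_zero hq
      unfold discrim at this
      nlinarith
    have hI1 : 0 ≤ ∫ p in B, gd p * (1 / p.2 ^ 2) := by
      refine setIntegral_nonneg hBm ?_
      intro p _
      apply mul_nonneg _ (by positivity)
      simp only [hgd]; split_ifs
      · simpa using g0 _
      · exact le_rfl
    have ha0 : 0 ≤ a := by linarith
    calc _ ≤ (∫ p in B, Real.sqrt (Ux p ^ 2 + Uy p ^ 2) / p.2) ^ 2 :=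
          pow_le_pow_left₀ (by linarith) ISO 2
      _ ≤ _ := hCS
      _ ≤ a * ∫ p in B, gd p * (1 / p.2 ^ 2) := mul_le_mul_of_nonneg_right hEn hI1
      _ ≤ _ := mul_le_mul_of_nonneg_left hG2 ha0
  -- limit
  have ha0 : 0 ≤ a * (a - a') := mul_nonneg (by linarith) hdnn
  apply le_of_forall_pos_le_add
  intro η hη
  have := key (η / (a * (a - a') + 1)) (by positivity)
  have h2 := mul_le_mul_of_nonneg_right this hδ.le
  refine h2.trans ?_
  have e : a * ((1 + η / (a * (a - a') + 1)) / (c' - c) * (a - a')) * (c' - c) =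
      a * (a - a') + η * (a * (a - a') / (a * (a - a') + 1)) := by
    have : a * (a - a') + 1 ≠ 0 := by positivity
    have : c' - c ≠ 0 := hδ.ne'
    field_simp
  rw [e]
  have : a * (a - a') / (a * (a - a') + 1) ≤ 1 := by
    rw [div_le_one (by positivity)]; linarith
  nlinarith



lemma hasDerivAt_log_norm (c : ℝ → ℂ) (c' : ℂ) (t : ℝ) (hc : HasDerivAt c c' t) (h0 : c t ≠ 0) :
    HasDerivAt (fun t => Real.log ‖c t‖) (c' / c t).re t := by
  have h1 : HasDerivAt (fun t => ‖c t‖ ^ 2) (2 * inner ℝ (c t) c') t := hc.norm_sq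
  have h2 := (h1.log (by positivity)).div_const 2
  refine (h2.congr_deriv ?_).congr_of_eventuallyEq ?_
  · have : (c' / c t).re = inner ℝ (c t) c' / ‖c t‖ ^ 2 := by
      rw [Complex.div_re, Complex.inner, ← Complex.normSq_eq_norm_sq]
      simp; ring
    rw [this]; field_simp
  · filter_upwards with s
    rw [Real.log_pow]; simp

lemma line_x (x y : ℝ) : HasDerivAt (fun s : ℝ => (s : ℂ) + y * Complex.I) 1 x := by
  have := (Complex.ofRealCLM.hasDerivAt (x := x)).add_const ((y:ℂ) * Complex.I)
  simpa using this

lemma line_y (x y : ℝ) : HasDerivAt (fun s : ℝ => (x : ℂ) + s * Complex.I) Complex.I y := by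
  have := ((Complex.ofRealCLM.hasDerivAt (x := y)).mul_const Complex.I).const_add (x:ℂ)
  simpa using this

/-- log of the weighted modulus in half-plane coordinates -/
noncomputable def Vfun (G : ℂ → ℂ) (γ : ℝ) (p : ℝ × ℝ) : ℝ :=
  γ * Real.log ‖G ((p.1 : ℂ) + p.2 * Complex.I)‖ + Real.log (4 * p.2) -
    2 * Real.log ‖(p.1 : ℂ) + p.2 * Complex.I + Complex.I‖

def Nset (G : ℂ → ℂ) : Set (ℝ × ℝ) := {p | 0 < p.2 ∧ G ((p.1 : ℂ) + p.2 * Complex.I) ≠ 0}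

lemma norm_zi (x y : ℝ) : ‖(x : ℂ) + y * Complex.I + Complex.I‖ ^ 2 = x ^ 2 + (y + 1) ^ 2 := by
  rw [← Complex.normSq_eq_norm_sq, Complex.normSq_apply]; simp; ring

lemma V_box (G : ℂ → ℂ) (C : ℝ)
    (hG : ∀ z : ℂ, 0 < z.im → ‖G z‖ ≤ C) (γ : ℝ) (hγ : 0 < γ) (c : ℝ) :
    ∃ M : ℝ, 1 < M ∧ ∀ p ∈ Nset G, c < Vfun G γ p →
      p.1 ∈ Set.Ioo (-M) M ∧ p.2 ∈ Set.Ioo M⁻¹ M := by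
  set D := Real.exp (γ * Real.log C + Real.log 4 - c) with hD
  have hDpos : 0 < D := Real.exp_pos _
  refine ⟨D + 1, by linarith, ?_⟩
  rintro ⟨x, y⟩ ⟨hy, hne⟩ hV
  simp only at hy hne
  have him : 0 < ((x : ℂ) + y * Complex.I).im := by simpa using hy
  have hle : Real.log ‖G ((x : ℂ) + y * Complex.I)‖ ≤ Real.log C :=
    Real.log_le_log (norm_pos_iff.2 hne) (hG _ him)
  have hq : 0 < x ^ 2 + (y + 1) ^ 2 := by positivity
  have hl : 2 * Real.log ‖(x : ℂ) + y * Complex.I + Complex.I‖ = Real.log (x ^ 2 + (y + 1) ^ 2) := by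
    rw [← norm_zi, Real.log_pow]; simp
  unfold Vfun at hV
  simp only [hl] at hV
  rw [Real.log_mul (by norm_num) hy.ne'] at hV
  have h1 : Real.log (x ^ 2 + (y + 1) ^ 2) < Real.log (D * y) := by
    rw [Real.log_mul hDpos.ne' hy.ne', hD, Real.log_exp]
    nlinarith
  have h2 : x ^ 2 + (y + 1) ^ 2 < D * y := (Real.log_lt_log_iff hq (by positivity)).1 h1
  have hyD : y < D := by nlinarith [sq_nonneg x]
  refine ⟨?_, ?_, ?_⟩
  · have : x ^ 2 < (D + 1) ^ 2 := by nlinarith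
    exact abs_lt.1 (abs_lt_of_sq_lt_sq this (by linarith))
  · simp only
    rw [inv_lt_iff_one_lt_mul₀ (by linarith)]
    nlinarith [sq_nonneg x]
  · simp only; linarith

lemma halfplane (G : ℂ → ℂ) (hGd : DifferentiableOn ℂ G {z | 0 < z.im}) (C : ℝ)
    (hG : ∀ z : ℂ, 0 < z.im → ‖G z‖ ≤ C) (γ : ℝ) (hγ : 0 < γ) :
    (∀ t, MeasurableSet {p | p ∈ Nset G ∧ t < Vfun G γ p}) ∧
    (∀ t, IntegrableOn (fun p : ℝ × ℝ => 1 / p.2 ^ 2) {p | p ∈ Nset G ∧ t < Vfun G γ p}) ∧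
    ∀ t0 t1, t0 < t1 → 0 < (∫ p in {p | p ∈ Nset G ∧ t1 < Vfun G γ p}, 1 / p.2 ^ 2) →
      (4 * Real.pi + ∫ p in {p | p ∈ Nset G ∧ t1 < Vfun G γ p}, 1 / p.2 ^ 2) * Real.exp (t1 - t0) ≤
      4 * Real.pi + ∫ p in {p | p ∈ Nset G ∧ t0 < Vfun G γ p}, 1 / p.2 ^ 2 := by
  set Z : ℝ × ℝ → ℂ := fun p => (p.1 : ℂ) + p.2 * Complex.I with hZ
  have hZc : Continuous Z := by fun_prop
  have hZim : ∀ p, (Z p).im = p.2 := fun p => by simp [hZ]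
  have hHo : IsOpen {z : ℂ | 0 < z.im} := isOpen_lt continuous_const Complex.continuous_im
  set O : Set ℂ := {z | 0 < z.im ∧ G z ≠ 0} with hO
  have hOo : IsOpen O := hGd.continuousOn.isOpen_inter_preimage hHo isOpen_compl_singleton
  have hNe : Nset G = Z ⁻¹' O := by
    ext p; simp [Nset, hO, hZ]
  have hNo : IsOpen (Nset G) := by rw [hNe]; exact hOo.preimage hZc
  have hGO : DifferentiableOn ℂ G O := hGd.mono fun z hz => hz.1
  have hzi : ∀ z ∈ O, z + Complex.I ≠ 0 := by
    intro z hz h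
    have : (z + Complex.I).im = 0 := by rw [h]; simp
    simp at this; linarith [hz.1]
  set Λ : ℂ → ℂ := fun z => γ * (deriv G z / G z) - 2 / (z + Complex.I) with hΛ
  have hΛd : DifferentiableOn ℂ Λ O := by
    have h1 : DifferentiableOn ℂ (deriv G) O := hGO.deriv hOo
    have h2 : DifferentiableOn ℂ (fun z => deriv G z / G z) O := h1.div hGO (fun z hz => hz.2)
    have h3 : DifferentiableOn ℂ (fun z : ℂ => 2 / (z + Complex.I)) O :=
      (differentiableOn_const _).div (by fun_prop) hzi
    exact (h2.const_mul _).sub h3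
  have hmap : Set.MapsTo Z (Nset G) O := fun p hp => by rw [hNe] at hp; exact hp
  have hΛc : ContinuousOn (fun p => Λ (Z p)) (Nset G) := hΛd.continuousOn.comp hZc.continuousOn hmap
  have hΛ'c : ContinuousOn (fun p => deriv Λ (Z p)) (Nset G) :=
    (hΛd.deriv hOo).continuousOn.comp hZc.continuousOn hmap
  have hyne : ∀ p ∈ Nset G, p.2 ≠ 0 := fun p hp => hp.1.ne'
  have hyc : ContinuousOn (fun p : ℝ × ℝ => 1 / p.2) (Nset G) :=
    continuousOn_const.div (by fun_prop) hyne
  have hyc2 : ContinuousOn (fun p : ℝ × ℝ => 1 / p.2 ^ 2) (Nset G) :=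
    continuousOn_const.div (by fun_prop) (fun p hp => pow_ne_zero _ (hyne p hp))
  have hGc : ContinuousOn (fun p => G (Z p)) (Nset G) := hGO.continuousOn.comp hZc.continuousOn hmap
  have hVc : ContinuousOn (Vfun G γ) (Nset G) := by
    unfold Vfun
    refine ContinuousOn.sub (ContinuousOn.add ?_ ?_) ?_
    · refine ContinuousOn.mul continuousOn_const (ContinuousOn.log hGc.norm ?_)
      intro p hp
      exact norm_ne_zero_iff.2 (hmap hp).2
    · refine ContinuousOn.log (by fun_prop) ?_
      intro p hp
      have := hp.1
      positivity
    · refine ContinuousOn.mul continuousOn_const (ContinuousOn.log ?_ ?_)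
      · fun_prop
      · intro p hp
        exact norm_ne_zero_iff.2 (hzi _ (hmap hp))
  have hmeas : ∀ t, MeasurableSet {p | p ∈ Nset G ∧ t < Vfun G γ p} := fun t =>
    (hVc.isOpen_inter_preimage hNo (isOpen_Ioi (a := t))).measurableSet
  have hint : ∀ t, IntegrableOn (fun p : ℝ × ℝ => 1 / p.2 ^ 2) {p | p ∈ Nset G ∧ t < Vfun G γ p} := by
    intro t
    obtain ⟨M, hM, hMb⟩ := V_box G C hG γ hγ t
    have : IntegrableOn (fun p : ℝ × ℝ => 1 / p.2 ^ 2) (Set.Icc (-M) M ×ˢ Set.Icc M⁻¹ M) := by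
      apply box_int
      apply ContinuousOn.div continuousOn_const (by fun_prop)
      intro p hp
      have : 0 < p.2 := lt_of_lt_of_le (by positivity) hp.2.1
      positivity
    refine this.mono_set ?_
    intro p hp
    have := hMb p hp.1 hp.2
    exact ⟨⟨this.1.1.le, this.1.2.le⟩, ⟨this.2.1.le, this.2.2.le⟩⟩
  refine ⟨hmeas, hint, ?_⟩
  intro t0 t1 ht hpos
  refine layering (4 * Real.pi) (by positivity)
    (fun t => ∫ p in {p | p ∈ Nset G ∧ t < Vfun G γ p}, 1 / p.2 ^ 2) t0 t1 ht ?_ hpos ?_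
  · intro s t _ hst _
    refine setIntegral_mono_set (hint s) ?_ ?_
    · filter_upwards with p
      simp only [Pi.zero_apply]; positivity
    · apply Filter.Eventually.of_forall
      intro p hp
      exact ⟨hp.1, lt_of_le_of_lt hst hp.2⟩
  intro s t hs hst htt hle
  obtain ⟨M, hM, hMb⟩ := V_box G C hG γ hγ s
  have hM1 : M⁻¹ < 1 := inv_lt_one_of_one_lt₀ hM
  set L : Set (ℝ × ℝ) := {p | p.2 < M⁻¹} ∪ {p | 0 < p.2 ∧
    ‖G (Z p)‖ ^ γ * (4 * p.2) < Real.exp s * ‖Z p + Complex.I‖ ^ 2} with hL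
  have hHo2 : IsOpen {p : ℝ × ℝ | 0 < p.2} := isOpen_lt continuous_const continuous_snd
  have hGc2 : ContinuousOn (fun p => G (Z p)) {p : ℝ × ℝ | 0 < p.2} :=
    hGd.continuousOn.comp hZc.continuousOn (fun p hp => by
      show 0 < (Z p).im
      rw [hZim]; exact hp)
  have hLo : IsOpen L := by
    refine (isOpen_lt continuous_snd continuous_const).union ?_
    have hc : ContinuousOn (fun p => Real.exp s * ‖Z p + Complex.I‖ ^ 2 -
        ‖G (Z p)‖ ^ γ * (4 * p.2)) {p : ℝ × ℝ | 0 < p.2} := by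
      refine ContinuousOn.sub (by fun_prop) ?_
      refine ContinuousOn.mul (hGc2.norm.rpow_const (fun p _ => Or.inr hγ.le)) (by fun_prop)
    have := hc.isOpen_inter_preimage hHo2 (isOpen_Ioi (a := (0:ℝ)))
    convert this using 1
    ext p; simp
  have key := energy M M⁻¹ M (by linarith) (by positivity) (by linarith) (Nset G) L hNo hLo ?_
    (Vfun G γ) (fun p => (Λ (Z p)).re) (fun p => -(Λ (Z p)).im + 1 / p.2)
    (fun p => (deriv Λ (Z p)).re) (fun p => -(deriv Λ (Z p)).re - 1 / p.2 ^ 2)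
    hVc (Complex.continuous_re.comp_continuousOn hΛc)
    ((Complex.continuous_im.comp_continuousOn hΛc).neg.add hyc)
    (Complex.continuous_re.comp_continuousOn hΛ'c)
    ((Complex.continuous_re.comp_continuousOn hΛ'c).neg.sub hyc2)
    ?_ ?_ ?_ ?_ ?_ s t hst ?_ hMb _ _ rfl rfl ?_ hle
  · exact key
  · intro p
    by_cases h1 : 0 < p.2
    · by_cases h2 : G (Z p) = 0
      · right; right
        refine ⟨h1, ?_⟩
        rw [h2, norm_zero, Real.zero_rpow hγ.ne', zero_mul]
        have : Z p + Complex.I ≠ 0 := by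
          intro h
          have h3 : (Z p + Complex.I).im = 0 := by rw [h]; simp
          rw [Complex.add_im, hZim] at h3
          simp at h3; linarith
        have := norm_pos_iff.2 this
        positivity
      · left; exact ⟨h1, h2⟩
    · right; left
      exact lt_of_le_of_lt (not_lt.1 h1) (by positivity)
  · -- dx
    intro x y hp
    have hzO := hmap hp
    have hGder : HasDerivAt (fun s : ℝ => G ((s : ℂ) + y * Complex.I)) (deriv G (Z (x, y)) * 1) x :=
      ((hGO.differentiableAt (hOo.mem_nhds hzO)).hasDerivAt).comp x (line_x x y)
    have h1 := (hasDerivAt_log_norm _ _ _ hGder hzO.2).const_mul γ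
    have h2 := (hasDerivAt_log_norm _ _ _ ((line_x x y).add_const Complex.I) (hzi _ hzO)).const_mul 2
    have h3 := (h1.add_const (Real.log (4 * y))).sub h2
    refine h3.congr_deriv ?_
    simp only [hΛ, Complex.sub_re, mul_one, Complex.re_ofReal_mul]
    congr 1
    rw [div_eq_mul_inv 2, one_div, show (2:ℂ) = ((2:ℝ):ℂ) by norm_num, Complex.re_ofReal_mul]
  · -- dy
    intro x y hp
    have hzO := hmap hp
    have hy : 0 < y := hp.1
    have hGder : HasDerivAt (fun s : ℝ => G ((x : ℂ) + s * Complex.I)) (deriv G (Z (x, y)) * Complex.I) y :=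
      ((hGO.differentiableAt (hOo.mem_nhds hzO)).hasDerivAt).comp y (line_y x y)
    have h1 := (hasDerivAt_log_norm _ _ _ hGder hzO.2).const_mul γ
    have h2 := (hasDerivAt_log_norm _ _ _ ((line_y x y).add_const Complex.I) (hzi _ hzO)).const_mul 2
    have h0 : HasDerivAt (fun s : ℝ => Real.log (4 * s)) (4 * 1 / (4 * y)) y :=
      ((hasDerivAt_id y).const_mul 4).log (by positivity)
    have h3 := (h1.add h0).sub h2
    refine h3.congr_deriv ?_
    have e1 : (deriv G (Z (x, y)) * Complex.I / G (Z (x, y))).re = -(deriv G (Z (x, y)) / G (Z (x, y))).im := by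
      rw [mul_div_right_comm]; simp
    have e2 : (Complex.I / (Z (x, y) + Complex.I)).re = -(1 / (Z (x, y) + Complex.I)).im := by
      rw [div_eq_mul_one_div]; simp
    have e3 : (2 / (Z (x, y) + Complex.I)).im = 2 * (1 / (Z (x, y) + Complex.I)).im := by
      rw [div_eq_mul_one_div, show (2:ℂ) = ((2:ℝ):ℂ) by norm_num, Complex.im_ofReal_mul]
    have e4 : (Λ (Z (x, y))).im = γ * (deriv G (Z (x, y)) / G (Z (x, y))).im -
        2 * (1 / (Z (x, y) + Complex.I)).im := by
      simp only [hΛ, Complex.sub_im, Complex.im_ofReal_mul, e3]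
    show γ * (deriv G (Z (x, y)) * Complex.I / G (Z (x, y))).re + 4 * 1 / (4 * y) -
      2 * (Complex.I / (Z (x, y) + Complex.I)).re = -(Λ (Z (x, y))).im + 1 / y
    rw [e1, e2, e4]
    field_simp
    ring
  · intro x y hp
    have hzO := hmap hp
    have hder : HasDerivAt (fun s : ℝ => Λ ((s : ℂ) + y * Complex.I)) (deriv Λ (Z (x, y)) * 1) x :=
      HasDerivAt.comp (h₂ := Λ) x ((hΛd.differentiableAt (hOo.mem_nhds hzO)).hasDerivAt) (line_x x y)
    have := Complex.reCLM.hasFDerivAt.comp_hasDerivAt x hder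
    refine HasDerivAt.congr_deriv (f := fun s : ℝ => (Λ (Z (s, y))).re) this ?_
    simp
  · intro x y hp
    have hzO := hmap hp
    have hy : 0 < y := hp.1
    have hder : HasDerivAt (fun s : ℝ => Λ ((x : ℂ) + s * Complex.I)) (deriv Λ (Z (x, y)) * Complex.I) y :=
      HasDerivAt.comp (h₂ := Λ) y ((hΛd.differentiableAt (hOo.mem_nhds hzO)).hasDerivAt) (line_y x y)
    have h1 := Complex.imCLM.hasFDerivAt.comp_hasDerivAt y hder
    have h2 := h1.neg.add ((hasDerivAt_const y (1:ℝ)).div (hasDerivAt_id y) hy.ne')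
    refine h2.congr_deriv ?_
    simp
    ring
  · intro p hp; ring
  · intro p hp hpL
    rcases hpL with h | h
    · by_contra hc
      have := (hMb p hp (not_le.1 hc)).2.1
      exact absurd h (not_lt.2 this.le)
    · have h1 : 0 < p.2 := hp.1
      have hg : 0 < ‖G (Z p)‖ := norm_pos_iff.2 (hmap hp).2
      have hz : 0 < ‖Z p + Complex.I‖ := norm_pos_iff.2 (hzi _ (hmap hp))
      have := Real.log_lt_log (by positivity) h.2
      rw [Real.log_mul (by positivity) (mul_pos (by norm_num) h1).ne',
        Real.log_mul (Real.exp_ne_zero s) (by positivity), Real.log_exp, Real.log_rpow hg, Real.log_pow] at this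
      show γ * Real.log ‖G (Z p)‖ + Real.log (4 * p.2) - 2 * Real.log ‖Z p + Complex.I‖ ≤ s
      push_cast at this
      linarith
  · refine lt_of_lt_of_le hpos ?_
    refine setIntegral_mono_set (hint t) ?_ ?_
    · filter_upwards with p
      simp only [Pi.zero_apply]; positivity
    · apply Filter.Eventually.of_forall
      intro p hp
      exact ⟨hp.1, lt_of_le_of_lt htt hp.2⟩



/-- hyperbolic measure -/
noncomputable def hyp : Measure ℂ :=
  (volume.restrict (ball (0 : ℂ) 1)).withDensity
    (fun z => ENNReal.ofReal (1 / (Real.pi * (1 - ‖z‖ ^ 2) ^ 2)))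

open Classical in
noncomputable def wfun (f : ℂ → ℂ) (γ : ℝ) (z : ℂ) : ℝ :=
  if z ∈ ball (0 : ℂ) 1 then ‖f z‖ ^ γ * (1 - ‖z‖ ^ 2) else 0

lemma wfun_meas (f : ℂ → ℂ) (hf : ContinuousOn f (ball 0 1)) (γ : ℝ) (hγ : 0 < γ) :
    Measurable (wfun f γ) := by
  classical
  have h1 : ContinuousOn (fun z => ‖f z‖ ^ γ * (1 - ‖z‖ ^ 2)) (ball (0:ℂ) 1) :=
    (hf.norm.rpow_const (fun p _ => Or.inr hγ.le)).mul (by fun_prop)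
  have h2 : ContinuousOn (fun _ : ℂ => (0:ℝ)) (ball (0:ℂ) 1)ᶜ := continuousOn_const
  have := h1.measurable_piecewise h2 measurableSet_ball
  exact this

noncomputable def cay (z : ℂ) : ℂ := (z - Complex.I) / (z + Complex.I)

lemma cay_ne (z : ℂ) (hz : 0 < z.im) : z + Complex.I ≠ 0 := by
  intro h
  have : (z + Complex.I).im = 0 := by rw [h]; simp
  simp at this; linarith

lemma cay_norm (z : ℂ) (hz : 0 < z.im) :
    1 - ‖cay z‖ ^ 2 = 4 * z.im / ‖z + Complex.I‖ ^ 2 := by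
  have h := norm_pos_iff.2 (cay_ne z hz)
  unfold cay
  rw [norm_div, div_pow, eq_div_iff (by positivity), sub_mul, div_mul_cancel₀ _ (by positivity)]
  rw [← Complex.normSq_eq_norm_sq, ← Complex.normSq_eq_norm_sq, Complex.normSq_apply,
    Complex.normSq_apply]
  simp; ring

lemma cay_mem (z : ℂ) (hz : 0 < z.im) : cay z ∈ ball (0:ℂ) 1 := by
  have h := cay_norm z hz
  have h' := norm_pos_iff.2 (cay_ne z hz)
  have : 0 < 1 - ‖cay z‖ ^ 2 := by rw [h]; positivity
  rw [mem_ball_zero_iff]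
  nlinarith [norm_nonneg (cay z)]

lemma cay_deriv (z : ℂ) (hz : 0 < z.im) :
    HasDerivAt cay (2 * Complex.I / (z + Complex.I) ^ 2) z := by
  have := ((hasDerivAt_id z).sub_const Complex.I).div ((hasDerivAt_id z).add_const Complex.I)
    (cay_ne z hz)
  refine this.congr_deriv ?_
  congr 1
  simp; ring

lemma cay_inj : Set.InjOn cay {z | 0 < z.im} := by
  intro z hz w hw h
  unfold cay at h
  rw [div_eq_div_iff (cay_ne z hz) (cay_ne w hw)] at h
  have : 2 * Complex.I * (z - w) = 0 := by linear_combination h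
  have h2 : z - w = 0 := by
    rcases mul_eq_zero.1 this with h3 | h3
    · simp at h3
    · exact h3
  exact sub_eq_zero.1 h2

lemma cay_surj (u : ℂ) (hu : u ∈ ball (0:ℂ) 1) : ∃ z : ℂ, 0 < z.im ∧ cay z = u := by
  rw [mem_ball_zero_iff] at hu
  have hu1 : 1 - u ≠ 0 := by
    intro h
    have : u = 1 := (sub_eq_zero.1 h).symm
    rw [this] at hu; simp at hu
  have him : 0 < (Complex.I * (1 + u) / (1 - u)).im := by
    have : (Complex.I * (1 + u) / (1 - u)).im = (1 - ‖u‖ ^ 2) / Complex.normSq (1 - u) := by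
      rw [Complex.div_im, ← Complex.normSq_eq_norm_sq, Complex.normSq_apply u]
      simp; ring
    rw [this]
    apply div_pos
    · nlinarith [norm_nonneg u]
    · exact Complex.normSq_pos.2 hu1
  refine ⟨_, him, ?_⟩
  have h0 := cay_ne _ him
  unfold cay
  rw [div_eq_iff h0]
  field_simp
  ring

lemma det_mul (c : ℂ) :
    ((ContinuousLinearMap.toSpanSingleton ℂ c).restrictScalars ℝ : ℂ →L[ℝ] ℂ).det = ‖c‖ ^ 2 := by
  rw [ContinuousLinearMap.det]
  have : (((ContinuousLinearMap.toSpanSingleton ℂ c).restrictScalars ℝ : ℂ →L[ℝ] ℂ) : ℂ →ₗ[ℝ] ℂ)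
      = Algebra.lmul ℝ ℂ c := by
    ext z <;> simp [mul_comm]
  rw [this, ← Complex.normSq_eq_norm_sq, ← Algebra.norm_complex_apply, Algebra.norm_apply]

lemma transfer (f : ℂ → ℂ) (hf : DifferentiableOn ℂ f (ball 0 1)) (γ : ℝ) (hγ : 0 < γ)
    (t : ℝ) (ht : 0 < t)
    (hm : MeasurableSet {p | p ∈ Nset (fun z => f (cay z)) ∧ Real.log t < Vfun (fun z => f (cay z)) γ p})
    (hint : IntegrableOn (fun p : ℝ × ℝ => 1 / p.2 ^ 2)
      {p | p ∈ Nset (fun z => f (cay z)) ∧ Real.log t < Vfun (fun z => f (cay z)) γ p}) :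
    hyp {z | t < wfun f γ z} = ENNReal.ofReal (1 / (4 * Real.pi) *
      ∫ p in {p | p ∈ Nset (fun z => f (cay z)) ∧ Real.log t < Vfun (fun z => f (cay z)) γ p},
        1 / p.2 ^ 2) := by
  set S := {p | p ∈ Nset (fun z => f (cay z)) ∧ Real.log t < Vfun (fun z => f (cay z)) γ p} with hS
  set SC : Set ℂ := Complex.measurableEquivRealProd ⁻¹' S with hSC
  have hpi := Real.pi_pos
  have hSCm : MeasurableSet SC := Complex.measurableEquivRealProd.measurable hm
  have hSCim : ∀ z ∈ SC, 0 < z.im := fun z hz => hz.1.1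
  have hmem : ∀ z : ℂ, 0 < z.im → (z ∈ SC ↔ t < wfun f γ (cay z)) := by
    intro z hz
    have hzi := norm_pos_iff.2 (cay_ne z hz)
    have e0 : ((z.re : ℂ) + z.im * Complex.I) = z := Complex.re_add_im z
    have hw : wfun f γ (cay z) = ‖f (cay z)‖ ^ γ * (4 * z.im / ‖z + Complex.I‖ ^ 2) := by
      unfold wfun; rw [if_pos (cay_mem z hz), cay_norm z hz]
    rw [hw]
    have hmm : z ∈ SC ↔ ((0 < z.im ∧ f (cay z) ≠ 0) ∧ Real.log t <
        γ * Real.log ‖f (cay z)‖ + Real.log (4 * z.im) - 2 * Real.log ‖z + Complex.I‖) := by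
      simp only [hSC, hS, Set.mem_preimage, Complex.measurableEquivRealProd_apply, Nset, Vfun,
        Set.mem_ofPred_eq, e0]
    rw [hmm]
    by_cases h0 : f (cay z) = 0
    · simp [h0, Real.zero_rpow hγ.ne', ht.le]
    · have hfp := norm_pos_iff.2 h0
      have hW : 0 < ‖f (cay z)‖ ^ γ * (4 * z.im / ‖z + Complex.I‖ ^ 2) := by positivity
      have hlog : Real.log (‖f (cay z)‖ ^ γ * (4 * z.im / ‖z + Complex.I‖ ^ 2)) =
          γ * Real.log ‖f (cay z)‖ + Real.log (4 * z.im) - 2 * Real.log ‖z + Complex.I‖ := by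
        rw [Real.log_mul (by positivity) (by positivity),
          Real.log_div (by positivity) (by positivity), Real.log_rpow hfp, Real.log_pow]
        push_cast
        ring
      rw [← Real.log_lt_log_iff ht hW, hlog]
      simp only [hz, h0, ne_eq, not_false_eq_true, true_and]
  have himg : cay '' SC = {z | t < wfun f γ z} := by
    ext u
    constructor
    · rintro ⟨z, hz, rfl⟩
      exact (hmem z (hSCim z hz)).1 hz
    · intro hu
      have hub : u ∈ ball (0:ℂ) 1 := by
        by_contra hc
        have : t < wfun f γ u := hu
        unfold wfun at this
        rw [if_neg hc] at this
        linarith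
      obtain ⟨z, hz, rfl⟩ := cay_surj u hub
      exact ⟨z, (hmem z hz).2 hu, rfl⟩
  have hsub : {z | t < wfun f γ z} ⊆ ball (0:ℂ) 1 := by
    rw [← himg]; rintro _ ⟨z, hz, rfl⟩; exact cay_mem z (hSCim z hz)
  have hmeasW : MeasurableSet {z | t < wfun f γ z} :=
    measurableSet_lt measurable_const (wfun_meas f hf.continuousOn γ hγ)
  unfold hyp
  rw [withDensity_apply _ hmeasW, Measure.restrict_restrict hmeasW, Set.inter_eq_left.2 hsub, ← himg]
  rw [lintegral_image_eq_lintegral_abs_det_fderiv_mul volume hSCm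
    (f' := fun z => (ContinuousLinearMap.toSpanSingleton ℂ (2 * Complex.I / (z + Complex.I) ^ 2)).restrictScalars ℝ)
    (fun z hz => ((cay_deriv z (hSCim z hz)).hasFDerivAt.restrictScalars ℝ).hasFDerivWithinAt)
    (cay_inj.mono hSCim)]
  have e1 : ∫⁻ z in SC, ENNReal.ofReal |((ContinuousLinearMap.toSpanSingleton ℂ
      (2 * Complex.I / (z + Complex.I) ^ 2)).restrictScalars ℝ : ℂ →L[ℝ] ℂ).det| *
      ENNReal.ofReal (1 / (Real.pi * (1 - ‖cay z‖ ^ 2) ^ 2)) =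
      ∫⁻ z in SC, (fun p : ℝ × ℝ => ENNReal.ofReal (1 / (4 * Real.pi) * (1 / p.2 ^ 2)))
        (Complex.measurableEquivRealProd z) := by
    refine setLIntegral_congr_fun hSCm ?_
    intro z hz
    have hy := hSCim z hz
    have hzi := norm_pos_iff.2 (cay_ne z hy)
    simp only
    rw [det_mul, ← ENNReal.ofReal_mul (by positivity), cay_norm z hy]
    congr 1
    rw [abs_of_nonneg (by positivity), norm_div, norm_mul, norm_pow, Complex.norm_I]
    simp only [Complex.norm_two, Complex.measurableEquivRealProd_apply]
    field_simp
    norm_num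
  have hmeas : Measurable (fun p : ℝ × ℝ => ENNReal.ofReal (1 / (4 * Real.pi) * (1 / p.2 ^ 2))) := by
    have : Measurable (fun p : ℝ × ℝ => (1 / (4 * Real.pi) * (1 / p.2 ^ 2))) := by fun_prop
    exact this.ennreal_ofReal
  have e2 := Complex.volume_preserving_equiv_real_prod.setLIntegral_comp_preimage hm hmeas
  rw [e1]
  refine e2.trans ?_
  rw [← ofReal_integral_eq_lintegral_ofReal (hint.const_mul _), integral_const_mul]
  filter_upwards with p
  simp only [Pi.zero_apply]; positivity

lemma kulikov (f : ℂ → ℂ) (hf : DifferentiableOn ℂ f (ball 0 1)) (C : ℝ)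
    (hC : ∀ z ∈ ball (0:ℂ) 1, ‖f z‖ ≤ C) (γ : ℝ) (hγ : 0 < γ) (α β : ℝ) (hα : 1 < α) (hβ : α < β)
    (hIα : Integrable (fun x => wfun f γ x ^ α) hyp)
    (hIβ : Integrable (fun x => wfun f γ x ^ β) hyp) :
    (β - 1) * ∫ x, wfun f γ x ^ β ∂hyp ≤ ((α - 1) * ∫ x, wfun f γ x ^ α ∂hyp) ^ (β / α) := by
  have hpi := Real.pi_pos
  have hGd : DifferentiableOn ℂ (fun z => f (cay z)) {z | 0 < z.im} :=
    hf.comp (fun z hz => (cay_deriv z hz).differentiableAt.differentiableWithinAt)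
      (fun z hz => cay_mem z hz)
  obtain ⟨hm, hi, hmain⟩ := halfplane (fun z => f (cay z)) hGd C
    (fun z hz => hC _ (cay_mem z hz)) γ hγ
  have htr := fun t ht => transfer f hf γ hγ t ht (hm _) (hi _)
  have hnn : ∀ t, 0 ≤ ∫ p in {p | p ∈ Nset (fun z => f (cay z)) ∧ t < Vfun (fun z => f (cay z)) γ p},
        1 / p.2 ^ 2 := fun t => setIntegral_nonneg (hm t) (fun p _ => by positivity)
  have hC0 : 0 ≤ C := (norm_nonneg _).trans (hC 0 (by simp))
  refine dist_compare hyp (wfun f γ) (wfun_meas f hf.continuousOn γ hγ) ?_ (C ^ γ) ?_ ?_ α β hα hβ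
    hIα hIβ ?_
  · intro z
    unfold wfun
    split_ifs with h
    · rw [mem_ball_zero_iff] at h
      apply mul_nonneg (by positivity)
      nlinarith [norm_nonneg z]
    · exact le_rfl
  · intro z
    unfold wfun
    split_ifs with h
    · have h1 : ‖f z‖ ^ γ ≤ C ^ γ := Real.rpow_le_rpow (norm_nonneg _) (hC z h) hγ.le
      have h2 : 0 ≤ ‖f z‖ ^ γ := by positivity
      nlinarith [sq_nonneg ‖z‖]
    · positivity
  · intro t ht
    rw [htr t ht]; exact ENNReal.ofReal_ne_top
  · intro s t hs hst hpos
    have hr : ∀ t, 0 < t → hyp.real {z | t < wfun f γ z} = 1 / (4 * Real.pi) *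
      ∫ p in {p | p ∈ Nset (fun z => f (cay z)) ∧ Real.log t < Vfun (fun z => f (cay z)) γ p},
        1 / p.2 ^ 2 := by
      intro t ht
      rw [Measure.real, htr t ht, ENNReal.toReal_ofReal]
      exact mul_nonneg (by positivity) (hnn _)
    have ht := hs.trans hst
    rw [hr t ht] at hpos ⊢
    rw [hr s hs]
    have h1 := hmain (Real.log s) (Real.log t) (Real.log_lt_log hs hst)
      (by by_contra hc
          have := le_antisymm (not_lt.1 hc) (hnn _)
          rw [this] at hpos; simp at hpos)
    rw [Real.exp_sub, Real.exp_log ht, Real.exp_log hs] at h1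
    set A := ∫ p in {p | p ∈ Nset (fun z => f (cay z)) ∧ Real.log t < Vfun (fun z => f (cay z)) γ p},
        1 / p.2 ^ 2
    set A' := ∫ p in {p | p ∈ Nset (fun z => f (cay z)) ∧ Real.log s < Vfun (fun z => f (cay z)) γ p},
        1 / p.2 ^ 2
    rw [mul_div_assoc', div_le_iff₀ hs] at h1
    have h2 : t * (1 + 1 / (4 * Real.pi) * A) = ((4 * Real.pi + A) * t) / (4 * Real.pi) := by
      field_simp
    have h3 : s * (1 + 1 / (4 * Real.pi) * A') = ((4 * Real.pi + A') * s) / (4 * Real.pi) := by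
      field_simp
    rw [h2, h3]
    exact div_le_div_of_nonneg_right h1 (by positivity)



lemma line_cont (T : ℝ) (u : ℂ → ℝ) (hu : ContinuousOn u {z | z.re < T}) (t : ℝ) (ht : t < T) :
    Continuous (fun θ : ℝ => u (t + θ * Complex.I)) := by
  have h : Continuous (fun θ : ℝ => ((t : ℂ) + θ * Complex.I)) := by fun_prop
  exact hu.comp_continuous h (fun θ => by simpa using ht)

lemma mean_deriv (T : ℝ) (u v : ℂ → ℝ) (hu : ContinuousOn u {z | z.re < T})
    (hv : ContinuousOn v {z | z.re < T})
    (hd : ∀ t θ : ℝ, t < T → HasDerivAt (fun s : ℝ => u (s + θ * Complex.I)) (v (t + θ * Complex.I)) t)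
    (t : ℝ) (ht : t < T) :
    HasDerivAt (fun s : ℝ => ∫ θ in (-Real.pi)..Real.pi, u (s + θ * Complex.I))
      (∫ θ in (-Real.pi)..Real.pi, v (t + θ * Complex.I)) t := by
  set d := (T - t) / 2 with hdd
  have hd0 : 0 < d := by rw [hdd]; linarith
  have hK : IsCompact ((Set.Icc (t - d) (t + d)) ×ˢ (Set.Icc (-Real.pi) Real.pi)) :=
    isCompact_Icc.prod isCompact_Icc
  have hvc : ContinuousOn (fun p : ℝ × ℝ => v (p.1 + p.2 * Complex.I))
      ((Set.Icc (t - d) (t + d)) ×ˢ (Set.Icc (-Real.pi) Real.pi)) := by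
    refine hv.comp (by fun_prop) ?_
    intro p hp
    have := hp.1.2
    simp only [Set.mem_ofPred_eq]
    simp
    rw [hdd] at this; linarith
  obtain ⟨C, hC⟩ := hK.exists_bound_of_continuousOn hvc
  have hpi := Real.pi_pos
  refine (intervalIntegral.hasDerivAt_integral_of_dominated_loc_of_deriv_le
    (F := fun (s : ℝ) (θ : ℝ) => u (s + θ * Complex.I))
    (F' := fun (s : ℝ) (θ : ℝ) => v (s + θ * Complex.I))
    (s := Set.Ioo (t - d) (t + d)) (bound := fun _ => C) (Ioo_mem_nhds (by linarith) (by linarith))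
    ?_ ?_ ?_ ?_ ?_ ?_).2
  · filter_upwards [Iio_mem_nhds ht] with s hs
    exact (line_cont T u hu s hs).aestronglyMeasurable
  · exact (line_cont T u hu t ht).intervalIntegrable _ _
  · exact (line_cont T v hv t ht).aestronglyMeasurable
  · filter_upwards with θ hθ s hs
    rw [Set.uIoc_of_le (by linarith)] at hθ
    exact hC (s, θ) ⟨⟨hs.1.le, hs.2.le⟩, ⟨hθ.1.le, hθ.2⟩⟩
  · exact intervalIntegrable_const
  · filter_upwards with θ hθ s hs
    refine hd s θ ?_
    have := hs.2
    rw [hdd] at this; linarith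

/-- real inner product -/
noncomputable def ip (w z : ℂ) : ℝ := w.re * z.re + w.im * z.im

lemma ip_deriv {a b : ℝ → ℂ} {a' b' : ℂ} {s : ℝ} (ha : HasDerivAt a a' s) (hb : HasDerivAt b b' s) :
    HasDerivAt (fun s => ip (a s) (b s)) (ip a' (b s) + ip (a s) b') s := by
  have h1 := Complex.reCLM.hasFDerivAt.comp_hasDerivAt s ha
  have h2 := Complex.imCLM.hasFDerivAt.comp_hasDerivAt s ha
  have h3 := Complex.reCLM.hasFDerivAt.comp_hasDerivAt s hb
  have h4 := Complex.imCLM.hasFDerivAt.comp_hasDerivAt s hb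
  have := (h1.mul h3).add (h2.mul h4)
  refine this.congr_deriv ?_
  simp [ip]; ring

lemma ip_cont {X : Type*} [TopologicalSpace X] {a b : X → ℂ} {S : Set X} (ha : ContinuousOn a S)
    (hb : ContinuousOn b S) : ContinuousOn (fun s => ip (a s) (b s)) S := by
  unfold ip
  have h1 := Complex.continuous_re.comp_continuousOn ha
  have h2 := Complex.continuous_im.comp_continuousOn ha
  have h3 := Complex.continuous_re.comp_continuousOn hb
  have h4 := Complex.continuous_im.comp_continuousOn hb
  exact (h1.mul h3).add (h2.mul h4)

structure Dat (T : ℝ) (g g1 g2 : ℂ → ℂ) : Prop where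
  d1 : ∀ z : ℂ, z.re < T → HasDerivAt g (g1 z) z
  d2 : ∀ z : ℂ, z.re < T → HasDerivAt g1 (g2 z) z
  c2 : ContinuousOn g2 {z | z.re < T}
  p0 : ∀ t : ℝ, g (t + Real.pi * Complex.I) = g (t + (-Real.pi : ℝ) * Complex.I)
  p1 : ∀ t : ℝ, g1 (t + Real.pi * Complex.I) = g1 (t + (-Real.pi : ℝ) * Complex.I)

lemma Dat.c0 {T : ℝ} {g g1 g2 : ℂ → ℂ} (h : Dat T g g1 g2) : ContinuousOn g {z | z.re < T} :=
  fun z hz => (h.d1 z hz).continuousAt.continuousWithinAt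

lemma Dat.c1 {T : ℝ} {g g1 g2 : ℂ → ℂ} (h : Dat T g g1 g2) : ContinuousOn g1 {z | z.re < T} :=
  fun z hz => (h.d2 z hz).continuousAt.continuousWithinAt

structure Wt (W W1 W2 : ℝ → ℝ) : Prop where
  d1 : ∀ x, 0 ≤ x → HasDerivAt W (W1 x) x
  d2 : ∀ x, 0 ≤ x → HasDerivAt W1 (W2 x) x
  c2 : ContinuousOn W2 (Set.Ici 0)

lemma Wt.c0 {W W1 W2 : ℝ → ℝ} (h : Wt W W1 W2) : ContinuousOn W (Set.Ici 0) :=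
  fun z hz => (h.d1 z hz).continuousAt.continuousWithinAt

lemma Wt.c1 {W W1 W2 : ℝ → ℝ} (h : Wt W W1 W2) : ContinuousOn W1 (Set.Ici 0) :=
  fun z hz => (h.d2 z hz).continuousAt.continuousWithinAt

lemma ip_self_nonneg (z : ℂ) : 0 ≤ ip z z := by
  unfold ip; exact add_nonneg (mul_self_nonneg _) (mul_self_nonneg _)

noncomputable def u0 (W : ℝ → ℝ) (g k : ℂ → ℂ) (z : ℂ) : ℝ :=
  W (ip (g z) (g z)) * ip (k z) (k z)

noncomputable def u1 (W W1 : ℝ → ℝ) (g g1 k k1 : ℂ → ℂ) (c z : ℂ) : ℝ :=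
  W1 (ip (g z) (g z)) * (2 * ip (g z) (c * g1 z)) * ip (k z) (k z) +
    W (ip (g z) (g z)) * (2 * ip (k z) (c * k1 z))

noncomputable def u2 (W W1 W2 : ℝ → ℝ) (g g1 g2 k k1 k2 : ℂ → ℂ) (c z : ℂ) : ℝ :=
  W2 (ip (g z) (g z)) * (2 * ip (g z) (c * g1 z)) ^ 2 * ip (k z) (k z) +
  W1 (ip (g z) (g z)) * (2 * ip (c * g1 z) (c * g1 z) + 2 * ip (g z) (c * (c * g2 z))) * ip (k z) (k z) +
  2 * W1 (ip (g z) (g z)) * (2 * ip (g z) (c * g1 z)) * (2 * ip (k z) (c * k1 z)) +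
  W (ip (g z) (g z)) * (2 * ip (c * k1 z) (c * k1 z) + 2 * ip (k z) (c * (c * k2 z)))

lemma line_deriv {g : ℂ → ℂ} {g' : ℂ} (a c : ℂ) (s : ℝ) (h : HasDerivAt g g' (a + s * c)) :
    HasDerivAt (fun s : ℝ => g (a + s * c)) (c * g') s := by
  have h1 : HasDerivAt (fun s : ℝ => (a + s * c)) c s := by
    have h2 := (((hasDerivAt_id s).ofReal_comp).mul_const c).const_add a
    refine h2.congr_deriv ?_
    simp
  have := h.scomp s h1
  refine this.congr_deriv ?_
  simp [mul_comm]

lemma u_d1 {T : ℝ} {g g1 g2 k k1 k2 : ℂ → ℂ} {W W1 W2 : ℝ → ℝ} (hg : Dat T g g1 g2)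
    (hk : Dat T k k1 k2) (hW : Wt W W1 W2) (a c : ℂ) (s : ℝ) (hs : (a + s * c).re < T) :
    HasDerivAt (fun s : ℝ => u0 W g k (a + s * c)) (u1 W W1 g g1 k k1 c (a + s * c)) s := by
  have h1 := line_deriv a c s (hg.d1 _ hs)
  have h2 := line_deriv a c s (hk.d1 _ hs)
  have h3 := ip_deriv h1 h1
  have h4 := ip_deriv h2 h2
  have h5 := HasDerivAt.comp (h₂ := W) s (hW.d1 _ (ip_self_nonneg (g (a + s * c)))) h3
  have := h5.mul h4
  refine this.congr_deriv ?_
  simp only [u1, ip, Function.comp]; ring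

lemma u_d2 {T : ℝ} {g g1 g2 k k1 k2 : ℂ → ℂ} {W W1 W2 : ℝ → ℝ} (hg : Dat T g g1 g2)
    (hk : Dat T k k1 k2) (hW : Wt W W1 W2) (a c : ℂ) (s : ℝ) (hs : (a + s * c).re < T) :
    HasDerivAt (fun s : ℝ => u1 W W1 g g1 k k1 c (a + s * c))
      (u2 W W1 W2 g g1 g2 k k1 k2 c (a + s * c)) s := by
  have h1 := line_deriv a c s (hg.d1 _ hs)
  have h2 := line_deriv a c s (hk.d1 _ hs)
  have h1' := (line_deriv a c s (hg.d2 _ hs)).const_mul c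
  have h2' := (line_deriv a c s (hk.d2 _ hs)).const_mul c
  have h3 := ip_deriv h1 h1
  have h4 := ip_deriv h2 h2
  have h3' := (ip_deriv h1 h1').const_mul 2
  have h4' := (ip_deriv h2 h2').const_mul 2
  have h5 := HasDerivAt.comp (h₂ := W) s (hW.d1 _ (ip_self_nonneg (g (a + s * c)))) h3
  have h6 := HasDerivAt.comp (h₂ := W1) s (hW.d2 _ (ip_self_nonneg (g (a + s * c)))) h3
  have := ((h6.mul h3').mul h4).add (h5.mul h4')
  refine this.congr_deriv ?_
  simp only [u2, Function.comp, Pi.mul_apply]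
  have e : ∀ w z : ℂ, ip w z = ip z w := fun w z => by unfold ip; ring
  rw [e (c * g1 (a + s * c)) (g (a + s * c)), e (c * k1 (a + s * c)) (k (a + s * c))]
  ring

noncomputable def lap (W W1 W2 : ℝ → ℝ) (g g1 k k1 : ℂ → ℂ) (z : ℂ) : ℝ :=
  4 * ((W2 (ip (g z) (g z)) * ip (g z) (g z) + W1 (ip (g z) (g z))) * ip (g1 z) (g1 z) * ip (k z) (k z)
  + 2 * W1 (ip (g z) (g z)) * ((ip (g z) (g1 z)) * ip (k z) (k1 z)
      + ip (g z) (Complex.I * g1 z) * ip (k z) (Complex.I * k1 z))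
  + W (ip (g z) (g z)) * ip (k1 z) (k1 z))

lemma lap_eq (W W1 W2 : ℝ → ℝ) (g g1 g2 k k1 k2 : ℂ → ℂ) (z : ℂ) :
    lap W W1 W2 g g1 k k1 z = u2 W W1 W2 g g1 g2 k k1 k2 1 z
      + u2 W W1 W2 g g1 g2 k k1 k2 Complex.I z := by
  unfold lap u2
  simp only [one_mul]
  generalize W (ip (g z) (g z)) = a
  generalize W1 (ip (g z) (g z)) = b
  generalize W2 (ip (g z) (g z)) = c
  simp only [ip, Complex.mul_re, Complex.mul_im, Complex.I_re, Complex.I_im]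
  ring

lemma lap_nonneg (W W1 W2 : ℝ → ℝ) (g g1 k k1 : ℂ → ℂ) (z : ℂ)
    (hW : ∀ x, 0 ≤ x → 0 < W x)
    (hW2 : ∀ x, 0 ≤ x → x * W1 x ^ 2 ≤ W x * (W1 x + x * W2 x)) :
    0 ≤ lap W W1 W2 g g1 k k1 z := by
  unfold lap
  have hx := ip_self_nonneg (g z)
  have h1 := hW _ hx
  have h2 := hW2 _ hx
  have e : ip (g z) (g z) = (g z).re ^ 2 + (g z).im ^ 2 := by unfold ip; ring
  generalize W (ip (g z) (g z)) = a at *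
  generalize W1 (ip (g z) (g z)) = b at *
  generalize W2 (ip (g z) (g z)) = c at *
  generalize ip (g z) (g z) = x at *
  refine mul_nonneg (by norm_num) ?_
  refine nonneg_of_mul_nonneg_right ?_ h1
  -- complete the square
  have h3 : 0 ≤ (a * (b + x * c) - x * b ^ 2) * (ip (g1 z) (g1 z) * ip (k z) (k z)) :=
    mul_nonneg (by linarith) (mul_nonneg (ip_self_nonneg _) (ip_self_nonneg _))
  set v : ℂ := (b : ℂ) * (starRingEnd ℂ (g z) * g1 z * k z) + a * k1 z with hv
  have h4 : 0 ≤ ip v v := ip_self_nonneg v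
  have h5 : a * ((c * x + b) * ip (g1 z) (g1 z) * ip (k z) (k z) +
      2 * b * (ip (g z) (g1 z) * ip (k z) (k1 z) + ip (g z) (Complex.I * g1 z) * ip (k z) (Complex.I * k1 z)) +
        a * ip (k1 z) (k1 z)) = (a * (b + x * c) - x * b ^ 2) * (ip (g1 z) (g1 z) * ip (k z) (k z)) + ip v v := by
    rw [e, hv]
    simp only [ip, Complex.mul_re, Complex.mul_im, Complex.add_re, Complex.add_im, Complex.I_re,
      Complex.I_im, Complex.conj_re, Complex.conj_im, Complex.ofReal_re, Complex.ofReal_im]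
    ring
  rw [h5]; linarith

lemma u0_cont {T : ℝ} {g g1 g2 k k1 k2 : ℂ → ℂ} {W W1 W2 : ℝ → ℝ} (hg : Dat T g g1 g2)
    (hk : Dat T k k1 k2) (hW : Wt W W1 W2) :
    ContinuousOn (u0 W g k) {z | z.re < T} := by
  have hx := ip_cont hg.c0 hg.c0
  have h0 := hW.c0.comp hx (fun z _ => ip_self_nonneg (g z))
  exact h0.mul (ip_cont hk.c0 hk.c0)

lemma u1_cont {T : ℝ} {g g1 g2 k k1 k2 : ℂ → ℂ} {W W1 W2 : ℝ → ℝ} (hg : Dat T g g1 g2)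
    (hk : Dat T k k1 k2) (hW : Wt W W1 W2) (c : ℂ) :
    ContinuousOn (u1 W W1 g g1 k k1 c) {z | z.re < T} := by
  have hx := ip_cont hg.c0 hg.c0
  have h0 := hW.c0.comp hx (fun z _ => ip_self_nonneg (g z))
  have h1 := hW.c1.comp hx (fun z _ => ip_self_nonneg (g z))
  exact ((h1.mul (continuousOn_const.mul (ip_cont hg.c0 (continuousOn_const.mul hg.c1)))).mul
    (ip_cont hk.c0 hk.c0)).add
    (h0.mul (continuousOn_const.mul (ip_cont hk.c0 (continuousOn_const.mul hk.c1))))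

lemma u2_cont {T : ℝ} {g g1 g2 k k1 k2 : ℂ → ℂ} {W W1 W2 : ℝ → ℝ} (hg : Dat T g g1 g2)
    (hk : Dat T k k1 k2) (hW : Wt W W1 W2) (c : ℂ) :
    ContinuousOn (u2 W W1 W2 g g1 g2 k k1 k2 c) {z | z.re < T} := by
  have hx := ip_cont hg.c0 hg.c0
  have h0 := hW.c0.comp hx (fun z _ => ip_self_nonneg (g z))
  have h1 := hW.c1.comp hx (fun z _ => ip_self_nonneg (g z))
  have h2 := hW.c2.comp hx (fun z _ => ip_self_nonneg (g z))
  have cc : ContinuousOn (fun _ : ℂ => c) {z : ℂ | z.re < T} := continuousOn_const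
  have c2 : ContinuousOn (fun _ : ℂ => (2:ℝ)) {z : ℂ | z.re < T} := continuousOn_const
  have a1 := cc.mul hg.c1
  have a2 := cc.mul (cc.mul hg.c2)
  have b1 := cc.mul hk.c1
  have b2 := cc.mul (cc.mul hk.c2)
  have ga := c2.mul (ip_cont hg.c0 a1)
  have kb := c2.mul (ip_cont hk.c0 b1)
  have kk := ip_cont hk.c0 hk.c0
  exact ((((h2.mul (ga.pow 2)).mul kk).add
    ((h1.mul ((c2.mul (ip_cont a1 a1)).add (c2.mul (ip_cont hg.c0 a2)))).mul kk)).add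
    (((c2.mul h1).mul ga).mul kb)).add
    (h0.mul ((c2.mul (ip_cont b1 b1)).add (c2.mul (ip_cont hk.c0 b2))))

lemma mean1 {T : ℝ} {g g1 g2 k k1 k2 : ℂ → ℂ} {W W1 W2 : ℝ → ℝ} (hg : Dat T g g1 g2)
    (hk : Dat T k k1 k2) (hW : Wt W W1 W2) (t : ℝ) (ht : t < T) :
    HasDerivAt (fun s : ℝ => ∫ θ in (-Real.pi)..Real.pi, u0 W g k (s + θ * Complex.I))
      (∫ θ in (-Real.pi)..Real.pi, u1 W W1 g g1 k k1 1 (t + θ * Complex.I)) t := by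
  refine mean_deriv T _ _ (u0_cont hg hk hW) (u1_cont hg hk hW 1) ?_ t ht
  intro t θ ht
  have e : ∀ s : ℝ, (s : ℂ) + θ * Complex.I = θ * Complex.I + s * 1 := fun s => by ring
  simp only [e]
  exact u_d1 hg hk hW _ 1 t (by simpa using ht)

lemma mean2 {T : ℝ} {g g1 g2 k k1 k2 : ℂ → ℂ} {W W1 W2 : ℝ → ℝ} (hg : Dat T g g1 g2)
    (hk : Dat T k k1 k2) (hW : Wt W W1 W2) (t : ℝ) (ht : t < T) :
    HasDerivAt (fun s : ℝ => ∫ θ in (-Real.pi)..Real.pi, u1 W W1 g g1 k k1 1 (s + θ * Complex.I))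
      (∫ θ in (-Real.pi)..Real.pi, lap W W1 W2 g g1 k k1 (t + θ * Complex.I)) t := by
  have h1 := mean_deriv T _ _ (u1_cont hg hk hW 1) (u2_cont hg hk hW 1) (by
    intro t θ ht
    have e : ∀ s : ℝ, (s : ℂ) + θ * Complex.I = θ * Complex.I + s * 1 := fun s => by ring
    simp only [e]
    exact u_d2 hg hk hW _ 1 t (by simpa using ht)) t ht
  refine h1.congr_deriv ?_
  have hc1 := line_cont T _ (u2_cont hg hk hW 1) t ht
  have hcI := line_cont T _ (u2_cont hg hk hW Complex.I) t ht
  have h2 : ∫ θ in (-Real.pi)..Real.pi, u2 W W1 W2 g g1 g2 k k1 k2 Complex.I (t + θ * Complex.I) = 0 := by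
    rw [intervalIntegral.integral_eq_sub_of_hasDerivAt
      (f := fun θ : ℝ => u1 W W1 g g1 k k1 Complex.I (t + θ * Complex.I))
      (fun θ _ => u_d2 hg hk hW t Complex.I θ (by simpa using ht)) (hcI.intervalIntegrable _ _)]
    simp only [u1, hg.p0 t, hg.p1 t, hk.p0 t, hk.p1 t, sub_self]
  simp only [lap_eq W W1 W2 g g1 g2 k k1 k2]
  rw [intervalIntegral.integral_add (hc1.intervalIntegrable _ _) (hcI.intervalIntegrable _ _), h2,
    add_zero]



lemma mono_of_convex (T : ℝ) (n n1 n2 : ℝ → ℝ) (h1 : ∀ t < T, HasDerivAt n (n1 t) t)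
    (h2 : ∀ t < T, HasDerivAt n1 (n2 t) t) (h3 : ∀ t < T, 0 ≤ n2 t)
    (hb : ∀ t0 < T, ∃ C, ∀ t ≤ t0, n t ≤ C) :
    (∀ t < T, 0 ≤ n1 t) ∧ MonotoneOn n (Set.Iio T) := by
  have hm1 : MonotoneOn n1 (Set.Iio T) := by
    refine monotoneOn_of_deriv_nonneg (convex_Iio T)
      (fun t ht => (h2 t ht).continuousAt.continuousWithinAt) ?_ ?_
    · intro t ht
      rw [interior_Iio] at ht
      exact (h2 t ht).differentiableAt.differentiableWithinAt
    · intro t ht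
      rw [interior_Iio] at ht
      rw [(h2 t ht).deriv]; exact h3 t ht
  have hp : ∀ t < T, 0 ≤ n1 t := by
    intro t0 ht0
    by_contra hneg
    push Not at hneg
    obtain ⟨C, hC⟩ := hb t0 ht0
    have hanti : AntitoneOn (fun t => n t - n1 t0 * t) (Set.Iic t0) := by
      refine antitoneOn_of_deriv_nonpos (convex_Iic t0) ?_ ?_ ?_
      · intro t ht
        exact ((h1 t (lt_of_le_of_lt ht ht0)).sub
          ((hasDerivAt_id t).const_mul (n1 t0))).continuousAt.continuousWithinAt
      · intro t ht
        rw [interior_Iic] at ht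
        exact ((h1 t (lt_trans ht ht0)).sub
          ((hasDerivAt_id t).const_mul (n1 t0))).differentiableAt.differentiableWithinAt
      · intro t ht
        rw [interior_Iic] at ht
        have := ((h1 t (lt_trans ht ht0)).sub ((hasDerivAt_id t).const_mul (n1 t0))).deriv
        have e : deriv (fun t => n t - n1 t0 * t) t = n1 t - n1 t0 * 1 := this
        rw [e]
        have := hm1 (show t ∈ Set.Iio T from lt_trans ht ht0) ht0 (le_of_lt ht)
        linarith
    set A := |C - n t0| + 1 with hA
    have hA0 : 0 < A := by positivity
    have hneg' : 0 < -n1 t0 := by linarith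
    have ht1 : t0 - A / (-n1 t0) ≤ t0 := by
      have : 0 < A / (-n1 t0) := by positivity
      linarith
    have := hanti (show t0 - A / (-n1 t0) ∈ Set.Iic t0 from ht1) (Set.mem_Iic.2 le_rfl) ht1
    have h4 := hC _ ht1
    simp only at this
    have hne : n1 t0 ≠ 0 := hneg.ne
    have e : n1 t0 * (t0 - A / (-n1 t0)) = n1 t0 * t0 + A := by
      field_simp
      ring
    rw [e] at this
    have := le_abs_self (C - n t0)
    linarith
  refine ⟨hp, monotoneOn_of_deriv_nonneg (convex_Iio T)
      (fun t ht => (h1 t ht).continuousAt.continuousWithinAt) ?_ ?_⟩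
  · intro t ht
    rw [interior_Iio] at ht
    exact (h1 t ht).differentiableAt.differentiableWithinAt
  · intro t ht
    rw [interior_Iio] at ht
    rw [(h1 t ht).deriv]; exact hp t ht

lemma ip_self (z : ℂ) : ip z z = ‖z‖ ^ 2 := by
  rw [← Complex.normSq_eq_norm_sq, Complex.normSq_apply]; rfl

lemma abs_ip_le (w z : ℂ) : |ip w z| ≤ ‖w‖ * ‖z‖ := by
  apply abs_le_of_sq_le_sq _ (by positivity)
  rw [mul_pow, ← ip_self, ← ip_self]
  unfold ip
  nlinarith [sq_nonneg (w.re * z.im - w.im * z.re)]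

/-- everything needed on circle means of `W(|g|^2)|k|^2` -/
lemma n_mono {T : ℝ} {g g1 g2 k k1 k2 : ℂ → ℂ} {W W1 W2 : ℝ → ℝ} (hg : Dat T g g1 g2)
    (hk : Dat T k k1 k2) (hW : Wt W W1 W2)
    (hb : ∀ t0 < T, ∃ B, ∀ z : ℂ, z.re ≤ t0 → ‖g z‖ ≤ B ∧ ‖k z‖ ≤ B)
    (hWp : ∀ x, 0 ≤ x → 0 < W x)
    (hW2 : ∀ x, 0 ≤ x → x * W1 x ^ 2 ≤ W x * (W1 x + x * W2 x)) :
    (∀ t < T, 0 ≤ ∫ θ in (-Real.pi)..Real.pi, u1 W W1 g g1 k k1 1 (t + θ * Complex.I)) ∧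
    MonotoneOn (fun s : ℝ => ∫ θ in (-Real.pi)..Real.pi, u0 W g k (s + θ * Complex.I)) (Set.Iio T) := by
  have hpi := Real.pi_pos
  refine mono_of_convex T _ _ _ (mean1 hg hk hW) (mean2 hg hk hW) ?_ ?_
  · intro t ht
    exact intervalIntegral.integral_nonneg (by linarith) (fun θ _ => lap_nonneg W W1 W2 g g1 k k1 _ hWp hW2)
  · intro t0 ht0
    obtain ⟨B, hB⟩ := hb t0 ht0
    obtain ⟨D, hD⟩ := (isCompact_Icc (a := (0:ℝ)) (b := B ^ 2)).exists_bound_of_continuousOn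
      (hW.c0.mono Set.Icc_subset_Ici_self)
    refine ⟨∫ θ in (-Real.pi)..Real.pi, D * B ^ 2, ?_⟩
    intro t ht
    refine intervalIntegral.integral_mono_on (by linarith)
      ((line_cont T _ (u0_cont hg hk hW) t (by linarith)).intervalIntegrable _ _)
      intervalIntegrable_const ?_
    intro θ _
    have hz := hB (t + θ * Complex.I) (by simpa using ht)
    unfold u0
    simp only [ip_self]
    have h1 : ‖g (t + θ * Complex.I)‖ ^ 2 ≤ B ^ 2 := by
      have := hz.1; gcongr
    have h2 : ‖k (t + θ * Complex.I)‖ ^ 2 ≤ B ^ 2 := by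
      have := hz.2; gcongr
    have h3 := hD _ ⟨by positivity, h1⟩
    rw [Real.norm_eq_abs] at h3
    have h4 := le_abs_self (W (‖g (t + θ * Complex.I)‖ ^ 2))
    have h5 := hWp _ (sq_nonneg ‖g (t + θ * Complex.I)‖)
    exact mul_le_mul (by linarith) h2 (by positivity) (by linarith)

lemma one_dat (T : ℝ) : Dat T (fun _ => 1) (fun _ => 0) (fun _ => 0) where
  d1 z _ := hasDerivAt_const z _
  d2 z _ := hasDerivAt_const z _
  c2 := continuousOn_const
  p0 _ := rfl
  p1 _ := rfl

lemma P_key {T : ℝ} {g g1 g2 k k1 k2 : ℂ → ℂ} {F F1 F2 W W1 W2 : ℝ → ℝ} (hg : Dat T g g1 g2)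
    (hk : Dat T k k1 k2) (hF : Wt F F1 F2) (hW : Wt W W1 W2)
    (hWF : ∀ x, 0 ≤ x → W x = F1 x + x * F2 x)
    (hgk : ∀ z, z.re < T → g1 z = Complex.exp z * k z)
    (hb : ∀ t0 < T, ∃ B, ∀ z : ℂ, z.re ≤ t0 → ‖g z‖ ≤ B ∧ ‖k z‖ ≤ B)
    (hWp : ∀ x, 0 ≤ x → 0 < W x)
    (hW2 : ∀ x, 0 ≤ x → x * W1 x ^ 2 ≤ W x * (W1 x + x * W2 x)) (t : ℝ) (ht : t < T) :
    2 * (∫ θ in (-Real.pi)..Real.pi, u1 F F1 g g1 (fun _ => 1) (fun _ => 0) 1 (t + θ * Complex.I)) ≤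
      ∫ θ in (-Real.pi)..Real.pi, lap F F1 F2 g g1 (fun _ => 1) (fun _ => 0) (t + θ * Complex.I) := by
  have hpi := Real.pi_pos
  set n := (fun s : ℝ => ∫ θ in (-Real.pi)..Real.pi, u0 W g k (s + θ * Complex.I)) with hn
  have hmono := (n_mono hg hk hW hb hWp hW2).2
  set P1 := (fun s : ℝ => ∫ θ in (-Real.pi)..Real.pi, u1 F F1 g g1 (fun _ => 1) (fun _ => 0) 1 (s + θ * Complex.I)) with hP1
  have hlap : ∀ s < T, ∫ θ in (-Real.pi)..Real.pi, lap F F1 F2 g g1 (fun _ => 1) (fun _ => 0) (s + θ * Complex.I)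
      = 4 * Real.exp (2 * s) * n s := by
    intro s hs
    rw [hn]
    simp only
    rw [← intervalIntegral.integral_const_mul]
    congr 1
    ext θ
    have hz : ((s : ℂ) + θ * Complex.I).re < T := by simpa using hs
    unfold lap u0
    rw [hWF _ (ip_self_nonneg _), hgk _ hz]
    rw [ip_self (Complex.exp _ * _), norm_mul, Complex.norm_exp, mul_pow, ← ip_self (k _)]
    have e : Real.exp (((s : ℂ) + θ * Complex.I).re) ^ 2 = Real.exp (2 * s) := by
      rw [← Real.exp_nat_mul]; simp
    rw [e]
    simp [ip]
    ring
  have hd : ∀ s < T, HasDerivAt P1 (4 * Real.exp (2 * s) * n s) s := by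
    intro s hs
    rw [← hlap s hs]
    exact mean2 hg (one_dat T) hF s hs
  rw [hlap t ht]
  -- 2 P1 τ - 4 n(t) e^{2τ} antitone
  have hanti : AntitoneOn (fun τ => P1 τ - 2 * n t * Real.exp (2 * τ)) (Set.Iic t) := by
    have hdd : ∀ τ ≤ t, HasDerivAt (fun τ => P1 τ - 2 * n t * Real.exp (2 * τ))
        (4 * Real.exp (2 * τ) * n τ - 2 * n t * (Real.exp (2 * τ) * 2)) τ := by
      intro τ hτ
      have h1 : HasDerivAt (fun τ : ℝ => Real.exp (2 * τ)) (Real.exp (2 * τ) * 2) τ := by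
        have := (((hasDerivAt_id τ).const_mul 2)).exp
        simpa using this
      exact (hd τ (by linarith)).sub (h1.const_mul (2 * n t))
    refine antitoneOn_of_deriv_nonpos (convex_Iic t) ?_ ?_ ?_
    · intro τ hτ
      exact (hdd τ hτ).continuousAt.continuousWithinAt
    · intro τ hτ
      rw [interior_Iic] at hτ
      exact (hdd τ (le_of_lt hτ)).differentiableAt.differentiableWithinAt
    · intro τ hτ
      rw [interior_Iic] at hτ
      rw [(hdd τ (le_of_lt hτ)).deriv]
      have h1 : n τ ≤ n t := hmono (show τ ∈ Set.Iio T from lt_trans hτ ht) ht (le_of_lt hτ)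
      have h2 := Real.exp_pos (2 * τ)
      nlinarith
  obtain ⟨B, hB⟩ := hb t ht
  obtain ⟨D, hD⟩ := (isCompact_Icc (a := (0:ℝ)) (b := B ^ 2)).exists_bound_of_continuousOn
      (hF.c1.mono Set.Icc_subset_Ici_self)
  have hB0 : 0 ≤ B := (norm_nonneg _).trans (hB t (by simp)).1
  have hD0 : 0 ≤ D := (norm_nonneg _).trans (hD 0 ⟨le_rfl, by positivity⟩)
  have hP1b : ∀ τ ≤ t, |P1 τ| ≤ (D * (2 * (B * B))) * Real.exp τ * |Real.pi - (-Real.pi)| := by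
    intro τ hτ
    rw [hP1, ← Real.norm_eq_abs]
    refine intervalIntegral.norm_integral_le_of_norm_le_const ?_
    intro θ _
    have hz := hB (τ + θ * Complex.I) (by simpa using hτ)
    have hz' : ((τ : ℂ) + θ * Complex.I).re < T := by simp; linarith
    unfold u1
    rw [hgk _ hz']
    have e1 : ip 1 1 = 1 := by simp [ip]
    have e2 : ip 1 (1 * 0) = 0 := by simp [ip]
    rw [e1, e2, Real.norm_eq_abs]
    simp only [mul_one, mul_zero, add_zero, one_mul]
    rw [abs_mul, abs_mul, abs_two]
    have h1 := hD (ip (g (τ + θ * Complex.I)) (g (τ + θ * Complex.I)))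
      ⟨ip_self_nonneg _, by rw [ip_self]; have := hz.1; gcongr⟩
    rw [Real.norm_eq_abs] at h1
    have h2 := abs_ip_le (g (τ + θ * Complex.I)) (Complex.exp (τ + θ * Complex.I) * k (τ + θ * Complex.I))
    rw [norm_mul, Complex.norm_exp] at h2
    have e3 : ((τ : ℂ) + θ * Complex.I).re = τ := by simp
    rw [e3] at h2
    have h3 : ‖g (τ + θ * Complex.I)‖ * (Real.exp τ * ‖k (τ + θ * Complex.I)‖) ≤ B * (Real.exp τ * B) := by
      have := hz.1; have := hz.2; gcongr
    calc _ ≤ D * (2 * (B * (Real.exp τ * B))) := by gcongr; linarith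
      _ = _ := by ring
  have hlim : Filter.Tendsto (fun τ => P1 τ - 2 * n t * Real.exp (2 * τ)) Filter.atBot (nhds 0) := by
    have h1 : Filter.Tendsto P1 Filter.atBot (nhds 0) := by
      have h2 : Filter.Tendsto (fun τ => (D * (2 * (B * B))) * Real.exp τ * |Real.pi - (-Real.pi)|)
          Filter.atBot (nhds 0) := by
        have := (Real.tendsto_exp_atBot.const_mul (D * (2 * (B * B)))).mul_const |Real.pi - (-Real.pi)|
        simpa using this
      refine squeeze_zero_norm' ?_ h2
      filter_upwards [Filter.eventually_le_atBot t] with τ hτ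
      rw [Real.norm_eq_abs]
      exact hP1b τ hτ
    have h3 : Filter.Tendsto (fun τ : ℝ => Real.exp (2 * τ)) Filter.atBot (nhds 0) :=
      Real.tendsto_exp_atBot.comp (Filter.Tendsto.const_mul_atBot (by norm_num) Filter.tendsto_id)
    have := h1.sub (h3.const_mul (2 * n t))
    simpa using this
  have hle : P1 t - 2 * n t * Real.exp (2 * t) ≤ 0 := by
    refine ge_of_tendsto hlim ?_
    filter_upwards [Filter.eventually_le_atBot t] with τ hτ
    exact hanti hτ (Set.mem_Iic.2 le_rfl) hτ
  linarith



lemma dat_of (R : ℝ) (hR : 0 < R) (h : ℂ → ℂ) (hh : DifferentiableOn ℂ h (ball 0 R)) :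
    Dat (Real.log R) (fun z => h (Complex.exp z)) (fun z => Complex.exp z * deriv h (Complex.exp z))
      (fun z => Complex.exp z * deriv h (Complex.exp z) +
        Complex.exp z * (deriv (deriv h) (Complex.exp z) * Complex.exp z)) := by
  have hmem : ∀ z : ℂ, z.re < Real.log R → Complex.exp z ∈ ball (0:ℂ) R := by
    intro z hz
    rw [mem_ball_zero_iff, Complex.norm_exp]
    exact (Real.lt_log_iff_exp_lt hR).1 hz
  have hd1 := hh.deriv isOpen_ball
  have hd2 := hd1.deriv isOpen_ball
  have a1 : ∀ z : ℂ, z.re < Real.log R → HasDerivAt (fun z => h (Complex.exp z))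
      (deriv h (Complex.exp z) * Complex.exp z) z := fun z hz =>
    HasDerivAt.comp (h₂ := h) z ((hh.differentiableAt (isOpen_ball.mem_nhds (hmem z hz))).hasDerivAt)
      (Complex.hasDerivAt_exp z)
  have a2 : ∀ z : ℂ, z.re < Real.log R → HasDerivAt (fun z => deriv h (Complex.exp z))
      (deriv (deriv h) (Complex.exp z) * Complex.exp z) z := fun z hz =>
    HasDerivAt.comp (h₂ := deriv h) z ((hd1.differentiableAt (isOpen_ball.mem_nhds (hmem z hz))).hasDerivAt)
      (Complex.hasDerivAt_exp z)
  have hexp : ∀ t : ℝ, Complex.exp (t + Real.pi * Complex.I) = Complex.exp (t + (-Real.pi : ℝ) * Complex.I) := by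
    intro t
    rw [Complex.exp_add, Complex.exp_add, Complex.exp_pi_mul_I]
    congr 1
    push_cast
    rw [neg_mul, Complex.exp_neg, Complex.exp_pi_mul_I]
    norm_num
  refine ⟨?_, ?_, ?_, ?_, ?_⟩
  · intro z hz
    exact (a1 z hz).congr_deriv (mul_comm _ _)
  · intro z hz
    exact ((Complex.hasDerivAt_exp z).mul (a2 z hz))
  · have c1 : ContinuousOn (fun z => deriv h (Complex.exp z)) {z | z.re < Real.log R} :=
      fun z hz => (a2 z hz).continuousAt.continuousWithinAt
    have c2 : ContinuousOn (fun z => deriv (deriv h) (Complex.exp z)) {z | z.re < Real.log R} :=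
      hd2.continuousOn.comp Complex.continuous_exp.continuousOn (fun z hz => hmem z hz)
    have ce : ContinuousOn Complex.exp {z | z.re < Real.log R} := Complex.continuous_exp.continuousOn
    exact (ce.mul c1).add (ce.mul (c2.mul ce))
  · intro t; simp only [hexp t]
  · intro t; simp only [hexp t]

lemma bdd_of (R : ℝ) (hR : 0 < R) (h : ℂ → ℂ) (hh : ContinuousOn h (ball 0 R)) (t0 : ℝ)
    (ht : t0 < Real.log R) : ∃ B, ∀ z : ℂ, z.re ≤ t0 → ‖h (Complex.exp z)‖ ≤ B := by
  obtain ⟨B, hB⟩ := (isCompact_closedBall (0:ℂ) (Real.exp t0)).exists_bound_of_continuousOn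
    (hh.mono (closedBall_subset_ball ((Real.lt_log_iff_exp_lt hR).1 ht)))
  refine ⟨B, fun z hz => hB _ ?_⟩
  rw [mem_closedBall_zero_iff, Complex.norm_exp]
  exact Real.exp_le_exp.2 hz

lemma rp_deriv (ε : ℝ) (hε : 0 < ε) (a x : ℝ) (hx : 0 ≤ x) :
    HasDerivAt (fun x : ℝ => (x + ε) ^ a) (a * (x + ε) ^ (a - 1)) x := by
  have := ((hasDerivAt_id x).add_const ε).rpow_const (p := a) (Or.inl (by simp; linarith))
  refine this.congr_deriv ?_
  simp

lemma wt_rp (ε : ℝ) (hε : 0 < ε) (a : ℝ) : Wt (fun x => (x + ε) ^ a) (fun x => a * (x + ε) ^ (a - 1))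
    (fun x => a * ((a - 1) * (x + ε) ^ (a - 1 - 1))) where
  d1 x hx := rp_deriv ε hε a x hx
  d2 x hx := (rp_deriv ε hε (a - 1) x hx).const_mul a
  c2 := by
    intro x hx
    have := ((rp_deriv ε hε (a - 1 - 1) x hx).const_mul (a - 1)).const_mul a
    exact this.continuousAt.continuousWithinAt

lemma wt_comb {V V1 V2 W W1 W2 : ℝ → ℝ} (hV : Wt V V1 V2) (hW : Wt W W1 W2) (a b : ℝ) :
    Wt (fun x => a * V x - b * W x) (fun x => a * V1 x - b * W1 x) (fun x => a * V2 x - b * W2 x) where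
  d1 x hx := ((hV.d1 x hx).const_mul a).sub ((hW.d1 x hx).const_mul b)
  d2 x hx := ((hV.d2 x hx).const_mul a).sub ((hW.d2 x hx).const_mul b)
  c2 := (continuousOn_const.mul hV.c2).sub (continuousOn_const.mul hW.c2)

lemma rp_cond (ε : ℝ) (hε : 0 < ε) (a : ℝ) (ha : 0 ≤ a) (x : ℝ) (hx : 0 ≤ x) :
    x * (a * (x + ε) ^ (a - 1)) ^ 2 ≤ (x + ε) ^ a * (a * (x + ε) ^ (a - 1) +
      x * (a * ((a - 1) * (x + ε) ^ (a - 1 - 1)))) := by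
  have hy : 0 < x + ε := by linarith
  set y := x + ε with hyd
  have e1 : y ^ (a - 1) = y ^ (a - 1 - 1) * y := by
    rw [← Real.rpow_add_one hy.ne']; ring_nf
  have e2 : y ^ a = y ^ (a - 1 - 1) * y * y := by
    rw [← e1, ← Real.rpow_add_one hy.ne']; ring_nf
  rw [e2, e1]
  set w := y ^ (a - 1 - 1)
  have hw : 0 ≤ w := by positivity
  have : w * y * y * (a * (w * y) + x * (a * ((a - 1) * w))) - x * (a * (w * y)) ^ 2
      = w ^ 2 * y ^ 2 * a * ε := by rw [hyd]; ring
  have h2 : 0 ≤ w ^ 2 * y ^ 2 * a * ε := by positivity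
  linarith

lemma rp_cond2 (ε : ℝ) (hε : 0 < ε) (q : ℝ) (hq : 1 ≤ q) (x : ℝ) (hx : 0 ≤ x) :
    (0 < q ^ 2 * (x + ε) ^ (q - 1) - q * (q - 1) * ε * (x + ε) ^ (q - 2)) ∧
    (q ^ 2 * (x + ε) ^ (q - 1) - q * (q - 1) * ε * (x + ε) ^ (q - 2) =
      q * (x + ε) ^ (q - 1) + x * (q * ((q - 1) * (x + ε) ^ (q - 1 - 1)))) ∧
    x * (q ^ 2 * ((q - 1) * (x + ε) ^ (q - 1 - 1)) - q * (q - 1) * ε * ((q - 2) * (x + ε) ^ (q - 2 - 1))) ^ 2 ≤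
    (q ^ 2 * (x + ε) ^ (q - 1) - q * (q - 1) * ε * (x + ε) ^ (q - 2)) *
    ((q ^ 2 * ((q - 1) * (x + ε) ^ (q - 1 - 1)) - q * (q - 1) * ε * ((q - 2) * (x + ε) ^ (q - 2 - 1))) +
    x * (q ^ 2 * ((q - 1) * ((q - 1 - 1) * (x + ε) ^ (q - 1 - 1 - 1))) -
      q * (q - 1) * ε * ((q - 2) * ((q - 2 - 1) * (x + ε) ^ (q - 2 - 1 - 1))))) := by
  have hy : 0 < x + ε := by linarith
  set y := x + ε with hyd
  have e0 : y ^ (q - 2 - 1) = y ^ (q - 2 - 1 - 1) * y := by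
    rw [← Real.rpow_add_one hy.ne']; ring_nf
  have e1 : y ^ (q - 2) = y ^ (q - 2 - 1 - 1) * y ^ 2 := by
    rw [pow_two, ← mul_assoc, ← e0, ← Real.rpow_add_one hy.ne']; ring_nf
  have e2 : y ^ (q - 1 - 1) = y ^ (q - 2 - 1 - 1) * y ^ 2 := by
    rw [← e1]; ring_nf
  have e3 : y ^ (q - 1) = y ^ (q - 2 - 1 - 1) * y ^ 3 := by
    rw [show y ^ 3 = y ^ 2 * y by ring, ← mul_assoc, ← e2, ← Real.rpow_add_one hy.ne']; ring_nf
  have e4 : y ^ (q - 1 - 1 - 1) = y ^ (q - 2 - 1 - 1) * y := by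
    rw [← e0]; ring_nf
  rw [e4, e3, e2, e1, e0]
  set w := y ^ (q - 2 - 1 - 1)
  have hw : 0 < w := by positivity
  have hq0 : 0 < q := by linarith
  have hb : 0 ≤ q - 1 := by linarith
  refine ⟨?_, ?_, ?_⟩
  · have : q ^ 2 * (w * y ^ 3) - q * (q - 1) * ε * (w * y ^ 2) = q * w * y ^ 2 * (q * x + ε) := by
      rw [hyd]; ring
    rw [this]; positivity
  · rw [hyd]; ring
  · rw [← sub_nonneg]
    have h : 0 ≤ q ^ 2 * (q - 1) * w ^ 2 * y ^ 2 * (q * (q - 1) * x ^ 2 * ε + 2 * q * x * ε ^ 2 + 2 * ε ^ 3) := by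
      positivity
    refine h.trans (le_of_eq ?_)
    rw [hyd]; ring

/-- circle mean -/
noncomputable def cm (ε a : ℝ) (g : ℂ → ℂ) (r : ℝ) : ℝ :=
  ∫ θ in (-Real.pi)..Real.pi, (‖g (r * Complex.exp (θ * Complex.I))‖ ^ 2 + ε) ^ a

lemma cm_eq (ε a : ℝ) (g : ℂ → ℂ) (r : ℝ) (hr : 0 < r) :
    cm ε a g r = ∫ θ in (-Real.pi)..Real.pi, u0 (fun x => (x + ε) ^ a) (fun z => g (Complex.exp z))
      (fun _ => 1) ((Real.log r : ℝ) + θ * Complex.I) := by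
  unfold cm
  congr 1
  ext θ
  simp only [u0]
  rw [Complex.exp_add, ← Complex.ofReal_exp, Real.exp_log hr, ip_self, ip_self]
  simp

lemma cm_mono (R : ℝ) (hR : 0 < R) (g : ℂ → ℂ) (hg : DifferentiableOn ℂ g (ball 0 R)) (ε a : ℝ)
    (hε : 0 < ε) (ha : 0 ≤ a) : MonotoneOn (cm ε a g) (Set.Ioo 0 R) := by
  have h := (n_mono (dat_of R hR g hg) (one_dat _) (wt_rp ε hε a) (by
    intro t0 ht0
    obtain ⟨B, hB⟩ := bdd_of R hR g hg.continuousOn t0 ht0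
    exact ⟨max B 1, fun z hz => ⟨(hB z hz).trans (le_max_left _ _), by simp⟩⟩)
    (fun x hx => by positivity) (fun x hx => rp_cond ε hε a ha x hx)).2
  intro r hr s hs hrs
  rw [cm_eq ε a g r hr.1, cm_eq ε a g s hs.1]
  exact h (Real.log_lt_log hr.1 hr.2) (Real.log_lt_log hs.1 hs.2) (Real.log_le_log hr.1 hrs)

lemma cm_conv (R : ℝ) (hR : 0 < R) (g : ℂ → ℂ) (hg : DifferentiableOn ℂ g (ball 0 R)) (ε q : ℝ)
    (hε : 0 < ε) (hq : 1 ≤ q) : ∃ N N' : ℝ → ℝ, ∀ r ∈ Set.Ioo 0 R,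
      HasDerivAt (cm ε q g) (2 * r * N r) r ∧ HasDerivAt N (N' r) r ∧ 0 ≤ N r ∧ 0 ≤ N' r := by
  have hDg := dat_of R hR g hg
  have hDk := dat_of R hR (deriv g) (hg.deriv isOpen_ball)
  have hF := wt_rp ε hε q
  have hW := wt_comb (wt_rp ε hε (q - 1)) (wt_rp ε hε (q - 2)) (q ^ 2) (q * (q - 1) * ε)
  have hb : ∀ t0 < Real.log R, ∃ B, ∀ z : ℂ, z.re ≤ t0 → ‖g (Complex.exp z)‖ ≤ B ∧
      ‖deriv g (Complex.exp z)‖ ≤ B := by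
    intro t0 ht0
    obtain ⟨B, hB⟩ := bdd_of R hR g hg.continuousOn t0 ht0
    obtain ⟨B', hB'⟩ := bdd_of R hR (deriv g) (hg.deriv isOpen_ball).continuousOn t0 ht0
    exact ⟨max B B', fun z hz => ⟨(hB z hz).trans (le_max_left _ _), (hB' z hz).trans (le_max_right _ _)⟩⟩
  have hb1 : ∀ t0 < Real.log R, ∃ B, ∀ z : ℂ, z.re ≤ t0 → ‖g (Complex.exp z)‖ ≤ B ∧
      ‖(1 : ℂ)‖ ≤ B := by
    intro t0 ht0
    obtain ⟨B, hB⟩ := bdd_of R hR g hg.continuousOn t0 ht0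
    exact ⟨max B 1, fun z hz => ⟨(hB z hz).trans (le_max_left _ _), by simp⟩⟩
  have key := P_key hDg hDk hF hW (fun x hx => (rp_cond2 ε hε q hq x hx).2.1) (fun z _ => rfl) hb
    (fun x hx => (rp_cond2 ε hε q hq x hx).1) (fun x hx => (rp_cond2 ε hε q hq x hx).2.2)
  have pos := (n_mono hDg (one_dat _) hF hb1
    (fun x hx => by positivity) (fun x hx => rp_cond ε hε q (by linarith) x hx)).1
  have m1 := mean1 hDg (one_dat _) hF
  have m2 := mean2 hDg (one_dat _) hF
  set P1 := (fun s : ℝ => ∫ θ in (-Real.pi)..Real.pi, u1 (fun x => (x + ε) ^ q)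
    (fun x => q * (x + ε) ^ (q - 1)) (fun z => g (Complex.exp z))
    (fun z => Complex.exp z * deriv g (Complex.exp z)) (fun _ => 1) (fun _ => 0) 1
    (s + θ * Complex.I)) with hP1
  set P2 := (fun s : ℝ => ∫ θ in (-Real.pi)..Real.pi, lap (fun x => (x + ε) ^ q)
    (fun x => q * (x + ε) ^ (q - 1)) (fun x => q * ((q - 1) * (x + ε) ^ (q - 1 - 1)))
    (fun z => g (Complex.exp z))
    (fun z => Complex.exp z * deriv g (Complex.exp z)) (fun _ => 1) (fun _ => 0)
    (s + θ * Complex.I)) with hP2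
  refine ⟨fun r => P1 (Real.log r) / (2 * r ^ 2),
    fun r => (P2 (Real.log r) - 2 * P1 (Real.log r)) / (2 * r ^ 3), ?_⟩
  intro r hr
  have hr0 := hr.1
  have hlr := Real.log_lt_log hr.1 hr.2
  refine ⟨?_, ?_, ?_, ?_⟩
  · have h1 := HasDerivAt.comp (h₂ := fun s : ℝ => ∫ θ in (-Real.pi)..Real.pi, u0 (fun x => (x + ε) ^ q)
      (fun z => g (Complex.exp z)) (fun _ => 1) (s + θ * Complex.I)) r (m1 _ hlr) (Real.hasDerivAt_log hr0.ne')
    have h2 := h1.congr_of_eventuallyEq (f₁ := cm ε q g) (by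
      filter_upwards [Ioi_mem_nhds hr0] with s hs
      exact cm_eq ε q g s hs)
    refine h2.congr_deriv ?_
    change P1 (Real.log r) * r⁻¹ = _
    field_simp
  · have h1 := HasDerivAt.comp (h₂ := P1) r (m2 _ hlr) (Real.hasDerivAt_log hr0.ne')
    have h2 := h1.div (((hasDerivAt_id r).pow 2).const_mul 2) (by simp; positivity)
    refine h2.congr_deriv ?_
    change (P2 (Real.log r) * r⁻¹ * (2 * r ^ 2) - P1 (Real.log r) * (2 * (_ * r ^ (2 - 1) * 1))) / (2 * r ^ 2) ^ 2 = _
    field_simp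
    ring
  · exact div_nonneg (pos _ hlr) (by positivity)
  · exact div_nonneg (sub_nonneg.2 (key _ hlr)) (by positivity)



noncomputable def kap (γ r : ℝ) : ℝ := (γ - 1) * (1 - r ^ 2) ^ (γ - 2) * (2 * r)

lemma kprim_deriv (b γ r : ℝ) (h : 0 < 1 - b * r ^ 2) :
    HasDerivAt (fun r : ℝ => (1 - b * r ^ 2) ^ γ) (- (γ * (1 - b * r ^ 2) ^ (γ - 1) * (2 * b * r))) r := by
  have h1 : HasDerivAt (fun r : ℝ => 1 - b * r ^ 2) (-(b * (2 * r))) r := by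
    have := ((((hasDerivAt_id r).pow 2)).const_mul b).const_sub 1
    refine this.congr_deriv ?_
    simp
  have := h1.rpow_const (p := γ) (Or.inl h.ne')
  refine this.congr_deriv ?_
  ring

lemma kprim_cont (b γ : ℝ) (hγ : 0 ≤ γ) : Continuous (fun r : ℝ => (1 - b * r ^ 2) ^ γ) := by
  have : Continuous (fun r : ℝ => 1 - b * r ^ 2) := by fun_prop
  exact this.rpow_const (fun x => Or.inr hγ)

lemma kap_int (γ : ℝ) (hγ : 1 < γ) : IntervalIntegrable (kap γ) volume 0 1 := by
  refine intervalIntegral.intervalIntegrable_deriv_of_nonneg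
    (g := fun r : ℝ => -(1 - 1 * r ^ 2) ^ (γ - 1)) ?_ ?_ ?_
  · exact ((kprim_cont 1 (γ - 1) (by linarith)).neg).continuousOn
  · intro r hr
    simp only [zero_le_one, min_eq_left, max_eq_right] at hr
    have := (kprim_deriv 1 (γ - 1) r (by nlinarith [hr.1, hr.2])).neg
    refine this.congr_deriv ?_
    unfold kap
    rw [show γ - 1 - 1 = γ - 2 by ring]
    simp
  · intro r hr
    simp only [zero_le_one, min_eq_left, max_eq_right] at hr
    unfold kap
    have : 0 < 1 - r ^ 2 := by nlinarith [hr.1, hr.2]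
    have h2 : 0 < r := hr.1
    have h3 : 0 < γ - 1 := by linarith
    positivity

lemma ibp (γ : ℝ) (hγ : 1 < γ) (m m' : ℝ → ℝ) (hm : ContinuousOn m (Set.Icc 0 1))
    (hd : ∀ r ∈ Set.Ioo (0:ℝ) 1, HasDerivAt m (m' r) r) (hp : ∀ r ∈ Set.Ioo (0:ℝ) 1, 0 ≤ m' r) :
    IntervalIntegrable m' volume 0 1 ∧
    ∫ r in (0:ℝ)..1, m r * kap γ r = m 0 + ∫ r in (0:ℝ)..1, m' r * (1 - 1 * r ^ 2) ^ (γ - 1) := by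
  have hu : Set.uIcc (0:ℝ) 1 = Set.Icc 0 1 := Set.uIcc_of_le zero_le_one
  have hi : IntervalIntegrable m' volume 0 1 :=
    intervalIntegral.intervalIntegrable_deriv_of_nonneg (by rwa [hu]) (by simpa using hd) (by simpa using hp)
  refine ⟨hi, ?_⟩
  rw [intervalIntegral.integral_mul_deriv_eq_deriv_mul_of_hasDerivAt (u := m)
    (v := fun r : ℝ => -(1 - 1 * r ^ 2) ^ (γ - 1)) (by rwa [hu])
    ((kprim_cont 1 (γ - 1) (by linarith)).neg).continuousOn (by simpa using hd) ?_ hi (kap_int γ hγ)]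
  · simp only [mul_neg, intervalIntegral.integral_neg]
    have : (0:ℝ) ^ (γ - 1) = 0 := Real.zero_rpow (by linarith)
    norm_num [this]
  · intro r hr
    simp only [zero_le_one, min_eq_left, max_eq_right] at hr
    have := (kprim_deriv 1 (γ - 1) r (by nlinarith [hr.1, hr.2])).neg
    refine this.congr_deriv ?_
    unfold kap
    rw [show γ - 1 - 1 = γ - 2 by ring]
    simp

lemma radial (R : ℝ) (hR : 1 < R) (m N N' : ℝ → ℝ) (hm : ContinuousOn m (Set.Icc 0 1))
    (hN : ∀ r ∈ Set.Ioo 0 R, HasDerivAt m (2 * r * N r) r ∧ HasDerivAt N (N' r) r ∧ 0 ≤ N r ∧ 0 ≤ N' r)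
    (α β : ℝ) (hα : 1 < α) (hβ : α < β) :
    ∫ r in (0:ℝ)..1, m (Real.sqrt (α / β) * r) * kap α r ≤ ∫ r in (0:ℝ)..1, m r * kap β r := by
  have hβ0 : 0 < β := by linarith
  have hα0 : 0 < α := by linarith
  set c := Real.sqrt (α / β) with hc
  have hc2 : c ^ 2 = α / β := Real.sq_sqrt (by positivity)
  have hc0 : 0 < c := Real.sqrt_pos.2 (by positivity)
  have hc1 : c < 1 := by
    have : α / β < 1 := (div_lt_one hβ0).2 hβ
    nlinarith
  set b := β / α with hb
  have hb1 : 1 < b := (one_lt_div hα0).2 hβ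
  have hbc : b * c ^ 2 = 1 := by rw [hc2, hb]; field_simp
  have hNm : MonotoneOn N (Set.Ioo 0 R) := by
    refine monotoneOn_of_deriv_nonneg (convex_Ioo 0 R)
      (fun r hr => (hN r hr).2.1.continuousAt.continuousWithinAt) ?_ ?_
    · intro r hr
      rw [interior_Ioo] at hr
      exact (hN r hr).2.1.differentiableAt.differentiableWithinAt
    · intro r hr
      rw [interior_Ioo] at hr
      rw [(hN r hr).2.1.deriv]; exact (hN r hr).2.2.2
  -- first
  obtain ⟨i2, e2⟩ := ibp β (by linarith) m (fun r => 2 * r * N r) hm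
    (fun r hr => (hN r ⟨hr.1, by linarith [hr.2]⟩).1)
    (fun r hr => by
      have := (hN r ⟨hr.1, by linarith [hr.2]⟩).2.2.1
      have := hr.1
      positivity)
  have hcr : ∀ r ∈ Set.Ioo (0:ℝ) 1, c * r ∈ Set.Ioo 0 R := fun r hr =>
    ⟨mul_pos hc0 hr.1, by nlinarith [hr.1, hr.2]⟩
  obtain ⟨i1, e1⟩ := ibp α hα (fun r => m (c * r)) (fun r => (2 * (c * r) * N (c * r)) * c)
    (hm.comp (by fun_prop) (fun r hr => ⟨mul_nonneg hc0.le hr.1, by nlinarith [hr.1, hr.2]⟩))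
    (fun r hr => by
      have h1 : HasDerivAt (fun r : ℝ => c * r) c r := by
        simpa using (hasDerivAt_id r).const_mul c
      exact HasDerivAt.comp (h₂ := m) r (hN _ (hcr r hr)).1 h1)
    (fun r hr => by
      have := (hN _ (hcr r hr)).2.2.1
      have := hr.1
      positivity)
  rw [e1, e2, mul_zero]
  refine add_le_add le_rfl ?_
  have e3 : ∫ r in (0:ℝ)..1, 2 * (c * r) * N (c * r) * c * (1 - 1 * r ^ 2) ^ (α - 1)
      = ∫ s in (0:ℝ)..c, 2 * s * N s * (1 - b * s ^ 2) ^ (α - 1) := by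
    have := intervalIntegral.mul_integral_comp_mul_left (a := 0) (b := 1)
      (f := fun s => 2 * s * N s * (1 - b * s ^ 2) ^ (α - 1)) c
    rw [mul_zero, mul_one] at this
    rw [← this, ← intervalIntegral.integral_const_mul]
    congr 1
    ext r
    rw [mul_pow, ← mul_assoc b, hbc]
    ring
  rw [e3]
  have i2a : IntervalIntegrable (fun r => 2 * r * N r) volume 0 c :=
    i2.mono_set (by rw [Set.uIcc_of_le hc0.le, Set.uIcc_of_le zero_le_one]
                    exact Set.Icc_subset_Icc_right hc1.le)
  have i2b : IntervalIntegrable (fun r => 2 * r * N r) volume c 1 :=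
    i2.mono_set (by rw [Set.uIcc_of_le hc1.le, Set.uIcc_of_le zero_le_one]
                    exact Set.Icc_subset_Icc_left hc0.le)
  have k1 := (kprim_cont b (α - 1) (by linarith))
  have k2 := (kprim_cont 1 (β - 1) (by linarith))
  have iA := i2a.mul_continuousOn (k1.continuousOn)
  have iB := i2a.mul_continuousOn (k2.continuousOn)
  have iC := i2b.mul_continuousOn (k2.continuousOn)
  rw [← intervalIntegral.integral_add_adjacent_intervals iB iC]
  -- right part
  have hNc := hN c ⟨hc0, by linarith⟩
  have hright : N c * (1 - 1 * c ^ 2) ^ β / β ≤ ∫ r in c..1, 2 * r * N r * (1 - 1 * r ^ 2) ^ (β - 1) := by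
    have := intervalIntegral.sub_le_integral_of_hasDeriv_right_of_le hc1.le
      (g := fun r => (- (N c / β)) * (1 - 1 * r ^ 2) ^ β)
      (g' := fun r => (- (N c / β)) * - (β * (1 - 1 * r ^ 2) ^ (β - 1) * (2 * 1 * r)))
      (φ := fun r => 2 * r * N r * (1 - 1 * r ^ 2) ^ (β - 1))
      ((kprim_cont 1 β hβ0.le).const_mul _ |>.continuousOn)
      (fun r hr => ((kprim_deriv 1 β r (by nlinarith [hr.1, hr.2])).const_mul _).hasDerivWithinAt)
      ((intervalIntegrable_iff_integrableOn_Icc_of_le hc1.le).1 iC)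
      (fun r hr => by
        have hr0 : 0 < r := hc0.trans hr.1
        have h1 : N c ≤ N r := hNm ⟨hc0, by linarith⟩ ⟨hr0, by linarith [hr.2]⟩ hr.1.le
        have h2 : 0 < 1 - 1 * r ^ 2 := by nlinarith [hr.1, hr.2]
        have h3 : 0 ≤ (1 - 1 * r ^ 2) ^ (β - 1) := by positivity
        have e : (- (N c / β)) * - (β * (1 - 1 * r ^ 2) ^ (β - 1) * (2 * 1 * r)) =
          2 * r * N c * (1 - 1 * r ^ 2) ^ (β - 1) := by field_simp
        rw [e]
        gcongr)
    have hz : (1 - 1 * (1:ℝ) ^ 2) ^ β = 0 := by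
      norm_num; exact Real.zero_rpow hβ0.ne'
    simp only [hz] at this
    calc _ = _ := by ring
      _ ≤ _ := this
  -- left part
  set D : ℝ → ℝ := fun r => ((1 - 1 * r ^ 2) ^ β - (1 - b * r ^ 2) ^ α) / β with hD
  have hDc : Continuous D := ((kprim_cont 1 β hβ0.le).sub (kprim_cont b α hα0.le)).div_const β
  have hD0 : ∀ r ∈ Set.Icc 0 c, 0 ≤ D r := by
    intro r hr
    refine div_nonneg (sub_nonneg.2 ?_) hβ0.le
    have hr2 : r ^ 2 ≤ c ^ 2 := by
      have := hr.1; have := hr.2; gcongr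
    have h1 : 0 ≤ 1 - b * r ^ 2 := by nlinarith
    have h2 : 0 ≤ 1 - 1 * r ^ 2 := by nlinarith
    have h3 := one_add_mul_self_le_rpow_one_add (s := -(r ^ 2)) (by nlinarith) hb1.le
    have h4 : 1 - b * r ^ 2 ≤ (1 - 1 * r ^ 2) ^ b := by
      calc _ = 1 + b * -r ^ 2 := by ring
        _ ≤ _ := h3
        _ = _ := by congr 1; ring
    calc (1 - b * r ^ 2) ^ α ≤ ((1 - 1 * r ^ 2) ^ b) ^ α := Real.rpow_le_rpow h1 h4 hα0.le
      _ = _ := by rw [← Real.rpow_mul h2, hb]; congr 1; field_simp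
  have hcont : ContinuousOn (fun r => N r * D r) (Set.Icc 0 c) := by
    intro r hr
    rcases eq_or_lt_of_le hr.1 with h0 | h0
    · subst h0
      have hDz : D 0 = 0 := by simp [hD]
      show Filter.Tendsto (fun r => N r * D r) _ (nhds (N 0 * D 0))
      rw [hDz, mul_zero]
      have hlim : Filter.Tendsto (fun r => N c * D r) (nhdsWithin 0 (Set.Icc 0 c)) (nhds 0) := by
        have := (hDc.const_mul (N c)).continuousWithinAt (s := Set.Icc 0 c) (x := 0)
        change Filter.Tendsto (fun r => N c * D r) _ (nhds (N c * D 0)) at this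
        rwa [hDz, mul_zero] at this
      refine squeeze_zero_norm' ?_ hlim
      filter_upwards [self_mem_nhdsWithin] with r hr
      rcases eq_or_lt_of_le hr.1 with h1 | h1
      · rw [← h1, hDz]; simp
      · have hNr := hN r ⟨h1, by linarith [hr.2]⟩
        have h2 : N r ≤ N c := hNm ⟨h1, by linarith [hr.2]⟩ ⟨hc0, by linarith⟩ hr.2
        rw [Real.norm_eq_abs, abs_of_nonneg (mul_nonneg hNr.2.2.1 (hD0 r hr))]
        exact mul_le_mul_of_nonneg_right h2 (hD0 r hr)
    · exact (((hN r ⟨h0, by linarith [hr.2]⟩).2.1.continuousAt).mul hDc.continuousAt).continuousWithinAt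
  have hleft : (∫ r in (0:ℝ)..c, 2 * r * N r * (1 - b * r ^ 2) ^ (α - 1)) -
      ∫ r in (0:ℝ)..c, 2 * r * N r * (1 - 1 * r ^ 2) ^ (β - 1) ≤ N c * (1 - 1 * c ^ 2) ^ β / β := by
    rw [← intervalIntegral.integral_sub iA iB]
    have := intervalIntegral.integral_le_sub_of_hasDeriv_right_of_le hc0.le
      (g := fun r => N r * D r)
      (g' := fun r => N' r * D r + N r * ((- (β * (1 - 1 * r ^ 2) ^ (β - 1) * (2 * 1 * r))
        - - (α * (1 - b * r ^ 2) ^ (α - 1) * (2 * b * r))) / β))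
      (φ := fun r => 2 * r * N r * (1 - b * r ^ 2) ^ (α - 1) - 2 * r * N r * (1 - 1 * r ^ 2) ^ (β - 1))
      hcont
      (fun r hr => by
        have hr2 : r ^ 2 < c ^ 2 := by
          have := hr.1; have := hr.2; gcongr
        exact ((hN r ⟨hr.1, by linarith [hr.2]⟩).2.1.mul
          (((kprim_deriv 1 β r (by nlinarith)).sub (kprim_deriv b α r (by nlinarith))).div_const β)).hasDerivWithinAt)
      ((intervalIntegrable_iff_integrableOn_Icc_of_le hc0.le).1 (iA.sub iB))
      (fun r hr => by
        have h1 : 0 ≤ N' r * D r := mul_nonneg (hN r ⟨hr.1, by linarith [hr.2]⟩).2.2.2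
          (hD0 r ⟨hr.1.le, hr.2.le⟩)
        have e : N r * ((- (β * (1 - 1 * r ^ 2) ^ (β - 1) * (2 * 1 * r))
          - - (α * (1 - b * r ^ 2) ^ (α - 1) * (2 * b * r))) / β) =
          2 * r * N r * (1 - b * r ^ 2) ^ (α - 1) - 2 * r * N r * (1 - 1 * r ^ 2) ^ (β - 1) := by
          rw [hb]
          generalize (1 - 1 * r ^ 2) ^ (β - 1) = x
          generalize (1 - β / α * r ^ 2) ^ (α - 1) = y
          field_simp
          ring
        rw [e]; linarith)
    refine this.trans (le_of_eq ?_)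
    have hz : D 0 = 0 := by simp [hD]
    have hDcv : D c = (1 - 1*c^2)^β/β := by
      simp only [hD, hbc]
      rw [sub_self, Real.zero_rpow hα0.ne', sub_zero]
    show N c * D c - N 0 * D 0 = _
    rw [hz, hDcv]; ring
  linarith



lemma berg_congr (α : ℝ) (F G : ℂ → ENNReal) (h : ∀ z ∈ ball (0:ℂ) 1, F z = G z) :
    ∫⁻ z, F z ∂(bergmanMeasure α) = ∫⁻ z, G z ∂(bergmanMeasure α) := by
  refine lintegral_congr_ae ?_
  refine (withDensity_absolutelyContinuous _ _).ae_le ?_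
  filter_upwards [ae_restrict_mem measurableSet_ball] with z hz using h z hz

lemma berg_ae (α : ℝ) : ∀ᵐ z ∂(bergmanMeasure α), z ∈ ball (0:ℂ) 1 := by
  refine (withDensity_absolutelyContinuous _ _).ae_le ?_
  exact ae_restrict_mem measurableSet_ball

lemma dens_meas (α : ℝ) : Measurable (fun z : ℂ => ENNReal.ofReal ((α - 1) / Real.pi * (1 - ‖z‖ ^ 2) ^ (α - 2))) := by
  fun_prop

lemma polar0 (α : ℝ) (hα : 1 < α) (F : ℂ → ENNReal) (hF : Measurable F) :
    ∫⁻ z, F z ∂(bergmanMeasure α) = ∫⁻ r in Set.Ioo (0:ℝ) 1, ENNReal.ofReal (kap α r / (2 * Real.pi)) *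
      ∫⁻ θ in Set.Ioo (-Real.pi) Real.pi, F (r * Complex.exp (θ * Complex.I)) := by
  unfold bergmanMeasure
  rw [lintegral_withDensity_eq_lintegral_mul _ (dens_meas α) hF, ← lintegral_indicator measurableSet_ball,
    ← Complex.lintegral_comp_polarCoord_symm]
  have ht : polarCoord.target = Set.Ioi (0:ℝ) ×ˢ Set.Ioo (-Real.pi) Real.pi := rfl
  rw [ht, Measure.volume_eq_prod, ← Measure.prod_restrict, lintegral_prod]
  · rw [← Set.Ioi_inter_Iio (a := (0:ℝ)) (b := 1), ← Measure.restrict_restrict_of_subset (s := Set.Ioi (0:ℝ) ∩ Set.Iio 1) (t := Set.Ioi 0) Set.inter_subset_left,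
      ← lintegral_indicator (measurableSet_Ioi.inter measurableSet_Iio)]
    refine setLIntegral_congr_fun measurableSet_Ioi ?_
    intro r hr
    have hr0 : 0 < r := hr
    have hn : ∀ θ : ℝ, ‖(r:ℂ) * Complex.exp (θ * Complex.I)‖ = r := by
      intro θ
      rw [norm_mul, Complex.norm_exp_ofReal_mul_I, mul_one, Complex.norm_real, Real.norm_eq_abs, abs_of_pos hr0]
    have he : ∀ θ : ℝ, Complex.polarCoord.symm (r, θ) = r * Complex.exp (θ * Complex.I) := by
      intro θ
      rw [Complex.polarCoord_symm_apply, Complex.exp_mul_I]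
      push_cast
      rfl
    simp only [he]
    by_cases h1 : r < 1
    · rw [Set.indicator_of_mem (show r ∈ Set.Ioi (0:ℝ) ∩ Set.Iio 1 from ⟨hr, h1⟩)]
      rw [← lintegral_const_mul]
      · refine lintegral_congr fun θ => ?_
        rw [Set.indicator_of_mem (by rw [mem_ball_zero_iff, hn]; exact h1)]
        simp only [Pi.mul_apply, hn, smul_eq_mul]
        rw [← mul_assoc, ← ENNReal.ofReal_mul hr0.le]
        congr 2
        unfold kap
        field_simp
      · exact hF.comp (by fun_prop)
    · rw [Set.indicator_of_notMem (fun h => h1 h.2)]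
      rw [lintegral_eq_zero_iff']
      · refine Filter.Eventually.of_forall fun θ => ?_
        show _ • _ = _
        rw [Set.indicator_of_notMem (by rw [mem_ball_zero_iff, hn]; exact h1)]
        simp
      · refine Measurable.aemeasurable ?_
        simp only [smul_eq_mul]
        refine Measurable.const_mul ?_ _
        exact (((dens_meas α).mul hF).indicator measurableSet_ball).comp (by fun_prop)
  · refine Measurable.aemeasurable ?_
    refine Measurable.smul (f := fun x : ℝ × ℝ => ENNReal.ofReal x.1) (by fun_prop) ?_
    refine (((dens_meas α).mul hF).indicator measurableSet_ball).comp ?_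
    have e : (fun x : ℝ × ℝ => Complex.polarCoord.symm x) =
        fun x : ℝ × ℝ => (x.1 : ℂ) * (Real.cos x.2 + Real.sin x.2 * Complex.I) := by
      ext x; exact Complex.polarCoord_symm_apply x
    show Measurable (fun x : ℝ × ℝ => Complex.polarCoord.symm x)
    rw [e]
    fun_prop

lemma circ_cont (h : ℂ → ℝ) (hh : ContinuousOn h (ball 0 1)) (r : ℝ) (hr : r ∈ Set.Ioo (0:ℝ) 1) :
    Continuous (fun θ : ℝ => h (r * Complex.exp (θ * Complex.I))) := by
  refine hh.comp_continuous (by fun_prop) fun θ => ?_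
  rw [mem_ball_zero_iff, norm_mul, Complex.norm_exp_ofReal_mul_I, mul_one, Complex.norm_real, Real.norm_eq_abs,
    abs_of_pos hr.1]
  exact hr.2

lemma kap_nonneg (α : ℝ) (hα : 1 < α) (r : ℝ) (hr : r ∈ Set.Ioo (0:ℝ) 1) : 0 ≤ kap α r := by
  unfold kap
  have h1 : 0 ≤ 1 - r ^ 2 := by nlinarith [hr.1, hr.2]
  have h2 := hr.1
  have h3 : 0 ≤ α - 1 := by linarith
  positivity

lemma polar (α : ℝ) (hα : 1 < α) (h : ℂ → ℝ) (hh : ContinuousOn h (ball 0 1)) (h0 : ∀ z ∈ ball (0:ℂ) 1, 0 ≤ h z) :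
    ∫⁻ z, ENNReal.ofReal (h z) ∂(bergmanMeasure α) = ∫⁻ r in Set.Ioo (0:ℝ) 1, ENNReal.ofReal (kap α r / (2 * Real.pi) *
      ∫ θ in (-Real.pi)..Real.pi, h (r * Complex.exp (θ * Complex.I))) := by
  classical
  set F : ℂ → ENNReal := (ball (0:ℂ) 1).indicator (fun z => ENNReal.ofReal (h z)) with hFd
  have hF : Measurable F := by
    rw [hFd]
    have : ContinuousOn (fun z => ENNReal.ofReal (h z)) (ball 0 1) :=
      ENNReal.continuous_ofReal.comp_continuousOn hh
    rw [← Set.piecewise_eq_indicator]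
    exact ContinuousOn.measurable_piecewise this continuousOn_const measurableSet_ball
  rw [berg_congr α _ F (fun z hz => by rw [hFd, Set.indicator_of_mem hz]), polar0 α hα F hF]
  refine setLIntegral_congr_fun measurableSet_Ioo fun r hr => ?_
  have hm : ∀ θ : ℝ, (r:ℂ) * Complex.exp (θ * Complex.I) ∈ ball (0:ℂ) 1 := by
    intro θ
    rw [mem_ball_zero_iff, norm_mul, Complex.norm_exp_ofReal_mul_I, mul_one, Complex.norm_real, Real.norm_eq_abs,
      abs_of_pos hr.1]
    exact hr.2
  simp only [hFd, Set.indicator_of_mem (hm _)]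
  have hk := kap_nonneg α hα r hr
  rw [ENNReal.ofReal_mul (by positivity), intervalIntegral.integral_of_le (by linarith [Real.pi_pos]),
    ← ofReal_integral_eq_lintegral_ofReal, integral_Ioc_eq_integral_Ioo]
  · exact (circ_cont h hh r hr).integrableOn_Icc.mono_set Set.Ioo_subset_Icc_self
  · exact Filter.Eventually.of_forall fun θ => h0 _ (hm θ)

lemma circ_mean_cont (h : ℂ → ℝ) (hh : ContinuousOn h (closedBall 0 1)) :
    ContinuousOn (fun r : ℝ => ∫ θ in (-Real.pi)..Real.pi, h (r * Complex.exp (θ * Complex.I))) (Set.Icc 0 1) := by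
  have hm : ∀ r ∈ Set.Icc (0:ℝ) 1, ∀ θ : ℝ, (r:ℂ) * Complex.exp (θ * Complex.I) ∈ closedBall (0:ℂ) 1 := by
    intro r hr θ
    rw [mem_closedBall_zero_iff, norm_mul, Complex.norm_exp_ofReal_mul_I, mul_one, Complex.norm_real, Real.norm_eq_abs,
      abs_of_nonneg hr.1]
    exact hr.2
  obtain ⟨C, hC⟩ := (isCompact_closedBall (0:ℂ) 1).exists_bound_of_continuousOn hh
  have hc : ∀ r ∈ Set.Icc (0:ℝ) 1, Continuous (fun θ : ℝ => h (r * Complex.exp (θ * Complex.I))) :=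
    fun r hr => hh.comp_continuous (by fun_prop) (hm r hr)
  intro r0 hr0
  refine intervalIntegral.continuousWithinAt_of_dominated_interval (bound := fun _ => C) ?_ ?_ ?_ ?_
  · filter_upwards [self_mem_nhdsWithin] with r hr using (hc r hr).aestronglyMeasurable
  · filter_upwards [self_mem_nhdsWithin] with r hr
    exact Filter.Eventually.of_forall fun θ _ => hC _ (hm r hr θ)
  · exact intervalIntegrable_const
  · refine Filter.Eventually.of_forall fun θ _ => ?_
    refine ContinuousWithinAt.comp (t := closedBall (0:ℂ) 1) (hh _ (hm r0 hr0 θ)) ?_ (fun r hr => hm r hr θ)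
    exact Continuous.continuousWithinAt (by fun_prop)

lemma polarR (α : ℝ) (hα : 1 < α) (h : ℂ → ℝ) (hh : ContinuousOn h (closedBall 0 1))
    (h0 : ∀ z ∈ closedBall (0:ℂ) 1, 0 ≤ h z) :
    ∫ z, h z ∂(bergmanMeasure α) = (1 / (2 * Real.pi)) * ∫ r in (0:ℝ)..1,
      (∫ θ in (-Real.pi)..Real.pi, h (r * Complex.exp (θ * Complex.I))) * kap α r := by
  have hhb := hh.mono ball_subset_closedBall
  have hmean : ∀ r ∈ Set.Ioo (0:ℝ) 1, 0 ≤ ∫ θ in (-Real.pi)..Real.pi, h (r * Complex.exp (θ * Complex.I)) := by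
    intro r hr
    refine intervalIntegral.integral_nonneg (by linarith [Real.pi_pos]) fun θ _ => h0 _ ?_
    rw [mem_closedBall_zero_iff, norm_mul, Complex.norm_exp_ofReal_mul_I, mul_one, Complex.norm_real, Real.norm_eq_abs,
      abs_of_pos hr.1]
    exact hr.2.le
  rw [integral_eq_lintegral_of_nonneg_ae, polar α hα h hhb (fun z hz => h0 z (ball_subset_closedBall hz))]
  · rw [← intervalIntegral.integral_const_mul, intervalIntegral.integral_of_le zero_le_one, integral_Ioc_eq_integral_Ioo,
      integral_eq_lintegral_of_nonneg_ae]
    · congr 1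
      refine lintegral_congr fun r => ?_
      congr 1
      ring
    · filter_upwards [ae_restrict_mem measurableSet_Ioo] with r hr
      have := hmean r hr
      have := kap_nonneg α hα r hr
      show 0 ≤ 1 / (2 * Real.pi) * (_ * _)
      positivity
    · refine AEStronglyMeasurable.const_mul (AEStronglyMeasurable.mul ?_ ?_) _
      · exact ((circ_mean_cont h hh).mono Set.Ioo_subset_Icc_self).aestronglyMeasurable measurableSet_Ioo
      · have := ((intervalIntegrable_iff_integrableOn_Ioo_of_le zero_le_one).1 (kap_int α hα))
        exact this.aestronglyMeasurable
  · filter_upwards [berg_ae α] with z hz using h0 z (ball_subset_closedBall hz)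
  · refine AEStronglyMeasurable.mono_ac (withDensity_absolutelyContinuous _ _) ?_
    exact hhb.aestronglyMeasurable measurableSet_ball



lemma berg_fin (α : ℝ) (hα : 1 < α) : IsFiniteMeasure (bergmanMeasure α) := by
  refine ⟨?_⟩
  have h := polar α hα (fun _ => 1) continuousOn_const (fun _ _ => zero_le_one)
  simp only [ENNReal.ofReal_one, lintegral_const, one_mul] at h
  rw [h]
  have hk := ((intervalIntegrable_iff_integrableOn_Ioo_of_le zero_le_one).1 (kap_int α hα))
  exact ((hk.div_const _).mul_const _).lintegral_lt_top

lemma berg_meas (α : ℝ) (h : ℂ → ℝ) (hh : ContinuousOn h (ball 0 1)) :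
    AEStronglyMeasurable h (bergmanMeasure α) :=
  AEStronglyMeasurable.mono_ac (withDensity_absolutelyContinuous _ _)
    (hh.aestronglyMeasurable measurableSet_ball)

lemma pw_cont (S : Set ℂ) (u : ℂ → ℂ) (hu : ContinuousOn u S) (ε q : ℝ) (hq : 0 < q) :
    ContinuousOn (fun z => (‖u z‖ ^ 2 + ε) ^ q) S := by
  refine ContinuousOn.rpow_const ?_ (fun _ _ => Or.inr hq.le)
  exact (hu.norm.pow 2).add continuousOn_const

lemma eps_lim (α : ℝ) (hα : 1 < α) (u : ℂ → ℂ) (hu : ContinuousOn u (closedBall 0 1)) (q : ℝ) (hq : 0 < q) :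
    Filter.Tendsto (fun ε : ℝ => ∫ z, (‖u z‖ ^ 2 + ε) ^ q ∂(bergmanMeasure α)) (nhdsWithin 0 (Set.Ioi 0))
      (nhds (∫ z, (‖u z‖ ^ 2) ^ q ∂(bergmanMeasure α))) := by
  haveI := berg_fin α hα
  obtain ⟨C, hC⟩ := (isCompact_closedBall (0:ℂ) 1).exists_bound_of_continuousOn hu
  refine tendsto_integral_filter_of_dominated_convergence (fun _ => (C ^ 2 + 1) ^ q) ?_ ?_ ?_ ?_
  · exact Filter.Eventually.of_forall fun ε => berg_meas α _ (pw_cont _ u (hu.mono ball_subset_closedBall) ε q hq)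
  · have : Set.Ioo (0:ℝ) 1 ∈ nhdsWithin (0:ℝ) (Set.Ioi 0) := Ioo_mem_nhdsGT one_pos
    filter_upwards [this] with ε hε
    filter_upwards [berg_ae α] with z hz
    have h1 := hC z (ball_subset_closedBall hz)
    have h2 : 0 ≤ ‖u z‖ := norm_nonneg _
    have h3 := hε.1
    rw [Real.norm_eq_abs, abs_of_nonneg (by positivity)]
    refine Real.rpow_le_rpow (by positivity) ?_ hq.le
    have := hε.2
    have : ‖u z‖ ^ 2 ≤ C ^ 2 := by gcongr
    linarith
  · exact integrable_const _
  · refine Filter.Eventually.of_forall fun z => ?_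
    have : Continuous (fun ε : ℝ => (‖u z‖ ^ 2 + ε) ^ q) :=
      Continuous.rpow_const (by fun_prop) (fun _ => Or.inr hq.le)
    have h := (this.tendsto 0).mono_left (nhdsWithin_le_nhds (s := Set.Ioi 0))
    simpa using h

lemma stepB0 (R : ℝ) (hR : 1 < R) (g : ℂ → ℂ) (hg : DifferentiableOn ℂ g (ball 0 R)) (q : ℝ) (hq : 1 ≤ q)
    (α β : ℝ) (hα : 1 < α) (hβ : α < β) (ε : ℝ) (hε : 0 < ε) :
    ∫ z, (‖g ((Real.sqrt (α / β) : ℝ) * z)‖ ^ 2 + ε) ^ q ∂(bergmanMeasure α) ≤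
    ∫ z, (‖g z‖ ^ 2 + ε) ^ q ∂(bergmanMeasure β) := by
  have hq0 : 0 < q := by linarith
  set c := Real.sqrt (α / β) with hc
  have hc0 : 0 ≤ c := Real.sqrt_nonneg _
  have hc1 : c ≤ 1 := by
    rw [hc]; exact Real.sqrt_le_one.2 ((div_le_one (by linarith)).2 hβ.le)
  have hgc : ContinuousOn g (closedBall 0 1) := hg.continuousOn.mono (closedBall_subset_ball hR)
  have hgc' : ContinuousOn (fun z => g ((c:ℝ) * z)) (closedBall 0 1) := by
    refine hgc.comp (by fun_prop) fun z hz => ?_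
    rw [mem_closedBall_zero_iff] at hz ⊢
    rw [norm_mul, Complex.norm_real, Real.norm_eq_abs, abs_of_nonneg hc0]
    exact mul_le_one₀ hc1 (norm_nonneg _) hz
  rw [polarR α hα _ (pw_cont _ _ hgc' ε q hq0) (fun z _ => by positivity),
    polarR β (hα.trans hβ) _ (pw_cont _ _ hgc ε q hq0) (fun z _ => by positivity)]
  refine mul_le_mul_of_nonneg_left ?_ (by positivity)
  obtain ⟨N, N', hN⟩ := cm_conv R (by linarith) g hg ε q hε hq
  have := radial R hR (cm ε q g) N N' (circ_mean_cont _ (pw_cont _ _ hgc ε q hq0)) hN α β hα hβ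
  refine le_trans (le_of_eq ?_) this
  congr 1
  ext r
  unfold cm
  rw [← hc]
  push_cast
  simp only [mul_assoc]

lemma stepB (R : ℝ) (hR : 1 < R) (g : ℂ → ℂ) (hg : DifferentiableOn ℂ g (ball 0 R)) (q : ℝ) (hq : 1 ≤ q)
    (α β : ℝ) (hα : 1 < α) (hβ : α < β) :
    ∫ z, (‖g ((Real.sqrt (α / β) : ℝ) * z)‖ ^ 2) ^ q ∂(bergmanMeasure α) ≤
    ∫ z, (‖g z‖ ^ 2) ^ q ∂(bergmanMeasure β) := by
  have hq0 : 0 < q := by linarith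
  have hc0 : 0 ≤ Real.sqrt (α / β) := Real.sqrt_nonneg _
  have hc1 : Real.sqrt (α / β) ≤ 1 := Real.sqrt_le_one.2 ((div_le_one (by linarith)).2 hβ.le)
  have hgc : ContinuousOn g (closedBall 0 1) := hg.continuousOn.mono (closedBall_subset_ball hR)
  have hgc' : ContinuousOn (fun z => g ((Real.sqrt (α / β) : ℝ) * z)) (closedBall 0 1) := by
    refine hgc.comp (by fun_prop) fun z hz => ?_
    rw [mem_closedBall_zero_iff] at hz ⊢
    rw [norm_mul, Complex.norm_real, Real.norm_eq_abs, abs_of_nonneg hc0]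
    exact mul_le_one₀ hc1 (norm_nonneg _) hz
  refine le_of_tendsto_of_tendsto (eps_lim α hα _ hgc' q hq0) (eps_lim β (hα.trans hβ) _ hgc q hq0) ?_
  filter_upwards [self_mem_nhdsWithin] with ε hε
  exact stepB0 R hR g hg q hq α β hα hβ ε hε

lemma cm_lim (g : ℂ → ℂ) (hg : ContinuousOn g (ball 0 1)) (p : ℝ) (hp : 0 < p) (r : ℝ) (hr : r ∈ Set.Ioo (0:ℝ) 1) :
    Filter.Tendsto (fun ε => cm ε p g r) (nhdsWithin 0 (Set.Ioi 0)) (nhds (cm 0 p g r)) := by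
  have h1 : Continuous (fun θ : ℝ => ‖g (r * Complex.exp (θ * Complex.I))‖) :=
    circ_cont (fun z => ‖g z‖) hg.norm r hr
  have h2 : Continuous (fun ε => cm ε p g r) := by
    unfold cm
    refine intervalIntegral.continuous_parametric_intervalIntegral_of_continuous' ?_ _ _
    refine Continuous.rpow_const ?_ (fun _ => Or.inr hp.le)
    exact ((h1.comp continuous_snd).pow 2).add continuous_fst
  exact (h2.tendsto 0).mono_left nhdsWithin_le_nhds

lemma stepA (g : ℂ → ℂ) (hg : DifferentiableOn ℂ g (ball 0 1)) (p : ℝ) (hp : 0 < p)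
    (α : ℝ) (hα : 1 < α) (ρ : ℝ) (hρ : ρ ∈ Set.Ioo (0:ℝ) 1) :
    ∫⁻ z, ENNReal.ofReal ((‖g (ρ * z)‖ ^ 2) ^ p) ∂(bergmanMeasure α) ≤
    ∫⁻ z, ENNReal.ofReal ((‖g z‖ ^ 2) ^ p) ∂(bergmanMeasure α) := by
  have hgc' : ContinuousOn (fun z => g (ρ * z)) (ball 0 1) := by
    refine hg.continuousOn.comp (by fun_prop) fun z hz => ?_
    rw [mem_ball_zero_iff] at hz ⊢
    rw [norm_mul, Complex.norm_real, Real.norm_eq_abs, abs_of_pos hρ.1]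
    nlinarith [hρ.1, hρ.2, norm_nonneg z]
  have a1 := pw_cont _ _ hgc' 0 p hp
  have a2 := pw_cont _ _ hg.continuousOn 0 p hp
  simp only [add_zero] at a1 a2
  rw [polar α hα _ a1 (fun z _ => by positivity), polar α hα _ a2 (fun z _ => by positivity)]
  refine setLIntegral_mono' measurableSet_Ioo fun r hr => ?_
  refine ENNReal.ofReal_le_ofReal ?_
  have hk := kap_nonneg α hα r hr
  refine mul_le_mul_of_nonneg_left ?_ (by positivity)
  have hρr : ρ * r ∈ Set.Ioo (0:ℝ) 1 := ⟨mul_pos hρ.1 hr.1, by nlinarith [hρ.1, hρ.2, hr.1, hr.2]⟩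
  have key : cm 0 p g (ρ * r) ≤ cm 0 p g r := by
    refine le_of_tendsto_of_tendsto (cm_lim g hg.continuousOn p hp _ hρr) (cm_lim g hg.continuousOn p hp _ hr) ?_
    filter_upwards [self_mem_nhdsWithin] with ε hε
    exact cm_mono 1 one_pos g hg ε p hε hp.le hρr hr (by nlinarith [hρ.1, hρ.2, hr.1, hr.2])
  unfold cm at key
  push_cast at key
  simp only [mul_assoc, add_zero] at key ⊢
  exact key

lemma conv (f : ℂ → ℂ) (γ α : ℝ) (hα : 1 < α) (hI : Integrable (fun z => ‖f z‖ ^ (γ * α)) (bergmanMeasure α)) :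
    Integrable (fun x => wfun f γ x ^ α) hyp ∧
    (α - 1) * ∫ x, wfun f γ x ^ α ∂hyp = ∫ z, ‖f z‖ ^ (γ * α) ∂(bergmanMeasure α) := by
  have hm1 : Measurable (fun z : ℂ => ENNReal.ofReal (1 / (Real.pi * (1 - ‖z‖ ^ 2) ^ 2))) := by fun_prop
  have hm2 := dens_meas α
  have key : ∀ z ∈ ball (0:ℂ) 1, (α - 1) * ((ENNReal.ofReal (1 / (Real.pi * (1 - ‖z‖ ^ 2) ^ 2))).toReal • (wfun f γ z ^ α)) =
      (ENNReal.ofReal ((α - 1) / Real.pi * (1 - ‖z‖ ^ 2) ^ (α - 2))).toReal • ‖f z‖ ^ (γ * α) := by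
    intro z hz
    have hz1 : 0 < 1 - ‖z‖ ^ 2 := by
      rw [mem_ball_zero_iff] at hz
      nlinarith [norm_nonneg z]
    have hα1 : 0 < α - 1 := by linarith
    rw [ENNReal.toReal_ofReal (by positivity), ENNReal.toReal_ofReal (by positivity)]
    unfold wfun
    rw [if_pos hz, Real.mul_rpow (by positivity) hz1.le, ← Real.rpow_mul (norm_nonneg _), Real.rpow_sub hz1]
    simp only [smul_eq_mul]
    have : (1 - ‖z‖ ^ 2) ^ (2:ℝ) = (1 - ‖z‖ ^ 2) ^ 2 := by norm_cast
    rw [this]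
    field_simp
  constructor
  · unfold hyp
    rw [integrable_withDensity_iff_integrable_smul' hm1 (Filter.Eventually.of_forall fun _ => ENNReal.ofReal_lt_top)]
    unfold bergmanMeasure at hI
    rw [integrable_withDensity_iff_integrable_smul' hm2 (Filter.Eventually.of_forall fun _ => ENNReal.ofReal_lt_top)] at hI
    refine (hI.const_mul (α - 1)⁻¹).congr ?_
    filter_upwards [ae_restrict_mem measurableSet_ball] with z hz
    have hα1 : α - 1 ≠ 0 := by linarith
    rw [← key z hz, ← mul_assoc, inv_mul_cancel₀ hα1, one_mul]
  · unfold hyp bergmanMeasure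
    rw [integral_withDensity_eq_integral_toReal_smul hm1 (Filter.Eventually.of_forall fun _ => ENNReal.ofReal_lt_top),
      integral_withDensity_eq_integral_toReal_smul hm2 (Filter.Eventually.of_forall fun _ => ENNReal.ofReal_lt_top),
      ← integral_const_mul]
    exact setIntegral_congr_fun measurableSet_ball key

lemma bdd_int (f : ℂ → ℂ) (hf : ContinuousOn f (ball 0 1)) (C : ℝ) (hC : ∀ z ∈ ball (0:ℂ) 1, ‖f z‖ ≤ C)
    (s : ℝ) (hs : 0 < s) (α : ℝ) (hα : 1 < α) : Integrable (fun z => ‖f z‖ ^ s) (bergmanMeasure α) := by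
  haveI := berg_fin α hα
  refine Integrable.of_bound (C := C ^ s) (berg_meas α _ (hf.norm.rpow_const fun _ _ => Or.inr hs.le)) ?_
  filter_upwards [berg_ae α] with z hz
  rw [Real.norm_eq_abs, abs_of_nonneg (by positivity)]
  exact Real.rpow_le_rpow (norm_nonneg _) (hC z hz) hs.le

lemma stepD (f : ℂ → ℂ) (hf : DifferentiableOn ℂ f (ball 0 1)) (C : ℝ) (hC : ∀ z ∈ ball (0:ℂ) 1, ‖f z‖ ≤ C)
    (p q : ℝ) (hp : 0 < p) (hpq : p < q) (α : ℝ) (hα : 1 < α) :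
    ∫ z, ‖f z‖ ^ q ∂(bergmanMeasure (α * q / p)) ≤ (∫ z, ‖f z‖ ^ p ∂(bergmanMeasure α)) ^ (q / p) := by
  have hα0 : 0 < α := by linarith
  have hβ : α < α * q / p := by rw [lt_div_iff₀ hp]; nlinarith
  have e1 : p / α * α = p := by field_simp
  have e2 : p / α * (α * q / p) = q := by field_simp
  have e3 : α * q / p / α = q / p := by field_simp
  have h1 := conv f (p / α) α hα (by rw [e1]; exact bdd_int f hf.continuousOn C hC p hp α hα)
  have h2 := conv f (p / α) (α * q / p) (hα.trans hβ)
    (by rw [e2]; exact bdd_int f hf.continuousOn C hC q (hp.trans hpq) _ (hα.trans hβ))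
  have := kulikov f hf C hC (p / α) (by positivity) α (α * q / p) hα hβ h1.1 h2.1
  rw [h1.2, h2.2, e1, e2, e3] at this
  exact this



lemma key_rho (p q α : ℝ) (hp : 0 < p) (hpq : p < q) (hq1 : 1 ≤ q) (hα : 1 < α)
    (g : ℂ → ℂ) (hg : DifferentiableOn ℂ g (ball (0 : ℂ) 1))
    (hgp : Integrable (fun z => (‖g z‖ ^ 2) ^ p) (bergmanMeasure α)) (ρ : ℝ) (hρ : ρ ∈ Set.Ioo (0:ℝ) 1) :
    ∫ z, (‖g (ρ * ((Real.sqrt (p / q) : ℝ) * z))‖ ^ 2) ^ q ∂(bergmanMeasure α) ≤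
      (∫ z, (‖g z‖ ^ 2) ^ p ∂(bergmanMeasure α)) ^ (q / p) := by
  have hα0 : 0 < α := by linarith
  have hq0 : 0 < q := by linarith
  have hβ : α < α * q / p := by rw [lt_div_iff₀ hp]; nlinarith
  have hR : 1 < 1 / ρ := (one_lt_div hρ.1).2 hρ.2
  have hG : DifferentiableOn ℂ (fun z => g (ρ * z)) (ball 0 (1 / ρ)) := by
    refine hg.comp (by fun_prop) fun z hz => ?_
    rw [mem_ball_zero_iff] at hz ⊢
    rw [norm_mul, Complex.norm_real, Real.norm_eq_abs, abs_of_pos hρ.1]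
    rw [lt_div_iff₀ hρ.1] at hz
    linarith
  have hGc : ContinuousOn (fun z => g (ρ * z)) (closedBall 0 1) :=
    hG.continuousOn.mono (closedBall_subset_ball hR)
  obtain ⟨C, hC⟩ := (isCompact_closedBall (0:ℂ) 1).exists_bound_of_continuousOn hGc
  have e1 : α / (α * q / p) = p / q := by field_simp
  have hB := stepB (1 / ρ) hR _ hG q hq1 α (α * q / p) hα hβ
  rw [e1] at hB
  have hD := stepD (fun z => (g (ρ * z)) ^ 2) ((hG.mono (ball_subset_ball hR.le)).pow 2) (C ^ 2)
    (fun z hz => by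
      rw [norm_pow]
      have := hC z (ball_subset_closedBall hz)
      gcongr) p q hp hpq α hα
  simp only [norm_pow] at hD
  refine hB.trans (hD.trans ?_)
  refine Real.rpow_le_rpow (integral_nonneg fun z => by positivity) ?_ (by positivity)
  have hGb := hGc.mono ball_subset_closedBall
  rw [integral_eq_lintegral_of_nonneg_ae (Filter.Eventually.of_forall fun z => by positivity),
    integral_eq_lintegral_of_nonneg_ae (Filter.Eventually.of_forall fun z => by positivity) hgp.1]
  · refine ENNReal.toReal_mono hgp.lintegral_lt_top.ne ?_
    exact stepA g hg p hp α hα ρ hρ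
  · have := berg_meas α _ (pw_cont _ _ hGb 0 p hp)
    simpa only [add_zero] using this

lemma rho_lim (q α c : ℝ) (hq : 0 < q) (hα : 1 < α) (hc : c ∈ Set.Ioo (0:ℝ) 1)
    (g : ℂ → ℂ) (hg : ContinuousOn g (ball (0 : ℂ) 1)) :
    Filter.Tendsto (fun ρ : ℝ => ∫ z, (‖g (ρ * (c * z))‖ ^ 2) ^ q ∂(bergmanMeasure α)) (nhdsWithin 1 (Set.Iio 1))
      (nhds (∫ z, (‖g (c * z)‖ ^ 2) ^ q ∂(bergmanMeasure α))) := by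
  have := berg_fin α hα
  have hsub : closedBall (0:ℂ) c ⊆ ball 0 1 := closedBall_subset_ball hc.2
  obtain ⟨C, hC⟩ := (isCompact_closedBall (0:ℂ) c).exists_bound_of_continuousOn (hg.mono hsub)
  have hS : Set.Ioo (0:ℝ) 1 ∈ nhdsWithin (1:ℝ) (Set.Iio 1) := Ioo_mem_nhdsLT one_pos
  have hm0 : ∀ z ∈ ball (0:ℂ) 1, (c:ℂ) * z ∈ closedBall (0:ℂ) c := by
    intro z hz
    rw [mem_ball_zero_iff] at hz
    rw [mem_closedBall_zero_iff, norm_mul, Complex.norm_real, Real.norm_eq_abs, abs_of_pos hc.1]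
    nlinarith [hc.1]
  have hm : ∀ ρ ∈ Set.Ioo (0:ℝ) 1, ∀ z ∈ ball (0:ℂ) 1, (ρ:ℂ) * (c * z) ∈ closedBall (0:ℂ) c := by
    intro ρ hρ z hz
    have := hm0 z hz
    rw [mem_closedBall_zero_iff] at this ⊢
    rw [norm_mul, Complex.norm_real, Real.norm_eq_abs, abs_of_pos hρ.1]
    nlinarith [hρ.1, hρ.2, norm_nonneg ((c:ℂ) * z)]
  refine tendsto_integral_filter_of_dominated_convergence (fun _ => (C ^ 2) ^ q) ?_ ?_ ?_ ?_
  · filter_upwards [hS] with ρ hρ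
    have h1 : ContinuousOn (fun z => g (ρ * (c * z))) (ball 0 1) :=
      hg.comp (by fun_prop) fun z hz => hsub (hm ρ hρ z hz)
    have := berg_meas α _ (pw_cont _ _ h1 0 q hq)
    simpa only [add_zero] using this
  · filter_upwards [hS] with ρ hρ
    filter_upwards [berg_ae α] with z hz
    have h1 := hC _ (hm ρ hρ z hz)
    rw [Real.norm_eq_abs, abs_of_nonneg (by positivity)]
    refine Real.rpow_le_rpow (by positivity) ?_ hq.le
    gcongr
  · exact integrable_const _
  · filter_upwards [berg_ae α] with z hz
    have h1 : ContinuousAt g ((1:ℝ) * (c * z)) := by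
      refine hg.continuousAt (isOpen_ball.mem_nhds ?_)
      simpa using hsub (hm0 z hz)
    have h2 : ContinuousAt (fun ρ : ℝ => g (ρ * (c * z))) 1 :=
      ContinuousAt.comp (g := g) (f := fun ρ : ℝ => (ρ:ℂ) * (c * z)) h1 (by fun_prop)
    have h3 : ContinuousAt (fun ρ : ℝ => (‖g (ρ * (c * z))‖ ^ 2) ^ q) 1 :=
      ContinuousAt.rpow_const (h2.norm.pow 2) (Or.inr hq.le)
    have h := h3.tendsto.mono_left (nhdsWithin_le_nhds (s := Set.Iio 1))
    simpa using h

end HC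

theorem hypercontractivity_square_of_holomorphic
    (p q α : ℝ) (hp : 0 < p) (hpq : p < q) (hq1 : 1 ≤ q) (hα : 1 < α)
    (f : ℂ → ℂ) (hf : DifferentiableOn ℂ f (ball (0 : ℂ) 1))
    (hfp : Integrable (fun z => ‖f z‖ ^ p) (bergmanMeasure α))
    (hsq : ∃ g : ℂ → ℂ, DifferentiableOn ℂ g (ball (0 : ℂ) 1) ∧
      ∀ z ∈ ball (0 : ℂ) 1, f z = (g z) ^ 2) :
    (∫ z, ‖f ((Real.sqrt (p / q) : ℂ) * z)‖ ^ q ∂(bergmanMeasure α)) ^ (1 / q) ≤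
      (∫ z, ‖f z‖ ^ p ∂(bergmanMeasure α)) ^ (1 / p) := by
  obtain ⟨g, hg, hfg⟩ := hsq
  have hq0 : 0 < q := by linarith
  have hc : Real.sqrt (p / q) ∈ Set.Ioo (0:ℝ) 1 := by
    refine ⟨Real.sqrt_pos.2 (by positivity), ?_⟩
    rw [Real.sqrt_lt' one_pos, one_pow]
    exact (div_lt_one hq0).2 hpq
  have ae1 : (fun z => ‖f z‖ ^ p) =ᵐ[bergmanMeasure α] fun z => (‖g z‖ ^ 2) ^ p := by
    filter_upwards [HC.berg_ae α] with z hz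
    rw [hfg z hz, norm_pow]
  have ae2 : (fun z => ‖f ((Real.sqrt (p / q) : ℂ) * z)‖ ^ q) =ᵐ[bergmanMeasure α]
      fun z => (‖g ((Real.sqrt (p / q) : ℂ) * z)‖ ^ 2) ^ q := by
    filter_upwards [HC.berg_ae α] with z hz
    rw [hfg _ ?_, norm_pow]
    rw [mem_ball_zero_iff] at hz ⊢
    rw [norm_mul, Complex.norm_real, Real.norm_eq_abs, abs_of_pos hc.1]
    nlinarith [hc.1, hc.2, norm_nonneg z]
  rw [integral_congr_ae ae1, integral_congr_ae ae2]
  have hgp := hfp.congr ae1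
  have hmain : ∫ z, (‖g ((Real.sqrt (p / q) : ℝ) * z)‖ ^ 2) ^ q ∂(bergmanMeasure α) ≤
      (∫ z, (‖g z‖ ^ 2) ^ p ∂(bergmanMeasure α)) ^ (q / p) := by
    refine le_of_tendsto (HC.rho_lim q α _ hq0 hα hc g hg.continuousOn) ?_
    filter_upwards [Ioo_mem_nhdsLT (one_pos : (0:ℝ) < 1)] with ρ hρ
    exact HC.key_rho p q α hp hpq hq1 hα g hg hgp ρ hρ
  have hI : 0 ≤ ∫ z, (‖g z‖ ^ 2) ^ p ∂(bergmanMeasure α) := integral_nonneg fun z => by positivity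
  calc _ ≤ ((∫ z, (‖g z‖ ^ 2) ^ p ∂(bergmanMeasure α)) ^ (q / p)) ^ (1 / q) :=
        Real.rpow_le_rpow (integral_nonneg fun z => by positivity) hmain (by positivity)
    _ = _ := by
        rw [← Real.rpow_mul hI]
        congr 1
        field_simp
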